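/- Nonlocal maximum principle for dissipative active scalars (Theorem 2.linked to eq. (keyineq)): There exists a constant c > 0, depending only on the dimension d and on α ∈ (0,1), such that the following holds. Let θ : ℝ^d × [0,∞) → ℝ be smooth and periodic in the space variable, let u : ℝ^d × [0,∞) → ℝ^d be smooth and periodic in space, and suppose θ satisfies ∂_t θ = (u·∇)θ − L_α θ, where L_α f(x) = P.V. ∫_{ℝ^d} (f(x) − f(x+y))/|y|^{d+2α} dy. Let ω(ξ,t) be continuous in (ξ,t) and piecewise C¹ in t for each fixed ξ, such that for each fixed t ≥ 0 the function ω(·,t) is a modulus of continuity with ∂²_{ξξ}ω(0,t) = −∞ (i.e. the second derivative tends to −∞ as ξ → 0+ whenever the one-sided first derivative at 0 is finite). Let Ω(ξ,t) be, for each t, a modulus of continuity in ξ such that: whenever |θ(x,t) − θ(y,t)| ≤ ω(|x−y|,t) for all x,y, one has |u(x,t) − u(y,t)| ≤ Ω(|x−y|,t) for all x,y. Assume θ(·,0) obeys ω(·,0), and that ∂_t ω(ξ,t) > Ω(ξ,t)·∂_ξ ω(ξ,t) + D_{α,ω}(ξ,t) holds for all ξ, t > 0 with ω(ξ,t) ≤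 2‖θ(·,t)‖_{L^∞}, where D_{α,ω}(ξ,t) = c·( ∫_0^{ξ/2} [ω(ξ+2η,t)+ω(ξ−2η,t)−2ω(ξ,t)]/η^{1+2α} dη + ∫_{ξ/2}^∞ [ω(ξ+2η,t)−ω(2η−ξ,t)−2ω(ξ,t)]/η^{1+2α} dη ), and at points where ∂_ξω (resp. ∂_tω) does not exist the larger (resp. smaller) one-sided derivative is taken. Then θ(·,t) obeys the modulus of continuity ω(·,t) for all t > 0. -/

import Mathlib

open Set MeasureTheory Filter Topology

/-- A modulus of continuity: `ω 0 = 0`, continuous, increasing and concave on `[0,∞)`,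
and piecewise `C¹` on `(0,∞)`. -/
def IsModulusOfContinuity (ω : ℝ → ℝ) : Prop :=
  ω 0 = 0 ∧ ContinuousOn ω (Ici 0) ∧ StrictMonoOn ω (Ici 0) ∧ ConcaveOn ℝ (Ici 0) ω ∧
  ∃ S : Finset ℝ, (∀ ξ ∈ Ioi (0:ℝ) \ ↑S, DifferentiableAt ℝ ω ξ) ∧
    ContinuousOn (deriv ω) (Ioi (0:ℝ) \ ↑S)

theorem lintegral_slice_le_lintegral_inner {n : ℕ} {α : ℝ} (hα0 : 0 < α)
    (e : EuclideanSpace ℝ (Fin (n + 1))) (he : ‖e‖ = 1) {F : ℝ → ENNReal} (hF : Measurable F) :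
    ENNReal.ofReal ((√((n + 1 : ℕ) : ℝ) ^ (((n + 1 : ℕ) : ℝ) + 2 * α))⁻¹) *
      ∫⁻ η in Ioi (0 : ℝ), F η * ENNReal.ofReal ((η ^ (1 + 2 * α))⁻¹) ≤
    ∫⁻ z, F (inner ℝ e z) * ENNReal.ofReal ((‖z‖ ^ (((n + 1 : ℕ) : ℝ) + 2 * α))⁻¹) := by
  set q : ℝ := ((n + 1 : ℕ) : ℝ) + 2 * α with hq
  have hq0 : 0 < q := by positivity
  obtain ⟨b, hb⟩ := Orthonormal.exists_orthonormalBasis_extension_of_card_eq (𝕜 := ℝ)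
    (E := EuclideanSpace ℝ (Fin (n + 1))) (ι := Fin (n + 1)) (by simp)
    (v := fun _ => e) (s := {0}) (by
      constructor
      · rintro ⟨i, hi⟩; simpa using he
      · rintro ⟨i, hi⟩ ⟨j, hj⟩ hij
        exact absurd (Subtype.ext (hi.trans hj.symm)) hij)
  have hb0 : b 0 = e := hb 0 rfl
  let Φ : EuclideanSpace ℝ (Fin (n + 1)) → ℝ × (Fin n → ℝ) := fun z =>
    MeasurableEquiv.piFinSuccAbove (fun _ => ℝ) 0 (WithLp.ofLp (b.repr z))
  have hΦ : MeasurePreserving Φ volume volume :=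
    (volume_preserving_piFinSuccAbove (fun _ => ℝ) 0).comp
      ((PiLp.volume_preserving_ofLp (Fin (n + 1))).comp b.measurePreserving_repr)
  have hΦ1 : ∀ z, (Φ z).1 = inner ℝ e z := by
    intro z
    simp only [Φ, MeasurableEquiv.piFinSuccAbove_apply, ← hb0]
    exact b.repr_apply_apply z 0
  have hΦn : ∀ z, ‖z‖ ^ 2 = (Φ z).1 ^ 2 + ∑ i, (Φ z).2 i ^ 2 := by
    intro z
    rw [← b.repr.norm_map z, EuclideanSpace.norm_sq_eq, Fin.sum_univ_succ]
    simp [Φ, MeasurableEquiv.piFinSuccAbove_apply]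
    rfl
  let k : ℝ × (Fin n → ℝ) → ENNReal := fun p =>
    F p.1 * ENNReal.ofReal ((√(p.1 ^ 2 + ∑ i, p.2 i ^ 2) ^ q)⁻¹)
  have hk : Measurable k := by
    refine (hF.comp measurable_fst).mul (ENNReal.measurable_ofReal.comp ?_)
    fun_prop
  have hrw : ∫⁻ z, F (inner ℝ e z) * ENNReal.ofReal ((‖z‖ ^ q)⁻¹) = ∫⁻ p, k p := by
    rw [← hΦ.lintegral_comp hk]
    refine lintegral_congr fun z => ?_
    simp only [k]
    rw [hΦ1, ← hΦ1, ← hΦn, Real.sqrt_sq (norm_nonneg z)]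
  rw [hrw, Measure.volume_eq_prod, lintegral_prod _ hk.aemeasurable,
    ← lintegral_const_mul' _ _ ENNReal.ofReal_ne_top]
  refine (setLIntegral_mono' measurableSet_Ioi fun η hη => ?_).trans
    (setLIntegral_le_lintegral (Ioi 0) _)
  have hη : 0 < η := hη
  have hbox : ∀ w ∈ (univ.pi fun _ : Fin n => Ioo (0 : ℝ) η),
      ENNReal.ofReal (((√((n + 1 : ℕ) : ℝ) * η) ^ q)⁻¹) * F η ≤ k (η, w) := by
    intro w hw
    simp only [k]
    rw [mul_comm]
    gcongr
    rw [← Real.sqrt_sq hη.le, ← Real.sqrt_mul (by positivity), Real.sqrt_sq hη.le]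
    apply Real.sqrt_le_sqrt
    have : ∑ i, w i ^ 2 ≤ ∑ _i : Fin n, η ^ 2 := Finset.sum_le_sum fun i _ => by
      have := hw i trivial
      exact pow_le_pow_left₀ this.1.le this.2.le 2
    simp at this
    push_cast
    linarith
  calc ENNReal.ofReal ((√((n + 1 : ℕ) : ℝ) ^ q)⁻¹) * (F η * ENNReal.ofReal ((η ^ (1 + 2 * α))⁻¹))
      = (ENNReal.ofReal (((√((n + 1 : ℕ) : ℝ) * η) ^ q)⁻¹) * F η) *
          volume (univ.pi fun _ : Fin n => Ioo (0 : ℝ) η) := by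
        rw [Real.volume_pi_Ioo]
        simp only [sub_zero, Finset.prod_const, Finset.card_univ, Fintype.card_fin]
        rw [← ENNReal.ofReal_pow hη.le]
        rw [mul_left_comm, ← ENNReal.ofReal_mul (by positivity), mul_comm _ (F η), mul_assoc,
          ← ENNReal.ofReal_mul (by positivity)]
        congr 2
        rw [Real.mul_rpow (by positivity) hη.le, mul_inv, mul_assoc]
        congr 1
        rw [← Real.rpow_natCast, ← Real.rpow_neg hη.le, ← Real.rpow_neg hη.le,
          ← Real.rpow_add hη]
        congr 1
        rw [hq]; push_cast; ring
    _ = ∫⁻ w in (univ.pi fun _ : Fin n => Ioo (0 : ℝ) η),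
          ENNReal.ofReal (((√((n + 1 : ℕ) : ℝ) * η) ^ q)⁻¹) * F η := by
        rw [setLIntegral_const]
    _ ≤ ∫⁻ w in (univ.pi fun _ : Fin n => Ioo (0 : ℝ) η), k (η, w) :=
        setLIntegral_mono' (MeasurableSet.univ_pi fun _ => measurableSet_Ioo) hbox
    _ ≤ ∫⁻ w, k (η, w) := setLIntegral_le_lintegral _ _

/-- The odd extension to `ℝ` of a function on `[0,∞)` vanishing at `0`. -/
noncomputable def oddExt (w : ℝ → ℝ) (x : ℝ) : ℝ := w (max x 0) - w (max (-x) 0)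

/-- The negated second difference of the odd extension of `w`, at `ξ` with step `2η`. -/
noncomputable def concavityDefect (w : ℝ → ℝ) (ξ η : ℝ) : ℝ :=
  2 * oddExt w ξ - oddExt w (ξ + 2 * η) - oddExt w (ξ - 2 * η)

theorem oddExt_of_nonneg {w : ℝ → ℝ} (h0 : w 0 = 0) {x : ℝ} (hx : 0 ≤ x) : oddExt w x = w x := by
  simp [oddExt, hx, h0]

theorem oddExt_neg (w : ℝ → ℝ) (x : ℝ) : oddExt w (-x) = - oddExt w x := by
  simp [oddExt]

theorem oddExt_of_nonpos {w : ℝ → ℝ} (h0 : w 0 = 0) {x : ℝ} (hx : x ≤ 0) :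
    oddExt w x = - w (-x) := by
  simp [oddExt, hx, h0]

theorem monotone_oddExt {w : ℝ → ℝ} (hm : MonotoneOn w (Ici 0)) : Monotone (oddExt w) := by
  intro x y hxy
  have h1 := hm (le_max_right x 0) (le_max_right y 0) (max_le_max_right 0 hxy)
  have h2 := hm (le_max_right (-y) 0) (le_max_right (-x) 0) (max_le_max_right 0 (neg_le_neg hxy))
  simp only [oddExt]; linarith

theorem ConcaveOn.le_add_of_nonneg {w : ℝ → ℝ} (h0 : w 0 = 0) (hc : ConcaveOn ℝ (Ici 0) w)
    {a b : ℝ} (ha : 0 ≤ a) (hb : 0 ≤ b) : w (a + b) ≤ w a + w b := by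
  rcases (add_nonneg ha hb).eq_or_lt with h | h
  · rw [show a = 0 by linarith, show b = 0 by linarith]
    simp [h0]
  · have key : ∀ s, 0 ≤ s → s ≤ a + b → s / (a + b) * w (a + b) ≤ w s := by
      intro s hs hs'
      have := hc.2 (show (0 : ℝ) ∈ Ici 0 by simp) (show a + b ∈ Ici (0 : ℝ) from h.le)
        (show 0 ≤ 1 - s / (a + b) by
          rw [sub_nonneg, div_le_one h]; exact hs') (show 0 ≤ s / (a + b) by positivity) (by ring)
      simpa [h0, h.ne'] using this
    have h1 := key a ha (by linarith)
    have h2 := key b hb (by linarith)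
    have h3 : a / (a + b) * w (a + b) + b / (a + b) * w (a + b) = w (a + b) := by
      field_simp
    linarith

theorem ConcaveOn.midpoint_le {w : ℝ → ℝ} {s : Set ℝ} (hc : ConcaveOn ℝ s w)
    {a b : ℝ} (ha : a - b ∈ s) (hb : a + b ∈ s) : w (a + b) + w (a - b) ≤ 2 * w a := by
  have := hc.2 ha hb (show (0 : ℝ) ≤ 1 / 2 by norm_num) (show (0 : ℝ) ≤ 1 / 2 by norm_num)
    (by norm_num)
  simp only [smul_eq_mul] at this
  rw [show 1 / 2 * (a - b) + 1 / 2 * (a + b) = a by ring] at this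
  linarith

theorem concavityDefect_eq_of_le {w : ℝ → ℝ} (h0 : w 0 = 0) {ξ η : ℝ} (hξ : 0 < ξ) (hη : 0 ≤ η)
    (h : 2 * η ≤ ξ) : concavityDefect w ξ η = 2 * w ξ - w (ξ + 2 * η) - w (ξ - 2 * η) := by
  rw [concavityDefect, oddExt_of_nonneg h0 hξ.le, oddExt_of_nonneg h0 (by linarith),
    oddExt_of_nonneg h0 (by linarith)]

theorem concavityDefect_eq_of_ge {w : ℝ → ℝ} (h0 : w 0 = 0) {ξ η : ℝ} (hξ : 0 < ξ)
    (h : ξ ≤ 2 * η) : concavityDefect w ξ η = 2 * w ξ - w (ξ + 2 * η) + w (2 * η - ξ) := by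
  rw [concavityDefect, oddExt_of_nonneg h0 hξ.le, oddExt_of_nonneg h0 (by linarith),
    oddExt_of_nonpos h0 (by linarith)]
  simp

theorem concavityDefect_nonneg {w : ℝ → ℝ} (h0 : w 0 = 0) (hc : ConcaveOn ℝ (Ici 0) w)
    {ξ η : ℝ} (hξ : 0 < ξ) (hη : 0 ≤ η) : 0 ≤ concavityDefect w ξ η := by
  rcases le_total (2 * η) ξ with h | h
  · rw [concavityDefect_eq_of_le h0 hξ hη h]
    have := hc.midpoint_le (a := ξ) (b := 2 * η) (by simpa using h)
      (by simp; linarith)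
    linarith
  · rw [concavityDefect_eq_of_ge h0 hξ h]
    have h1 := hc.le_add_of_nonneg h0 (a := 2 * η - ξ) (b := ξ + ξ) (by linarith) (by linarith)
    have h2 := hc.le_add_of_nonneg h0 hξ.le hξ.le
    rw [show 2 * η - ξ + (ξ + ξ) = ξ + 2 * η by ring] at h1
    linarith

theorem concavityDefect_le {w : ℝ → ℝ} (h0 : w 0 = 0) (hm : MonotoneOn w (Ici 0))
    {ξ η : ℝ} (hξ : 0 < ξ) : concavityDefect w ξ η ≤ 2 * w ξ := by
  have : oddExt w (-(ξ + 2 * η)) ≤ oddExt w (ξ - 2 * η) := monotone_oddExt hm (by linarith)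
  rw [oddExt_neg] at this
  rw [concavityDefect, oddExt_of_nonneg h0 hξ.le]
  linarith

theorem concavityDefect_abs_step (w : ℝ → ℝ) (ξ η : ℝ) :
    concavityDefect w ξ |η| = concavityDefect w ξ η := by
  rcases abs_choice η with h | h <;> rw [h]
  simp only [concavityDefect]
  rw [show ξ + 2 * -η = ξ - 2 * η by ring, show ξ - 2 * -η = ξ + 2 * η by ring]
  ring

theorem measurable_concavityDefect {w : ℝ → ℝ} (hm : MonotoneOn w (Ici 0)) (ξ : ℝ) :
    Measurable (concavityDefect w ξ) := by
  have := (monotone_oddExt hm).measurable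
  unfold concavityDefect
  fun_prop

/-- Truncating a modulus at a level not below `w ξ` increases the defect at `ξ`. -/
theorem concavityDefect_le_truncate {w : ℝ → ℝ} (h0 : w 0 = 0) (hm : MonotoneOn w (Ici 0))
    {M ξ η : ℝ} (hξ : 0 < ξ) (hη : 0 ≤ η) (hM : w ξ ≤ M) :
    concavityDefect w ξ η ≤ concavityDefect (fun s => min (w s) M) ξ η := by
  have hwξ : 0 ≤ w ξ := h0 ▸ hm (by simp) hξ.le hξ.le
  have h0' : (fun s => min (w s) M) 0 = 0 := by simp [h0]; linarith
  rcases le_total (2 * η) ξ with h | h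
  · rw [concavityDefect_eq_of_le h0 hξ hη h, concavityDefect_eq_of_le h0' hξ hη h]
    simp only [min_eq_left hM]
    have := min_le_left (w (ξ + 2 * η)) M
    have := min_le_left (w (ξ - 2 * η)) M
    linarith
  · rw [concavityDefect_eq_of_ge h0 hξ h, concavityDefect_eq_of_ge h0' hξ h]
    simp only [min_eq_left hM]
    have h2 : w (2 * η - ξ) ≤ w (ξ + 2 * η) :=
      hm (by simpa using h) (by simp; linarith) (by linarith)
    rcases le_total (w (2 * η - ξ)) M with h3 | h3
    · rw [min_eq_left h3]
      have := min_le_left (w (ξ + 2 * η)) M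
      linarith
    · rw [min_eq_right h3, min_eq_right (h3.trans h2)]
      linarith

theorem abs_oddExt_le {w : ℝ → ℝ} {M : ℝ} (h0 : w 0 = 0)
    (hw : ∀ s, 0 ≤ s → 0 ≤ w s) (hM : ∀ s, 0 ≤ s → w s ≤ M) (x : ℝ) : |oddExt w x| ≤ M := by
  rcases le_total 0 x with h | h
  · rw [oddExt_of_nonneg h0 h, abs_of_nonneg (hw _ h)]; exact hM _ h
  · rw [oddExt_of_nonpos h0 h, abs_neg, abs_of_nonneg (hw _ (by linarith))]
    exact hM _ (by linarith)

theorem integrable_indicator_norm_rpow_inv {d : ℕ} {q : ℝ} (hq : (d : ℝ) < q) {ε : ℝ} (hε : 0 < ε) :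
    Integrable (fun z : EuclideanSpace ℝ (Fin d) =>
      {z : EuclideanSpace ℝ (Fin d) | ε < ‖z‖}.indicator (fun z => (‖z‖ ^ q)⁻¹) z) := by
  have hq0 : 0 < q := lt_of_le_of_lt (Nat.cast_nonneg d) hq
  have h1 : Integrable (fun z : EuclideanSpace ℝ (Fin d) => (1 / ε + 1) ^ q * (1 + ‖z‖) ^ (-q)) :=
    (integrable_one_add_norm (by simpa using hq)).const_mul _
  have hms : MeasurableSet {z : EuclideanSpace ℝ (Fin d) | ε < ‖z‖} :=
    measurableSet_lt measurable_const measurable_norm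
  refine h1.mono' ((by fun_prop : Measurable fun z : EuclideanSpace ℝ (Fin d) =>
    (‖z‖ ^ q)⁻¹).indicator hms).aestronglyMeasurable (Eventually.of_forall fun z => ?_)
  by_cases hz : ε < ‖z‖
  · have hz0 : 0 < ‖z‖ := hε.trans hz
    rw [indicator_of_mem (by exact hz), Real.norm_of_nonneg (by positivity),
      Real.rpow_neg (by positivity), ← div_eq_mul_inv, inv_eq_one_div,
      div_le_div_iff₀ (by positivity) (by positivity), one_mul,
      ← Real.mul_rpow (by positivity) (by positivity)]
    gcongr
    have : 1 ≤ 1 / ε * ‖z‖ := by rw [one_div, inv_mul_eq_div, one_le_div hε]; exact hz.le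
    linarith
  · rw [indicator_of_notMem (by exact hz)]
    simp only [norm_zero]
    positivity

theorem integral_indicator_inner_ge {d : ℕ} (hd : 0 < d) {α : ℝ} (hα0 : 0 < α)
    {e : EuclideanSpace ℝ (Fin d)} (he : ‖e‖ = 1) {f : ℝ → ℝ} (hf : Measurable f)
    (hf0 : ∀ η, 0 ≤ f η) {κ ε B : ℝ} (hfB : ∀ η, f η ≤ B) (hε : 0 < ε) (hκ : ε < κ) :
    (√(d : ℝ) ^ ((d : ℝ) + 2 * α))⁻¹ * ∫ η in Ioi κ, f η / η ^ (1 + 2 * α) ≤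
      ∫ z, f (inner ℝ e z) *
        {z : EuclideanSpace ℝ (Fin d) | ε < ‖z‖}.indicator
          (fun z => (‖z‖ ^ ((d : ℝ) + 2 * α))⁻¹) z := by
  obtain ⟨n, rfl⟩ : ∃ n, d = n + 1 := ⟨d - 1, by omega⟩
  set q : ℝ := ((n + 1 : ℕ) : ℝ) + 2 * α with hq
  have hk := integrable_indicator_norm_rpow_inv (d := n + 1) (q := q) (by linarith) hε
  have hk0 : ∀ z : EuclideanSpace ℝ (Fin (n + 1)), 0 ≤
      {z : EuclideanSpace ℝ (Fin (n + 1)) | ε < ‖z‖}.indicator (fun z => (‖z‖ ^ q)⁻¹) z :=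
    fun z => indicator_nonneg (fun _ _ => by positivity) _
  have hint : Integrable (fun z => f (inner ℝ e z) *
        {z : EuclideanSpace ℝ (Fin (n + 1)) | ε < ‖z‖}.indicator (fun z => (‖z‖ ^ q)⁻¹) z) :=
    hk.bdd_mul (c := B) (hf.comp (by fun_prop)).aestronglyMeasurable
      (Eventually.of_forall fun z => by rw [Real.norm_of_nonneg (hf0 _)]; exact hfB _)
  have hF := lintegral_slice_le_lintegral_inner hα0 e he
    (F := (Ioi κ).indicator fun η => ENNReal.ofReal (f η))
    ((ENNReal.measurable_ofReal.comp hf).indicator measurableSet_Ioi)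
  have hκ0 : 0 < κ := hε.trans hκ
  rw [integral_eq_lintegral_of_nonneg_ae
      (Eventually.of_forall fun z => mul_nonneg (hf0 _) (hk0 _)) hint.aestronglyMeasurable,
    integral_eq_lintegral_of_nonneg_ae, ← ENNReal.toReal_ofReal (r := (√((n + 1 : ℕ) : ℝ) ^ q)⁻¹)
      (by positivity), ← ENNReal.toReal_mul]
  · refine ENNReal.toReal_mono ?_ ?_
    · have := hint.lintegral_lt_top
      exact this.ne
    · refine le_trans ?_ (hF.trans ?_)
      · refine mul_le_mul' le_rfl ?_
        have hind : ∀ η, (Ioi κ).indicator (fun η => ENNReal.ofReal (f η)) η *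
            ENNReal.ofReal ((η ^ (1 + 2 * α))⁻¹) =
            (Ioi κ).indicator (fun η => ENNReal.ofReal (f η / η ^ (1 + 2 * α))) η := by
          intro η
          by_cases hη : η ∈ Ioi κ
          · rw [indicator_of_mem hη, indicator_of_mem hη, ← ENNReal.ofReal_mul (hf0 _),
              div_eq_mul_inv]
          · rw [indicator_of_notMem hη, indicator_of_notMem hη, zero_mul]
        simp_rw [hind]
        rw [lintegral_indicator measurableSet_Ioi, Measure.restrict_restrict measurableSet_Ioi,
          inter_eq_left.mpr (Ioi_subset_Ioi hκ0.le)]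
      · refine lintegral_mono fun z => ?_
        by_cases hz : inner ℝ e z ∈ Ioi κ
        · have hz' : ε < ‖z‖ := by
            have := real_inner_le_norm e z
            rw [he, one_mul] at this
            exact hκ.trans (lt_of_lt_of_le hz this)
          simp only [indicator_of_mem hz]
          rw [indicator_of_mem (by exact hz'), ENNReal.ofReal_mul (hf0 _)]
        · simp only [indicator_of_notMem hz, zero_mul]
          exact zero_le
  · filter_upwards [ae_restrict_mem measurableSet_Ioi] with η hη
    have : 0 < η := hκ0.trans hη
    have := hf0 η
    simp only [Pi.zero_apply]
    positivity
  · exact (by fun_prop : Measurable fun η => f η / η ^ (1 + 2 * α)).aestronglyMeasurable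

/-- If `Q` is odd under a reflection `T` of space and nonnegative on the side of the hyperplane
containing the origin, its integral against a truncated radial kernel is nearly nonnegative. -/
theorem integral_odd_mul_kernel_ge {d : ℕ} {q : ℝ} (hq : (d : ℝ) < q)
    {T : EuclideanSpace ℝ (Fin d) → EuclideanSpace ℝ (Fin d)}
    (hT : MeasurePreserving T volume volume) (hTe : MeasurableEmbedding T)
    (hTT : ∀ z, T (T z) = z) {ξ ε B : ℝ} (hξ : 0 < ξ) (hε : 0 < ε)
    (hTn : ∀ z, ξ - ‖z‖ ≤ ‖T z‖)
    {Q : EuclideanSpace ℝ (Fin d) → ℝ} (hQm : Measurable Q) (hQodd : ∀ z, Q (T z) = - Q z)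
    (hQB : ∀ z, |Q z| ≤ B) (hQT : ∀ z, ‖z‖ < ‖T z‖ → 0 ≤ Q z)
    (hQ0 : ∀ z, ‖T z‖ = ‖z‖ → Q z = 0) :
    -(B * ((ξ / 2) ^ q)⁻¹ * volume.real (Metric.closedBall (0 : EuclideanSpace ℝ (Fin d)) ε)) ≤
      ∫ z, Q z * {z : EuclideanSpace ℝ (Fin d) | ε < ‖z‖}.indicator (fun z => (‖z‖ ^ q)⁻¹) z := by
  have hq0 : 0 < q := lt_of_le_of_lt (Nat.cast_nonneg d) hq
  set k : EuclideanSpace ℝ (Fin d) → ℝ :=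
    fun z => {z : EuclideanSpace ℝ (Fin d) | ε < ‖z‖}.indicator (fun z => (‖z‖ ^ q)⁻¹) z with hkdef
  have hk : Integrable k := integrable_indicator_norm_rpow_inv hq hε
  have hB : 0 ≤ B := (abs_nonneg _).trans (hQB 0)
  set A : ℝ := B * ((ξ / 2) ^ q)⁻¹ with hA
  have hA0 : 0 ≤ A := by positivity
  set b : EuclideanSpace ℝ (Fin d) → ℝ := (Metric.closedBall 0 ε).indicator fun _ => A with hbdef
  have hb : Integrable b :=
    (integrable_indicator_iff Metric.isClosed_closedBall.measurableSet).mpr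
      (integrableOn_const (measure_closedBall_lt_top.ne))
  have hQk : Integrable fun z => Q z * k z :=
    hk.bdd_mul (c := B) hQm.aestronglyMeasurable (Eventually.of_forall hQB)
  have hkT : Integrable fun z => k (T z) := hT.integrable_comp_of_integrable hk
  have hQkT : Integrable fun z => Q z * k (T z) :=
    hkT.bdd_mul (c := B) hQm.aestronglyMeasurable (Eventually.of_forall hQB)
  have hbT : Integrable fun z => b (T z) := hT.integrable_comp_of_integrable hb
  have hanti : ∫ z, Q z * k (T z) = - ∫ z, Q z * k z := by
    rw [← hT.integral_comp hTe (fun z => Q z * k z), ← integral_neg]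
    refine integral_congr_ae (Eventually.of_forall fun z => ?_)
    simp only [hQodd]; ring
  have hbint : ∫ z, b z = A * volume.real (Metric.closedBall (0 : EuclideanSpace ℝ (Fin d)) ε) := by
    rw [hbdef, integral_indicator Metric.isClosed_closedBall.measurableSet, setIntegral_const,
      smul_eq_mul, mul_comm]
  have hbTint : ∫ z, b (T z) = ∫ z, b z := hT.integral_comp hTe b
  have hb0 : ∀ z, 0 ≤ b z := fun z => indicator_nonneg (fun _ _ => hA0) z
  have hk0 : ∀ z, 0 ≤ k z := fun z => indicator_nonneg (fun _ _ => by positivity) z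
  -- pointwise bound on the side of the origin
  have hside : ∀ z, ‖z‖ < ‖T z‖ → -b z ≤ Q z * (k z - k (T z)) := by
    intro z hz
    have hQz := hQT z hz
    by_cases hzε : ε < ‖z‖
    · have h1 : k (T z) ≤ k z := by
        simp only [hkdef]
        rw [indicator_of_mem (by exact hzε.trans hz), indicator_of_mem (by exact hzε)]
        have : 0 < ‖z‖ := hε.trans hzε
        gcongr
      have := hb0 z
      have := mul_nonneg hQz (sub_nonneg.mpr h1)
      linarith
    · have hz' : ‖z‖ ≤ ε := not_lt.mp hzε
      have h1 : k z = 0 := indicator_of_notMem (by exact hzε) _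
      have h2 : b z = A := indicator_of_mem (by simpa using hz') _
      have hTz : ξ / 2 ≤ ‖T z‖ := by have := hTn z; linarith
      have h3 : k (T z) ≤ ((ξ / 2) ^ q)⁻¹ := by
        refine (indicator_le_self' (fun _ _ => by positivity) _).trans ?_
        gcongr
      have h4 : Q z * k (T z) ≤ A :=
        mul_le_mul ((le_abs_self _).trans (hQB z)) h3 (hk0 _) hB
      rw [h1, h2]; linarith
  have hpt : ∀ z, -(b z + b (T z)) ≤ Q z * (k z - k (T z)) := by
    intro z
    rcases lt_trichotomy ‖z‖ ‖T z‖ with h | h | h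
    · have := hside z h
      have := hb0 (T z)
      linarith
    · have := hb0 (T z)
      have := hb0 z
      rw [hQ0 z h.symm]; linarith
    · have h1 := hside (T z) (by rwa [hTT])
      rw [hTT, hQodd] at h1
      have := hb0 z
      linarith
  have hint := integral_mono (hb.add hbT).neg (hQk.sub hQkT) (fun z => by
    have := hpt z
    simp only [Pi.neg_apply, Pi.add_apply, Pi.sub_apply]
    linarith)
  simp only [Pi.neg_apply, Pi.add_apply, Pi.sub_apply] at hint
  rw [integral_neg, integral_add hb hbT, integral_sub hQk hQkT, hanti, hbTint, hbint] at hint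
  linarith

/-- The dissipation bound: at a pair where `g` saturates the modulus `w`, the principal values of
the fractional Laplacian differ by at least a multiple of the one-dimensional one of `w`. -/
theorem dissipation_ge {d : ℕ} (hd : 0 < d) {α : ℝ} (hα0 : 0 < α)
    {g : EuclideanSpace ℝ (Fin d) → ℝ} (hg : Continuous g) {M : ℝ} (hM : ∀ x, |g x| ≤ M)
    {w : ℝ → ℝ} (h0 : w 0 = 0) (hm : MonotoneOn w (Ici 0)) (hc : ConcaveOn ℝ (Ici 0) w)
    (hgw : ∀ x y, |g x - g y| ≤ w (dist x y))
    {x₀ y₀ : EuclideanSpace ℝ (Fin d)} (hne : x₀ ≠ y₀) (heq : g x₀ - g y₀ = w (dist x₀ y₀))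
    {Lx Ly : ℝ}
    (hLx : Tendsto (fun ε => ∫ y in {y : EuclideanSpace ℝ (Fin d) | ε < ‖y‖},
            (g x₀ - g (x₀ + y)) / ‖y‖ ^ ((d : ℝ) + 2 * α)) (𝓝[>] 0) (𝓝 Lx))
    (hLy : Tendsto (fun ε => ∫ y in {y : EuclideanSpace ℝ (Fin d) | ε < ‖y‖},
            (g y₀ - g (y₀ + y)) / ‖y‖ ^ ((d : ℝ) + 2 * α)) (𝓝[>] 0) (𝓝 Ly))
    {κ : ℝ} (hκ : 0 < κ) :
    (√(d : ℝ) ^ ((d : ℝ) + 2 * α))⁻¹ / 2 *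
        ∫ η in Ioi κ, concavityDefect w (dist x₀ y₀) η / η ^ (1 + 2 * α) ≤ Lx - Ly := by
  set q : ℝ := (d : ℝ) + 2 * α with hq
  have hdq : (d : ℝ) < q := by linarith
  set ξ := dist x₀ y₀ with hξdef
  have hξ : 0 < ξ := dist_pos.mpr hne
  set e : EuclideanSpace ℝ (Fin d) := ξ⁻¹ • (x₀ - y₀) with hedef
  have he : ‖e‖ = 1 := by
    rw [hedef, norm_smul, ← dist_eq_norm, ← hξdef, Real.norm_of_nonneg (by positivity),
      inv_mul_cancel₀ hξ.ne']
  have hxy : x₀ - y₀ = ξ • e := by rw [hedef, smul_inv_smul₀ hξ.ne']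
  have hee : inner ℝ e e = (1 : ℝ) := by rw [real_inner_self_eq_norm_sq, he]; norm_num
  let R := ((ℝ ∙ e)ᗮ).reflection
  have hR : ∀ z, R z = z - (2 * inner ℝ e z) • e := by
    intro z
    simp only [R, Submodule.reflection_orthogonal_apply, Submodule.reflection_singleton_apply, he]
    simp [two_smul, two_mul, add_smul]
  have hRR : ∀ z, R (R z) = z := fun z => Submodule.reflection_reflection _ z
  have hRe : R e = -e := by rw [hR, hee, mul_one, two_smul]; abel
  have hRi : ∀ z, inner ℝ e (R z) = - inner ℝ e z := by
    intro z; rw [hR, inner_sub_right, inner_smul_right, hee]; ring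
  have hRm : MeasurePreserving R volume volume := R.measurePreserving
  have hRemb : MeasurableEmbedding R := R.toHomeomorph.measurableEmbedding
  let T : EuclideanSpace ℝ (Fin d) → EuclideanSpace ℝ (Fin d) := fun z => R z - ξ • e
  have hTT : ∀ z, T (T z) = z := by
    intro z
    simp only [T, map_sub, map_smul, hRR, hRe, smul_neg]; abel
  have hTi : ∀ z, inner ℝ e (T z) = - inner ℝ e z - ξ := by
    intro z; simp only [T]; rw [inner_sub_right, hRi, inner_smul_right, hee, mul_one]
  have hTm : MeasurePreserving T volume volume :=
    (measurePreserving_sub_right volume (ξ • e)).comp hRm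
  have hTemb : MeasurableEmbedding T :=
    (MeasurableEquiv.subRight (ξ • e)).measurableEmbedding.comp hRemb
  have hTn2 : ∀ z, ‖T z‖ ^ 2 = ‖z‖ ^ 2 + ξ * (ξ + 2 * inner ℝ e z) := by
    intro z
    simp only [T]
    rw [norm_sub_sq_real, inner_smul_right, real_inner_comm, hRi, norm_smul, he, R.norm_map,
      Real.norm_of_nonneg hξ.le]
    ring
  have hTn : ∀ z, ξ - ‖z‖ ≤ ‖T z‖ := by
    intro z
    have := norm_sub_norm_le (ξ • e) (R z)
    rw [norm_smul, he, R.norm_map, Real.norm_of_nonneg hξ.le, norm_sub_rev] at this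
    simpa [T] using this
  -- the truncated modulus
  have hM0 : 0 ≤ M := (abs_nonneg _).trans (hM 0)
  have hgM : ∀ x y, |g x - g y| ≤ 2 * M := by
    intro x y
    have := abs_sub (g x) (g y)
    have := hM x
    have := hM y
    linarith
  have hw0 : ∀ s, 0 ≤ s → 0 ≤ w s := fun s hs => h0 ▸ hm (by simp) hs hs
  have hwξM : w ξ ≤ 2 * M := heq ▸ (le_abs_self _).trans (hgM x₀ y₀)
  set v : ℝ → ℝ := fun s => min (w s) (2 * M) with hv
  have hv0 : v 0 = 0 := by simp [hv, h0, hM0]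
  have hvm : MonotoneOn v (Ici 0) := fun a ha b hb hab => min_le_min_right _ (hm ha hb hab)
  have hvξ : v ξ = w ξ := min_eq_left hwξM
  have hgv : ∀ x y, |g x - g y| ≤ v (dist x y) := fun x y => le_min (hgw x y) (hgM x y)
  have hVB : ∀ s, |oddExt v s| ≤ 2 * M := abs_oddExt_le hv0
    (fun s hs => le_min (hw0 s hs) (by linarith)) (fun s _ => min_le_right _ _)
  have hVm : Measurable (oddExt v) := (monotone_oddExt hvm).measurable
  have hEw0 : ∀ η, 0 ≤ concavityDefect w ξ η := fun η => by
    rw [← concavityDefect_abs_step]; exact concavityDefect_nonneg h0 hc hξ (abs_nonneg η)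
  have hEv : ∀ η, concavityDefect w ξ η ≤ concavityDefect v ξ η := fun η => by
    rw [← concavityDefect_abs_step w, ← concavityDefect_abs_step v]
    exact concavityDefect_le_truncate h0 hm hξ (abs_nonneg η) hwξM
  let G : EuclideanSpace ℝ (Fin d) → ℝ := fun z => g (x₀ + z) - g (y₀ + R z)
  let Q : EuclideanSpace ℝ (Fin d) → ℝ := fun z => oddExt v (ξ + 2 * inner ℝ e z) - G z
  have hGc : Continuous G := by
    have := R.continuous
    fun_prop
  have hQm : Measurable Q := by
    refine Measurable.sub (hVm.comp (by fun_prop)) hGc.measurable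
  have hQodd : ∀ z, Q (T z) = - Q z := by
    intro z
    have h1 : x₀ + T z = y₀ + R z := by
      simp only [T, ← hxy]; abel
    have h2 : y₀ + R (T z) = x₀ + z := by
      simp only [T, map_sub, map_smul, hRR, hRe, smul_neg]
      rw [sub_neg_eq_add, ← hxy]; abel
    simp only [Q, G, h1, h2, hTi]
    rw [show ξ + 2 * (-inner ℝ e z - ξ) = -(ξ + 2 * inner ℝ e z) by ring, oddExt_neg]
    ring
  have hQB : ∀ z, |Q z| ≤ 4 * M := by
    intro z
    have h1 := abs_sub (oddExt v (ξ + 2 * inner ℝ e z)) (G z)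
    have := hVB (ξ + 2 * inner ℝ e z)
    have := hgM (x₀ + z) (y₀ + R z)
    simp only [Q]; linarith
  have hdistG : ∀ z, dist (x₀ + z) (y₀ + R z) = |ξ + 2 * inner ℝ e z| := by
    intro z
    rw [dist_eq_norm, hR, show x₀ + z - (y₀ + (z - (2 * inner ℝ e z) • e)) =
      (x₀ - y₀) + (2 * inner ℝ e z) • e by abel, hxy, ← add_smul, norm_smul, he, mul_one,
      Real.norm_eq_abs]
  have hQT : ∀ z, ‖z‖ < ‖T z‖ → 0 ≤ Q z := by
    intro z hz
    have h1 : ‖z‖ ^ 2 < ‖T z‖ ^ 2 := pow_lt_pow_left₀ hz (norm_nonneg z) two_ne_zero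
    rw [hTn2] at h1
    have h2 : 0 < ξ + 2 * inner ℝ e z := pos_of_mul_pos_right (by linarith) hξ.le
    have h3 := (le_abs_self _).trans (hgv (x₀ + z) (y₀ + R z))
    rw [hdistG, abs_of_pos h2] at h3
    simp only [Q, G]
    rw [oddExt_of_nonneg hv0 h2.le]; linarith
  have hQ0 : ∀ z, ‖T z‖ = ‖z‖ → Q z = 0 := by
    intro z hz
    have h1 := hTn2 z
    rw [hz] at h1
    have h2 : ξ + 2 * inner ℝ e z = 0 := by
      have : ξ * (ξ + 2 * inner ℝ e z) = 0 := by linarith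
      exact (mul_eq_zero.mp this).resolve_left hξ.ne'
    have h3 := hdistG z
    rw [h2, abs_zero, dist_eq_zero] at h3
    simp only [Q, G, h2, h3]
    rw [oddExt_of_nonneg hv0 le_rfl, hv0]; ring
  -- lower bound at truncation level `ε`
  have hmain : ∀ ε, 0 < ε → ε < κ →
      (√(d : ℝ) ^ q)⁻¹ / 2 * (∫ η in Ioi κ, concavityDefect w ξ η / η ^ (1 + 2 * α)) -
        4 * M * ((ξ / 2) ^ q)⁻¹ * volume.real (Metric.closedBall (0 : EuclideanSpace ℝ (Fin d)) ε) ≤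
      (∫ y in {y : EuclideanSpace ℝ (Fin d) | ε < ‖y‖}, (g x₀ - g (x₀ + y)) / ‖y‖ ^ q) -
      ∫ y in {y : EuclideanSpace ℝ (Fin d) | ε < ‖y‖}, (g y₀ - g (y₀ + y)) / ‖y‖ ^ q := by
    intro ε hε hεκ
    set k : EuclideanSpace ℝ (Fin d) → ℝ :=
      fun z => {z : EuclideanSpace ℝ (Fin d) | ε < ‖z‖}.indicator (fun z => (‖z‖ ^ q)⁻¹) z with hkdef
    have hk : Integrable k := integrable_indicator_norm_rpow_inv hdq hε
    have hms : MeasurableSet {z : EuclideanSpace ℝ (Fin d) | ε < ‖z‖} :=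
      measurableSet_lt measurable_const measurable_norm
    have hkR : ∀ z, k (R z) = k z := by
      intro z; simp only [hkdef, indicator, mem_ofPred_eq, R.norm_map]
    have hkneg : ∀ z, k (-z) = k z := by
      intro z; simp only [hkdef, indicator, mem_ofPred_eq, norm_neg]
    have hI : ∀ f : EuclideanSpace ℝ (Fin d) → ℝ,
        ∫ y in {y : EuclideanSpace ℝ (Fin d) | ε < ‖y‖}, f y / ‖y‖ ^ q = ∫ y, f y * k y := by
      intro f
      rw [← integral_indicator hms]
      refine integral_congr_ae (Eventually.of_forall fun y => ?_)
      by_cases hy : ε < ‖y‖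
      · simp [hkdef, indicator, hy, div_eq_mul_inv]
      · simp [hkdef, indicator, hy]
    have hbd : ∀ f : EuclideanSpace ℝ (Fin d) → ℝ, Measurable f → (∀ z, |f z| ≤ 4 * M) →
        Integrable fun z => f z * k z := fun f hf hfb =>
      hk.bdd_mul hf.aestronglyMeasurable (Eventually.of_forall hfb)
    have hyR : ∫ y, (g y₀ - g (y₀ + y)) * k y = ∫ y, (g y₀ - g (y₀ + R y)) * k y := by
      rw [← hRm.integral_comp hRemb]
      simp only [hkR]
    have hVint : ∀ σ : ℝ, Integrable fun z => oddExt v (ξ + σ * inner ℝ e z) * k z := fun σ =>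
      hbd _ (hVm.comp (by fun_prop)) fun z => (hVB _).trans (by linarith)
    have hfin := integral_odd_mul_kernel_ge hdq hTm hTemb hTT hξ hε hTn hQm hQodd hQB hQT hQ0
    have hslice := integral_indicator_inner_ge hd hα0 he (measurable_concavityDefect hm ξ) hEw0
      (B := 2 * w ξ) (fun η => concavityDefect_le h0 hm hξ) hε hεκ
    have hdefmono : ∫ z, concavityDefect w ξ (inner ℝ e z) * k z ≤
        ∫ z, concavityDefect v ξ (inner ℝ e z) * k z := by
      refine integral_mono (hbd _ ((measurable_concavityDefect hm ξ).comp (by fun_prop)) fun z => ?_)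
        (hk.bdd_mul (c := 2 * v ξ)
          ((measurable_concavityDefect hvm ξ).comp (by fun_prop)).aestronglyMeasurable
          (Eventually.of_forall fun z => ?_)) fun z => ?_
      · rw [abs_of_nonneg (hEw0 _)]
        exact (concavityDefect_le h0 hm hξ).trans (by linarith)
      · rw [Real.norm_of_nonneg ((hEw0 _).trans (hEv _))]
        exact concavityDefect_le hv0 hvm hξ
      · exact mul_le_mul_of_nonneg_right (hEv _) (indicator_nonneg (fun _ _ => by positivity) _)
    have hneg : ∫ z, oddExt v (ξ + (-2) * inner ℝ e z) * k z =
        ∫ z, oddExt v (ξ + 2 * inner ℝ e z) * k z := by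
      rw [← integral_neg_eq_self]
      simp only [hkneg, inner_neg_right]
      simp
    have hdef : ∫ z, concavityDefect v ξ (inner ℝ e z) * k z =
        2 * ((w ξ * ∫ z, k z) - ∫ z, oddExt v (ξ + 2 * inner ℝ e z) * k z) := by
      have : ∀ z, concavityDefect v ξ (inner ℝ e z) * k z = 2 * w ξ * k z -
          oddExt v (ξ + 2 * inner ℝ e z) * k z - oddExt v (ξ + (-2) * inner ℝ e z) * k z := by
        intro z
        rw [concavityDefect, oddExt_of_nonneg hv0 hξ.le, hvξ, sub_eq_add_neg ξ, ← neg_mul]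
        ring
      simp_rw [this]
      have hi : Integrable fun z => 2 * w ξ * k z - oddExt v (ξ + 2 * inner ℝ e z) * k z :=
        (hk.const_mul _).sub (hVint 2)
      rw [integral_sub hi (hVint (-2)),
        integral_sub (hk.const_mul _) (hVint 2), hneg, integral_const_mul]
      ring
    have hsub : (∫ y, (g x₀ - g (x₀ + y)) * k y) - ∫ y, (g y₀ - g (y₀ + R y)) * k y =
        ((w ξ * ∫ z, k z) - ∫ z, oddExt v (ξ + 2 * inner ℝ e z) * k z) + ∫ z, Q z * k z := by
      have i1 : Integrable fun y => (g x₀ - g (x₀ + y)) * k y :=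
        hbd _ (by fun_prop) fun z => (hgM _ _).trans (by linarith)
      have i2 : Integrable fun y => (g y₀ - g (y₀ + R y)) * k y :=
        hbd _ (by have := R.continuous; exact Continuous.measurable (by fun_prop))
          fun z => (hgM _ _).trans (by linarith)
      have hi : Integrable fun z => w ξ * k z - oddExt v (ξ + 2 * inner ℝ e z) * k z :=
        (hk.const_mul _).sub (hVint 2)
      rw [← integral_sub i1 i2, ← integral_const_mul, ← integral_sub (hk.const_mul _) (hVint 2),
        ← integral_add hi (hbd Q hQm hQB)]
      refine integral_congr_ae (Eventually.of_forall fun z => ?_)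
      simp only [Q, G, ← heq]
      ring
    rw [hI, hI, hyR, hsub]
    linarith
  have hvol : Tendsto (fun ε : ℝ => (√(d : ℝ) ^ q)⁻¹ / 2 *
      (∫ η in Ioi κ, concavityDefect w ξ η / η ^ (1 + 2 * α)) - 4 * M * ((ξ / 2) ^ q)⁻¹ *
        volume.real (Metric.closedBall (0 : EuclideanSpace ℝ (Fin d)) ε)) (𝓝[>] 0)
      (𝓝 ((√(d : ℝ) ^ q)⁻¹ / 2 *
        (∫ η in Ioi κ, concavityDefect w ξ η / η ^ (1 + 2 * α)) - 4 * M * ((ξ / 2) ^ q)⁻¹ * 0)) := by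
    refine tendsto_const_nhds.sub (Tendsto.const_mul _ ?_)
    have h1 : Tendsto (fun ε : ℝ => ε ^ Module.finrank ℝ (EuclideanSpace ℝ (Fin d)) *
        volume.real (Metric.ball (0 : EuclideanSpace ℝ (Fin d)) 1)) (𝓝[>] 0) (𝓝 0) := by
      refine (Continuous.tendsto' ?_ 0 0 ?_).mono_left nhdsWithin_le_nhds
      · fun_prop
      · simp [hd.ne']
    refine h1.congr' ?_
    filter_upwards [self_mem_nhdsWithin] with ε hε
    rw [Measure.addHaar_real_closedBall _ _ (le_of_lt hε)]
  rw [mul_zero, sub_zero] at hvol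
  refine le_of_tendsto_of_tendsto hvol (hLx.sub hLy) ?_
  filter_upwards [self_mem_nhdsWithin, nhdsWithin_le_nhds (Iio_mem_nhds hκ)]
    with ε h1 h2
  exact hmain ε h1 h2

/-- Quadratic Taylor remainder of a `C²` function, locally uniform in the base point. -/
lemma ContDiffAt.exists_taylor_remainder_le {V : Type*} [NormedAddCommGroup V] [NormedSpace ℝ V]
    {F : V → ℝ} {p₀ : V} (hF : ContDiffAt ℝ 2 F p₀) :
    ∃ C > (0 : ℝ), ∃ r > (0 : ℝ), ∀ p v, p ∈ Metric.ball p₀ r → p + v ∈ Metric.ball p₀ r →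
      |F (p + v) - F p - fderiv ℝ F p v| ≤ C * ‖v‖ ^ 2 := by
  have h1 : ContDiffAt ℝ 1 (fderiv ℝ F) p₀ := hF.fderiv_right (by norm_num)
  obtain ⟨K, s, hs, hK⟩ := h1.exists_lipschitzOnWith
  have h2 : ∀ᶠ p in 𝓝 p₀, DifferentiableAt ℝ F p :=
    (hF.eventually (by simp)).mono fun p hp => hp.differentiableAt (by norm_num)
  obtain ⟨r, hr, hrs⟩ := Metric.mem_nhds_iff.1 (inter_mem hs h2)
  refine ⟨K + 1, by positivity, r, hr, fun p v hp hpv => ?_⟩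
  have hseg : segment ℝ p (p + v) ⊆ Metric.ball p₀ r := (convex_ball p₀ r).segment_subset hp hpv
  have hb : ∀ y ∈ segment ℝ p (p + v), ‖fderiv ℝ F y - fderiv ℝ F p‖ ≤ (K + 1) * ‖v‖ := by
    intro y hy
    have h3 := hK.norm_sub_le (hrs (hseg hy)).1 (hrs hp).1
    have h4 : ‖y - p‖ ≤ ‖v‖ := by
      obtain ⟨t, ht, rfl⟩ := (segment_eq_image' ℝ p (p + v)).subset hy
      simp only [add_sub_cancel_left, norm_smul, Real.norm_eq_abs, abs_of_nonneg ht.1]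
      exact mul_le_of_le_one_left (norm_nonneg _) ht.2
    refine h3.trans ?_
    gcongr
    linarith
  have := (convex_segment p (p + v)).norm_image_sub_le_of_norm_hasFDerivWithin_le'
    (f := F) (φ := fderiv ℝ F p)
    (fun y hy => (hrs (hseg hy)).2.hasFDerivAt.hasFDerivWithinAt) hb
    (left_mem_segment ℝ p (p + v)) (right_mem_segment ℝ p (p + v))
  simp only [add_sub_cancel_left, Real.norm_eq_abs] at this
  linarith [sq ‖v‖]

/-- For a concave function vanishing at `0`, the ratio `w x / x` is antitone. -/
lemma ConcaveOn.mul_le_mul_of_le {w : ℝ → ℝ} {b x y : ℝ} (hw : ConcaveOn ℝ (Icc 0 b) w)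
    (h0 : w 0 = 0) (hx : 0 < x) (hxy : x ≤ y) (hyb : y ≤ b) : x * w y ≤ y * w x := by
  have hy : 0 < y := hx.trans_le hxy
  have h := hw.2 (⟨le_rfl, hy.le.trans hyb⟩ : (0 : ℝ) ∈ Icc 0 b) (⟨hy.le, hyb⟩ : y ∈ Icc 0 b)
    (sub_nonneg.2 ((div_le_one hy).2 hxy)) (by positivity) (sub_add_cancel 1 (x / y))
  simp only [h0, smul_eq_mul, mul_zero, zero_add] at h
  rw [div_mul_cancel₀ _ hy.ne', div_mul_eq_mul_div, div_le_iff₀ hy] at h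
  linarith

/-- A concave function lies below its one-sided tangent at the left end point. -/
lemma ConcaveOn.le_mul_of_hasDerivWithinAt {w : ℝ → ℝ} {b m x : ℝ}
    (hw : ConcaveOn ℝ (Icc 0 b) w) (h0 : w 0 = 0) (hm : HasDerivWithinAt w m (Ici 0) 0)
    (hx : 0 < x) (hxb : x ≤ b) : w x ≤ m * x := by
  have ht : Tendsto (fun y => y⁻¹ * w y) (𝓝[>] 0) (𝓝 m) := by
    have := (hasDerivWithinAt_iff_tendsto_slope' (by simp)).1 (hm.mono Ioi_subset_Ici_self)
    refine this.congr fun y => ?_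
    simp [slope_def_field, h0, div_eq_inv_mul]
  have : x⁻¹ * w x ≤ m := by
    refine ge_of_tendsto ht ?_
    filter_upwards [Ioc_mem_nhdsGT hx] with y hy
    have := hw.mul_le_mul_of_le h0 hy.1 hy.2 hxb
    have hy0 := hy.1
    rw [inv_mul_eq_div, inv_mul_eq_div, div_le_div_iff₀ hx hy0]
    linarith
  rw [inv_mul_le_iff₀ hx] at this
  linarith

/-- If a concave `w` with `w 0 = 0` grows at most linearly at `0`, it is differentiable there
from the right. -/
lemma ConcaveOn.exists_hasDerivWithinAt_zero {w : ℝ → ℝ} {b B : ℝ} (hb : 0 < b)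
    (hw : ConcaveOn ℝ (Icc 0 b) w) (h0 : w 0 = 0) (hB : ∀ x, 0 < x → w x ≤ B * x) :
    ∃ m ≤ B, HasDerivWithinAt w m (Ici 0) 0 := by
  have hanti : AntitoneOn (fun y => y⁻¹ * w y) (Ioo 0 b) := by
    intro x hx y hy hxy
    have := hw.mul_le_mul_of_le h0 hx.1 hxy hy.2.le
    have h1 := hx.1
    have h2 := hy.1
    simp only
    rw [inv_mul_eq_div, inv_mul_eq_div, div_le_div_iff₀ h2 h1]
    linarith
  have hbd : ∀ x ∈ Ioo 0 b, x⁻¹ * w x ≤ B := by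
    intro x hx
    rw [inv_mul_le_iff₀ hx.1]
    linarith [hB x hx.1]
  have ht := hanti.tendsto_nhdsWithin_Ioo_right (nonempty_Ioo.2 hb)
    ⟨B, forall_mem_image.2 hbd⟩
  refine ⟨_, csSup_le ((nonempty_Ioo.2 hb).image _) (forall_mem_image.2 hbd), ?_⟩
  rw [← hasDerivWithinAt_Ioi_iff_Ici, hasDerivWithinAt_iff_tendsto_slope' (by simp)]
  refine ht.congr fun y => ?_
  simp [slope_def_field, h0, div_eq_inv_mul]

/-- A function obeying (up to a factor) a modulus with infinitely negative second derivative at the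
origin has gradient strictly smaller than some slope `w σ / σ`. -/
lemma exists_norm_fderiv_mul_lt {E : Type*} [NormedAddCommGroup E] [InnerProductSpace ℝ E]
    [CompleteSpace E] {g : E → ℝ} {w : ℝ → ℝ} {x₀ : E} {lam : ℝ} (hlam : 0 < lam)
    (hg : ContDiffAt ℝ 2 g x₀) (h0 : w 0 = 0) (hpos : ∀ x, 0 < x → 0 < w x)
    (hcont : ContinuousOn w (Ici 0)) (hc : ConcaveOn ℝ (Ici 0) w) {S : Finset ℝ}
    (hS : ∀ ξ ∈ Ioi (0 : ℝ) \ ↑S, DifferentiableAt ℝ w ξ)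
    (h2 : (∃ b, HasDerivWithinAt w b (Ici 0) 0) → Tendsto (deriv (deriv w)) (𝓝[>] 0) atBot)
    (hgw : ∀ x y, x ≠ y → |g x - g y| ≤ lam * w (dist x y)) :
    ∃ σ > 0, ‖fderiv ℝ g x₀‖ * σ < lam * w σ := by
  by_contra! hcon
  set A := fderiv ℝ g x₀ with hA
  have hcI : ∀ b, ConcaveOn ℝ (Icc 0 b) w := fun b => hc.subset Icc_subset_Ici_self (convex_Icc 0 b)
  obtain ⟨m, hmA, hm⟩ := (hcI 1).exists_hasDerivWithinAt_zero (B := ‖A‖ / lam) one_pos h0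
    (fun x hx => by rw [div_mul_eq_mul_div, le_div_iff₀ hlam]; linarith [hcon x hx])
  have hApos : 0 < ‖A‖ := by
    have := hcon 1 one_pos
    have := mul_pos hlam (hpos 1 one_pos)
    linarith
  obtain ⟨C, hC, r, hr, hT⟩ := hg.exists_taylor_remainder_le
  let K := (C + 1) / lam
  have hev : ∀ᶠ ξ in 𝓝[>] (0 : ℝ), deriv (deriv w) ξ < -(2 * K) ∧ ξ ∉ S := by
    refine ((h2 ⟨m, hm⟩).eventually_lt_atBot _).and ?_
    have : ((↑S : Set ℝ) \ {0})ᶜ ∈ 𝓝 (0 : ℝ) :=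
      ((S.finite_toSet.subset sdiff_subset).isClosed.isOpen_compl).mem_nhds (by simp)
    filter_upwards [mem_nhdsWithin_of_mem_nhds this, self_mem_nhdsWithin] with x hx hx0 hxS
    exact hx ⟨hxS, (mem_Ioi.1 hx0).ne'⟩
  obtain ⟨b, hb, hbI⟩ := mem_nhdsGT_iff_exists_Ioo_subset.1 hev
  have hb0 : (0 : ℝ) < b := hb
  have hKpos : 0 < K := by positivity
  have hconc : ConcaveOn ℝ (Icc 0 b) (fun x => w x + K * x ^ 2) := by
    refine concaveOn_of_hasDerivWithinAt2_nonpos (f' := fun x => deriv w x + K * (2 * x))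
      (f'' := fun x => deriv (deriv w) x + K * 2) (convex_Icc 0 b) ?_ ?_ ?_ ?_
    · exact (hcont.mono Icc_subset_Ici_self).add (by fun_prop)
    all_goals
      intro x hx
      try rw [interior_Icc]
      rw [interior_Icc] at hx
      obtain ⟨hx2, hxS⟩ := hbI hx
    · have := (hS x ⟨hx.1, hxS⟩).hasDerivAt.fun_add (((hasDerivAt_id x).pow 2).const_mul K)
      simpa using this.hasDerivWithinAt
    · have hd : DifferentiableAt ℝ (deriv w) x :=
        differentiableAt_of_deriv_ne_zero (by linarith)
      have := hd.hasDerivAt.fun_add (((hasDerivAt_id x).const_mul 2).const_mul K)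
      simpa using this.hasDerivWithinAt
    · linarith
  have hder : HasDerivWithinAt (fun x => w x + K * x ^ 2) m (Ici 0) 0 := by
    have := hm.fun_add (((hasDerivAt_id (0 : ℝ)).pow 2).const_mul K).hasDerivWithinAt
    simpa using this
  let v := (InnerProductSpace.toDual ℝ E).symm A
  have hv : ‖v‖ = ‖A‖ := by simp [v]
  have hAv : A v = ‖A‖ ^ 2 := by
    have : A v = inner ℝ v v := by
      simp only [v, InnerProductSpace.toDual_symm_apply]
    rw [this, real_inner_self_eq_norm_sq, hv]
  have hsmall : ∀ᶠ σ in 𝓝[>] (0 : ℝ), σ < r ∧ σ ≤ b :=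
    ((eventually_lt_nhds hr).filter_mono nhdsWithin_le_nhds).and
      ((eventually_le_nhds hb0).filter_mono nhdsWithin_le_nhds)
  obtain ⟨σ, ⟨hσr, hσb⟩, hσ⟩ := (hsmall.and self_mem_nhdsWithin).exists
  replace hσ : 0 < σ := hσ
  let y := (σ / ‖A‖) • v
  have hy : ‖y‖ = σ := by
    simp only [y, norm_smul, hv, Real.norm_eq_abs, abs_of_pos (div_pos hσ hApos)]
    field_simp
  have hAy : A y = ‖A‖ * σ := by
    simp only [y, map_smul, hAv, smul_eq_mul]
    field_simp
  have h3 := hT x₀ y (Metric.mem_ball_self hr) (by simpa [hy] using hσr)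
  have h4 := hgw (x₀ + y) x₀ (by
    intro h
    rw [add_eq_left] at h
    rw [h, norm_zero] at hy
    exact hσ.ne hy)
  rw [dist_self_add_left, hy] at h4
  rw [hy, ← hA, hAy] at h3
  have h5 := hconc.le_mul_of_hasDerivWithinAt (by simp [h0]) hder hσ hσb
  have h6 : lam * K = C + 1 := by simp only [K]; field_simp
  have h7 : lam * m ≤ ‖A‖ := by rw [le_div_iff₀ hlam] at hmA; linarith
  have h8 := abs_le.1 h3
  have h9 := abs_le.1 h4
  have h10 : lam * w σ + (C + 1) * σ ^ 2 ≤ ‖A‖ * σ := by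
    rw [← h6]
    nlinarith
  nlinarith [pow_pos hσ 2]

/-- Every point is equivalent modulo the lattice `L ℤ^d` to a point of a fixed ball. -/
lemma exists_lattice_translate_norm_le (d : ℕ) {L : ℝ} (hL : 0 < L) :
    ∃ R : ℝ, 0 ≤ R ∧ ∀ x : EuclideanSpace ℝ (Fin d), ∃ v : Fin d → ℤ,
      ‖x + (WithLp.equiv 2 (∀ _ : Fin d, ℝ)).symm (fun i => L * (v i : ℝ))‖ ≤ R := by
  refine ⟨√(∑ _i : Fin d, L ^ 2), Real.sqrt_nonneg _, fun x => ⟨fun i => -⌊x i / L⌋, ?_⟩⟩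
  rw [EuclideanSpace.norm_eq]
  refine Real.sqrt_le_sqrt (Finset.sum_le_sum fun i _ => ?_)
  have h1 := Int.floor_le (x i / L)
  have h2 := Int.lt_floor_add_one (x i / L)
  have h3 : (x + (WithLp.equiv 2 (∀ _ : Fin d, ℝ)).symm
      (fun i => L * ((-⌊x i / L⌋ : ℤ) : ℝ))) i = L * (x i / L - ⌊x i / L⌋) := by
    have : (x + (WithLp.equiv 2 (∀ _ : Fin d, ℝ)).symm
        (fun i => L * ((-⌊x i / L⌋ : ℤ) : ℝ))) i = x i - L * ⌊x i / L⌋ := by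
      simp [sub_eq_add_neg]
    rw [mul_sub, mul_div_cancel₀ _ hL.ne', this]
  rw [h3, Real.norm_eq_abs, abs_of_nonneg (mul_nonneg hL.le (by linarith))]
  have : L * (x i / L - ⌊x i / L⌋) ≤ L := by nlinarith
  have h0 : 0 ≤ L * (x i / L - ⌊x i / L⌋) := mul_nonneg hL.le (by linarith)
  gcongr

/-- A pair of points can be moved by lattice translations into a fixed ball without
increasing the distance. -/
lemma exists_periodic_representatives (d : ℕ) {L : ℝ} (hL : 0 < L) :
    ∃ R : ℝ, ∀ x y : EuclideanSpace ℝ (Fin d), ∃ x' y' : EuclideanSpace ℝ (Fin d),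
      ‖x'‖ ≤ R ∧ ‖y'‖ ≤ R ∧ dist x' y' ≤ dist x y ∧
      ∀ g : EuclideanSpace ℝ (Fin d) → ℝ, (∀ v : Fin d → ℤ, ∀ x,
        g (x + (WithLp.equiv 2 (∀ _ : Fin d, ℝ)).symm (fun i => L * (v i : ℝ))) = g x) →
        g x' = g x ∧ g y' = g y := by
  obtain ⟨R, hR, h⟩ := exists_lattice_translate_norm_le d hL
  refine ⟨3 * R, fun x y => ?_⟩
  obtain ⟨v, hv⟩ := h x
  obtain ⟨v', hv'⟩ := h y
  by_cases hxy : dist x y ≤ 2 * R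
  · refine ⟨_, _, ?_, hv'.trans (by linarith), (dist_add_right x y _).le,
      fun g hg => ⟨hg v' x, hg v' y⟩⟩
    set a := (WithLp.equiv 2 (∀ _ : Fin d, ℝ)).symm (fun i => L * (v' i : ℝ))
    have : x + a = (x - y) + (y + a) := by abel
    rw [this]
    refine (norm_add_le _ _).trans ?_
    rw [← dist_eq_norm]
    linarith
  · refine ⟨_, _, hv.trans (by linarith), hv'.trans (by linarith), ?_,
      fun g hg => ⟨hg v x, hg v' y⟩⟩
    refine (dist_le_norm_add_norm _ _).trans ?_
    linarith

lemma ContDiffOn.contDiff_slice {E F : Type*} [NormedAddCommGroup E] [NormedSpace ℝ E]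
    [NormedAddCommGroup F] [NormedSpace ℝ F] {n : WithTop ℕ∞} {θ : E → ℝ → F}
    (hθ : ContDiffOn ℝ n (fun p : E × ℝ => θ p.1 p.2) (univ ×ˢ Ici 0)) {t : ℝ} (ht : 0 ≤ t) :
    ContDiff ℝ n (fun x => θ x t) := by
  rw [← contDiffOn_univ]
  exact hθ.comp (f := fun x => (x, t)) (by fun_prop) fun x _ => ⟨mem_univ _, ht⟩

/-- The standing regularity assumptions on a space-periodic scalar `θ` and a time-dependent modulus
of continuity `ω` with infinitely negative second derivative at the origin. -/
structure IsAdmissiblePair (d : ℕ) (L : ℝ) (θ : EuclideanSpace ℝ (Fin d) → ℝ → ℝ)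
    (ω : ℝ → ℝ → ℝ) : Prop where
  pos : 0 < L
  contDiffOn : ContDiffOn ℝ (⊤ : ℕ∞)
    (fun p : EuclideanSpace ℝ (Fin d) × ℝ => θ p.1 p.2) (univ ×ˢ Ici 0)
  periodic : ∀ v : Fin d → ℤ, ∀ x t,
    θ (x + (WithLp.equiv 2 (∀ _ : Fin d, ℝ)).symm (fun i => L * (v i : ℝ))) t = θ x t
  continuousOn : ContinuousOn (fun p : ℝ × ℝ => ω p.1 p.2) (Ici 0 ×ˢ Ici 0)
  modulus : ∀ t ∈ Ici (0 : ℝ), IsModulusOfContinuity (fun ξ => ω ξ t)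
  second_deriv : ∀ t ∈ Ici (0 : ℝ), (∃ b, HasDerivWithinAt (fun r => ω r t) b (Ici 0) 0) →
    Tendsto (fun ξ => deriv (deriv (fun r => ω r t)) ξ) (nhdsWithin 0 (Ioi 0)) atBot

/-- If the pairs `(x n, y n)` violate the moduli `lam n * ω · (t n)` and the limiting modulus is
not violated, the pairs stay away from the diagonal, hence subconverge to a pair of distinct
points. -/
lemma IsAdmissiblePair.exists_subseq_tendsto_ne {d : ℕ} {L : ℝ}
    {θ : EuclideanSpace ℝ (Fin d) → ℝ → ℝ} {ω : ℝ → ℝ → ℝ} (h : IsAdmissiblePair d L θ ω)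
    {x y : ℕ → EuclideanSpace ℝ (Fin d)} {t lam : ℕ → ℝ} {ts lams R : ℝ}
    (ht0 : ∀ n, 0 ≤ t n) (htt : Tendsto t atTop (𝓝 ts)) (hlam : Tendsto lam atTop (𝓝 lams))
    (hlams : 0 < lams) (hxR : ∀ n, ‖x n‖ ≤ R) (hyR : ∀ n, ‖y n‖ ≤ R) (hne : ∀ n, x n ≠ y n)
    (hge : ∀ n, lam n * ω (dist (x n) (y n)) (t n) ≤ |θ (x n) (t n) - θ (y n) (t n)|)
    (hle : ∀ a b, a ≠ b → |θ a ts - θ b ts| ≤ lams * ω (dist a b) ts) :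
    ∃ (a b : EuclideanSpace ℝ (Fin d)) (φ : ℕ → ℕ), a ≠ b ∧ StrictMono φ ∧
      Tendsto (x ∘ φ) atTop (𝓝 a) ∧ Tendsto (y ∘ φ) atTop (𝓝 b) := by
  obtain ⟨-, hθ, -, hωc, hω, hω2⟩ := h
  have hts : 0 ≤ ts := ge_of_tendsto' htt ht0
  obtain ⟨⟨a, b⟩, -, φ, hφ, hlim⟩ :=
    ((isCompact_closedBall (0 : EuclideanSpace ℝ (Fin d)) R).prod
      (isCompact_closedBall (0 : EuclideanSpace ℝ (Fin d)) R)).tendsto_subseq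
      (x := fun n => (x n, y n)) fun n => ⟨by simpa using hxR n, by simpa using hyR n⟩
  have hxa : Tendsto (x ∘ φ) atTop (𝓝 a) := (continuous_fst.tendsto _).comp hlim
  have hyb : Tendsto (y ∘ φ) atTop (𝓝 b) := (continuous_snd.tendsto _).comp hlim
  refine ⟨a, b, φ, ?_, hφ, hxa, hyb⟩
  rintro rfl
  obtain ⟨h0, hcont, hmono, hconc, S, hS, -⟩ := hω ts hts
  have hpos : ∀ x, 0 < x → 0 < ω x ts := fun x hx => by
    have := hmono self_mem_Ici (mem_Ici.2 hx.le) hx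
    simpa [h0] using this
  have hsl : ContDiff ℝ (⊤ : ℕ∞) (fun x => θ x ts) := hθ.contDiff_slice hts
  obtain ⟨σ, hσ, hσlt⟩ := exists_norm_fderiv_mul_lt (x₀ := a) hlams
    (contDiff_infty.1 hsl 2).contDiffAt h0 hpos hcont hconc hS (hω2 ts hts) hle
  set A := fderiv ℝ (fun x => θ x ts) a
  let s : Set (EuclideanSpace ℝ (Fin d) × ℝ) := univ ×ˢ Ici 0
  have hsc : Convex ℝ s := convex_univ.prod (convex_Ici 0)
  have hsu : UniqueDiffOn ℝ s := uniqueDiffOn_univ.prod (uniqueDiffOn_Ici 0)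
  let F : EuclideanSpace ℝ (Fin d) × ℝ → ℝ := fun p => θ p.1 p.2
  have hFd : DifferentiableOn ℝ F s := hθ.differentiableOn (by simp)
  have hFc : ContinuousOn (fderivWithin ℝ F s) s := hθ.continuousOn_fderivWithin hsu (by simp)
  have hmem : (a, ts) ∈ s := ⟨mem_univ _, hts⟩
  have hAF : ∀ v, fderivWithin ℝ F s (a, ts) (v, 0) = A v := by
    intro v
    have h1 : HasFDerivAt (fun x => θ x ts)
        ((fderivWithin ℝ F s (a, ts)).comp
          (ContinuousLinearMap.inl ℝ (EuclideanSpace ℝ (Fin d)) ℝ)) a := by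
      rw [← hasFDerivWithinAt_univ]
      refine HasFDerivWithinAt.comp (g := F) (t := s) (f := fun x => (x, ts)) a
        (hFd (a, ts) hmem).hasFDerivWithinAt ?_ fun x _ => ⟨mem_univ _, hts⟩
      exact (hasFDerivAt_prodMk_left a ts).hasFDerivWithinAt
    rw [show A = _ from h1.fderiv]
    simp
  have htφ : Tendsto (t ∘ φ) atTop (𝓝 ts) := htt.comp hφ.tendsto_atTop
  have hlamφ : Tendsto (lam ∘ φ) atTop (𝓝 lams) := hlam.comp hφ.tendsto_atTop
  have key : ∀ ε > 0, lams * ω σ ts ≤ (‖A‖ + ε) * σ := by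
    intro ε hε
    have hnear : ∀ᶠ p in 𝓝[s] (a, ts), ‖fderivWithin ℝ F s p - fderivWithin ℝ F s (a, ts)‖ ≤ ε := by
      have := hFc (a, ts) hmem
      have := (tendsto_iff_norm_sub_tendsto_zero.1 this).eventually_le_const hε
      exact this
    obtain ⟨r, hr, hrs⟩ := Metric.mem_nhdsWithin_iff.1 hnear
    have hx : Tendsto (fun n => (x (φ n), t (φ n))) atTop (𝓝 (a, ts)) := hxa.prodMk_nhds htφ
    have hy : Tendsto (fun n => (y (φ n), t (φ n))) atTop (𝓝 (a, ts)) := hyb.prodMk_nhds htφ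
    have hd0 : Tendsto (fun n => dist (x (φ n)) (y (φ n))) atTop (𝓝 0) := by
      simpa using hxa.dist hyb
    have hωσ : Tendsto (fun n => lam (φ n) * ω σ (t (φ n))) atTop (𝓝 (lams * ω σ ts)) := by
      refine hlamφ.mul ?_
      have : ContinuousWithinAt (fun p : ℝ × ℝ => ω p.1 p.2) (Ici 0 ×ˢ Ici 0) (σ, ts) :=
        hωc (σ, ts) ⟨hσ.le, hts⟩
      refine this.tendsto.comp (tendsto_nhdsWithin_iff.2
        ⟨tendsto_const_nhds.prodMk_nhds htφ, Eventually.of_forall fun n => ⟨hσ.le, ht0 _⟩⟩)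
    refine le_of_tendsto hωσ ?_
    filter_upwards [hx (Metric.ball_mem_nhds _ hr), hy (Metric.ball_mem_nhds _ hr),
      hd0.eventually_le_const hσ, hlamφ.eventually_const_lt hlams] with n hxn hyn hdn hln
    have hxs : (x (φ n), t (φ n)) ∈ s := ⟨mem_univ _, ht0 _⟩
    have hys : (y (φ n), t (φ n)) ∈ s := ⟨mem_univ _, ht0 _⟩
    have hmv := ((convex_ball (a, ts) r).inter hsc).norm_image_sub_le_of_norm_hasFDerivWithin_le'
      (f := F) (φ := fderivWithin ℝ F s (a, ts)) (C := ε)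
      (fun p hp => (hFd p hp.2).hasFDerivWithinAt.mono inter_subset_right)
      (fun p hp => hrs hp) ⟨hyn, hys⟩ ⟨hxn, hxs⟩
    have hdp : 0 < dist (x (φ n)) (y (φ n)) := dist_pos.2 (hne _)
    simp only [F, Prod.mk_sub_mk, sub_self, hAF, Prod.norm_mk, norm_zero,
      ← dist_eq_norm (x (φ n)) (y (φ n)), max_eq_left hdp.le] at hmv
    have hAb : |A (x (φ n) - y (φ n))| ≤ ‖A‖ * dist (x (φ n)) (y (φ n)) := by
      rw [dist_eq_norm]
      exact A.le_opNorm _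
    have hf : lam (φ n) * ω (dist (x (φ n)) (y (φ n))) (t (φ n)) ≤
        (‖A‖ + ε) * dist (x (φ n)) (y (φ n)) := by
      refine (hge (φ n)).trans ?_
      have := abs_sub_abs_le_abs_sub (θ (x (φ n)) (t (φ n)) - θ (y (φ n)) (t (φ n)))
        (A (x (φ n) - y (φ n)))
      rw [Real.norm_eq_abs] at hmv
      linarith
    obtain ⟨h0n, -, -, hcn, -⟩ := hω (t (φ n)) (ht0 _)
    have hr := (hcn.subset Icc_subset_Ici_self (convex_Icc 0 σ)).mul_le_mul_of_le
      h0n hdp hdn le_rfl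
    have h3 : dist (x (φ n)) (y (φ n)) * (lam (φ n) * ω σ (t (φ n))) ≤
        dist (x (φ n)) (y (φ n)) * ((‖A‖ + ε) * σ) := by
      have h4 := mul_le_mul_of_nonneg_left hr (le_of_lt hln)
      have h5 := mul_le_mul_of_nonneg_left hf hσ.le
      simp only [Function.comp_apply] at h4
      linarith
    exact le_of_mul_le_mul_left h3 hdp
  have := le_of_forall_pos_le_add (a := lams * ω σ ts) (b := ‖A‖ * σ) fun ε hε => by
    have := key (ε / σ) (by positivity)
    rwa [add_mul, div_mul_cancel₀ _ (ne_of_gt hσ)] at this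
  linarith

/-- If `g` attains its modulus of continuity at the pair `(a, b)`, then `a` is not a maximum
of `g`. -/
lemma exists_gt_of_contact {E : Type*} [NormedAddCommGroup E] [NormedSpace ℝ E]
    {g : E → ℝ} {w : ℝ → ℝ} {a b : E} (hg : ContDiffAt ℝ 2 g a)
    (hmono : StrictMonoOn w (Ici 0)) (hc : ConcaveOn ℝ (Ici 0) w)
    (hgw : ∀ x y, x ≠ y → |g x - g y| ≤ w (dist x y)) (hab : a ≠ b)
    (hcontact : w (dist a b) ≤ g a - g b) : ∃ z, g a < g z := by
  by_contra! hmax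
  set ξ := dist a b with hξdef
  have hξ : 0 < ξ := dist_pos.2 hab
  have hd : fderiv ℝ g a = 0 := IsLocalMax.fderiv_eq_zero (Eventually.of_forall hmax)
  obtain ⟨C, hC, r, hr, hT⟩ := hg.exists_taylor_remainder_le
  have hm : 0 < w (2 * ξ) - w ξ :=
    sub_pos.2 (hmono (mem_Ici.2 hξ.le) (mem_Ici.2 (by linarith)) (by linarith))
  have hev : ∀ᶠ s in 𝓝[>] (0 : ℝ), s < 1 ∧ s * ξ < r ∧ C * ξ ^ 2 * s < w (2 * ξ) - w ξ := by
    refine Eventually.filter_mono nhdsWithin_le_nhds ?_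
    have h1 : Tendsto (fun s : ℝ => s * ξ) (𝓝 0) (𝓝 0) := by
      simpa using (tendsto_id (x := 𝓝 (0 : ℝ))).mul_const ξ
    have h2 : Tendsto (fun s : ℝ => C * ξ ^ 2 * s) (𝓝 0) (𝓝 0) := by
      simpa using (tendsto_id (x := 𝓝 (0 : ℝ))).const_mul (C * ξ ^ 2)
    exact (eventually_lt_nhds one_pos).and ((h1.eventually_lt_const hr).and
      (h2.eventually_lt_const hm))
  obtain ⟨s, ⟨hs1, hsr, hsC⟩, hs0⟩ := (hev.and self_mem_nhdsWithin).exists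
  replace hs0 : 0 < s := hs0
  have hn : ‖s • (b - a)‖ = s * ξ := by
    rw [norm_smul, Real.norm_of_nonneg hs0.le, ← dist_eq_norm, dist_comm]
  have h1 := hT a (s • (b - a)) (Metric.mem_ball_self hr) (by simpa [hn] using hsr)
  rw [hd, hn] at h1
  have hdist : dist (a + s • (b - a)) b = (1 - s) * ξ := by
    have : a + s • (b - a) - b = (1 - s) • (a - b) := by module
    rw [dist_eq_norm, this, norm_smul, Real.norm_of_nonneg (by linarith), ← dist_eq_norm]
  have h2 := hgw (a + s • (b - a)) b (dist_pos.1 (by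
    rw [hdist]; exact mul_pos (by linarith) hξ))
  rw [hdist] at h2
  -- concavity between `(1 - s) ξ`, `ξ` and `2 ξ`
  have h3 : s * (w (2 * ξ) - w ξ) ≤ w ξ - w ((1 - s) * ξ) := by
    have h4 := hc.2 (mem_Ici.2 (by nlinarith) : (1 - s) * ξ ∈ Ici (0 : ℝ))
      (mem_Ici.2 (by linarith) : 2 * ξ ∈ Ici (0 : ℝ))
      (by positivity : 0 ≤ 1 / (1 + s)) (by positivity : 0 ≤ s / (1 + s)) (by field_simp)
    have h5 : (1 / (1 + s)) • ((1 - s) * ξ) + (s / (1 + s)) • (2 * ξ) = ξ := by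
      simp only [smul_eq_mul]; field_simp; ring
    rw [h5] at h4
    simp only [smul_eq_mul] at h4
    have h6 : (1 + s) * (1 / (1 + s) * w ((1 - s) * ξ) + s / (1 + s) * w (2 * ξ)) =
        w ((1 - s) * ξ) + s * w (2 * ξ) := by field_simp
    have h7 := mul_le_mul_of_nonneg_left h4 (by positivity : 0 ≤ 1 + s)
    rw [h6] at h7
    linarith
  have h8 := (abs_le.1 h1).1
  have h9 := (abs_le.1 h2).2
  simp only [zero_apply, sub_zero] at h8
  nlinarith

namespace IsAdmissiblePair

variable {d : ℕ} {L : ℝ} {θ : EuclideanSpace ℝ (Fin d) → ℝ → ℝ} {ω : ℝ → ℝ → ℝ}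

lemma tendsto_scalar (h : IsAdmissiblePair d L θ ω) {ι : Type*} {l : Filter ι}
    {x : ι → EuclideanSpace ℝ (Fin d)} {t : ι → ℝ} {a : EuclideanSpace ℝ (Fin d)} {ts : ℝ}
    (hts : 0 ≤ ts) (ht0 : ∀ᶠ n in l, 0 ≤ t n) (hx : Tendsto x l (𝓝 a))
    (ht : Tendsto t l (𝓝 ts)) : Tendsto (fun n => θ (x n) (t n)) l (𝓝 (θ a ts)) :=
  (h.contDiffOn.continuousOn (a, ts) ⟨mem_univ _, hts⟩).tendsto.comp
    (tendsto_nhdsWithin_iff.2 ⟨hx.prodMk_nhds ht, ht0.mono fun _ hn => ⟨mem_univ _, hn⟩⟩)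

lemma tendsto_modulus (h : IsAdmissiblePair d L θ ω) {ι : Type*} {l : Filter ι}
    {x t : ι → ℝ} {a ts : ℝ} (ha : 0 ≤ a) (hts : 0 ≤ ts) (hx0 : ∀ᶠ n in l, 0 ≤ x n)
    (ht0 : ∀ᶠ n in l, 0 ≤ t n) (hx : Tendsto x l (𝓝 a)) (ht : Tendsto t l (𝓝 ts)) :
    Tendsto (fun n => ω (x n) (t n)) l (𝓝 (ω a ts)) :=
  (h.continuousOn (a, ts) ⟨ha, hts⟩).tendsto.comp
    (tendsto_nhdsWithin_iff.2 ⟨hx.prodMk_nhds ht, (hx0.and ht0).mono fun _ hn => hn⟩)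

lemma modulus_pos (h : IsAdmissiblePair d L θ ω) {ξ t : ℝ} (hξ : 0 < ξ) (ht : 0 ≤ t) :
    0 < ω ξ t := by
  obtain ⟨h0, -, hm, -⟩ := h.modulus t ht
  simpa [h0] using hm self_mem_Ici (mem_Ici.2 hξ.le) hξ

lemma modulus_mono (h : IsAdmissiblePair d L θ ω) {ξ ξ' t : ℝ} (hξ : 0 ≤ ξ) (hle : ξ ≤ ξ')
    (ht : 0 ≤ t) : ω ξ t ≤ ω ξ' t :=
  (h.modulus t ht).2.2.1.monotoneOn (mem_Ici.2 hξ) (mem_Ici.2 (hξ.trans hle)) hle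

/-- Limits of pairs violating the moduli `lam n * ω · (t n)` violate the limiting modulus. -/
lemma exists_limit_contact (h : IsAdmissiblePair d L θ ω)
    {x y : ℕ → EuclideanSpace ℝ (Fin d)} {t lam : ℕ → ℝ} {ts lams : ℝ}
    (ht0 : ∀ n, 0 ≤ t n) (htt : Tendsto t atTop (𝓝 ts)) (hlam : Tendsto lam atTop (𝓝 lams))
    (hlam0 : ∀ n, 0 < lam n) (hlams : 0 < lams) (hne : ∀ n, x n ≠ y n)
    (hge : ∀ n, lam n * ω (dist (x n) (y n)) (t n) ≤ |θ (x n) (t n) - θ (y n) (t n)|)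
    (hle : ∀ a b, a ≠ b → |θ a ts - θ b ts| ≤ lams * ω (dist a b) ts) :
    ∃ (a b : EuclideanSpace ℝ (Fin d)) (φ : ℕ → ℕ), a ≠ b ∧ StrictMono φ ∧
      lams * ω (dist a b) ts ≤ |θ a ts - θ b ts| ∧
      Tendsto (fun n => θ (x (φ n)) (t (φ n)) - θ (y (φ n)) (t (φ n))) atTop
        (𝓝 (θ a ts - θ b ts)) := by
  have hts : 0 ≤ ts := ge_of_tendsto' htt ht0
  obtain ⟨R, hR⟩ := exists_periodic_representatives d h.pos
  choose x' y' hx' hy' hd' hper using fun n => hR (x n) (y n)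
  have hx'θ : ∀ n s, θ (x' n) s = θ (x n) s := fun n s =>
    (hper n (fun z => θ z s) fun v z => h.periodic v z s).1
  have hy'θ : ∀ n s, θ (y' n) s = θ (y n) s := fun n s =>
    (hper n (fun z => θ z s) fun v z => h.periodic v z s).2
  have hne' : ∀ n, x' n ≠ y' n := by
    intro n hn
    have h1 := hge n
    rw [← hx'θ, ← hy'θ, hn, sub_self, abs_zero] at h1
    have := mul_pos (hlam0 n) (h.modulus_pos (dist_pos.2 (hne n)) (ht0 n))
    linarith
  have hge_cell : ∀ n, lam n * ω (dist (x' n) (y' n)) (t n) ≤ |θ (x' n) (t n) - θ (y' n) (t n)| := by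
    intro n
    rw [hx'θ, hy'θ]
    exact (mul_le_mul_of_nonneg_left (h.modulus_mono dist_nonneg (hd' n) (ht0 n))
      (hlam0 n).le).trans (hge n)
  obtain ⟨a, b, φ, hab, hφ, hxa, hyb⟩ :=
    h.exists_subseq_tendsto_ne ht0 htt hlam hlams hx' hy' hne' hge_cell hle
  have htφ : Tendsto (t ∘ φ) atTop (𝓝 ts) := htt.comp hφ.tendsto_atTop
  have ht0φ : ∀ᶠ n in atTop, 0 ≤ (t ∘ φ) n := Eventually.of_forall fun n => ht0 _
  have hlim : Tendsto (fun n => θ (x' (φ n)) (t (φ n)) - θ (y' (φ n)) (t (φ n))) atTop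
      (𝓝 (θ a ts - θ b ts)) :=
    (h.tendsto_scalar hts ht0φ hxa htφ).sub (h.tendsto_scalar hts ht0φ hyb htφ)
  refine ⟨a, b, φ, hab, hφ, ?_, by simpa only [hx'θ, hy'θ] using hlim⟩
  have hωlim : Tendsto (fun n => lam (φ n) * ω (dist (x' (φ n)) (y' (φ n))) (t (φ n))) atTop
      (𝓝 (lams * ω (dist a b) ts)) :=
    (hlam.comp hφ.tendsto_atTop).mul (h.tendsto_modulus dist_nonneg hts
      (Eventually.of_forall fun _ => dist_nonneg) ht0φ (hxa.dist hyb) htφ)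
  exact le_of_tendsto_of_tendsto' hωlim hlim.abs fun n => hge_cell (φ n)

/-- A strict modulus of continuity can be slightly contracted. -/
lemma eventually_lt_mul (h : IsAdmissiblePair d L θ ω) {t : ℝ} (ht : 0 ≤ t)
    (hlt : ∀ x y, x ≠ y → |θ x t - θ y t| < ω (dist x y) t) :
    ∃ lam₀ < (1 : ℝ), ∀ lam ∈ Ioc lam₀ 1, ∀ x y, x ≠ y →
      |θ x t - θ y t| < lam * ω (dist x y) t := by
  by_contra! hcon
  choose lam hlam x y hne hge using fun n : ℕ =>
    hcon (1 - 1 / ((n : ℝ) + 2)) (by simp; positivity)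
  have hlim : Tendsto lam atTop (𝓝 1) := by
    refine tendsto_of_tendsto_of_tendsto_of_le_of_le (g := fun n : ℕ => 1 - 1 / ((n : ℝ) + 2))
      ?_ tendsto_const_nhds (fun n => (hlam n).1.le) fun n => (hlam n).2
    have : Tendsto (fun n : ℕ => 1 / ((n : ℝ) + 2)) atTop (𝓝 0) :=
      tendsto_const_nhds.div_atTop
        (tendsto_atTop_add_const_right _ _ tendsto_natCast_atTop_atTop)
    simpa using (tendsto_const_nhds (x := (1 : ℝ))).sub this
  have hlam0 : ∀ n, 0 < lam n := by
    intro n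
    have : 1 / ((n : ℝ) + 2) ≤ 1 := by
      rw [div_le_one (by positivity)]
      linarith [(Nat.cast_nonneg n : (0 : ℝ) ≤ n)]
    linarith [(hlam n).1]
  obtain ⟨a, b, φ, hab, -, hcontact, -⟩ := h.exists_limit_contact (t := fun _ => t)
    (fun _ => ht) tendsto_const_nhds hlim hlam0 one_pos hne hge
    fun a b hab => by simpa using (hlt a b hab).le
  have := hlt a b hab
  linarith

/-- First time at which a moving modulus `lam t * ω · t` is attained. -/
lemma exists_first_contact (h : IsAdmissiblePair d L θ ω) {T : ℝ} (hT : 0 < T) {lam : ℝ → ℝ}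
    (hlamc : Continuous lam) (hlam0 : ∀ t ∈ Icc 0 T, 0 < lam t)
    (hinit : ∀ x y, x ≠ y → |θ x 0 - θ y 0| < lam 0 * ω (dist x y) 0)
    (hviol : ∃ x y, x ≠ y ∧ lam T * ω (dist x y) T ≤ |θ x T - θ y T|) :
    ∃ t₀ ∈ Ioc 0 T, (∀ t ∈ Icc 0 t₀, ∀ x y, x ≠ y → |θ x t - θ y t| ≤ lam t * ω (dist x y) t) ∧
      ∃ x₀ y₀, x₀ ≠ y₀ ∧ θ x₀ t₀ - θ y₀ t₀ = lam t₀ * ω (dist x₀ y₀) t₀ := by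
  let V : Set ℝ := {t | t ∈ Icc 0 T ∧ ∃ x y, x ≠ y ∧ lam t * ω (dist x y) t ≤ |θ x t - θ y t|}
  have hVne : V.Nonempty := ⟨T, ⟨hT.le, le_rfl⟩, hviol⟩
  have hVbdd : BddBelow V := ⟨0, fun t ht => ht.1.1⟩
  set t₀ := sInf V with ht₀def
  have ht₀T : t₀ ≤ T := csInf_le hVbdd ⟨⟨hT.le, le_rfl⟩, hviol⟩
  have ht₀0 : 0 ≤ t₀ := le_csInf hVne fun t ht => ht.1.1
  have hbefore : ∀ t, 0 ≤ t → t < t₀ → ∀ x y, x ≠ y →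
      |θ x t - θ y t| < lam t * ω (dist x y) t := by
    intro t ht htt x y hxy
    by_contra! hcon
    exact notMem_of_lt_csInf htt hVbdd ⟨⟨ht, htt.le.trans ht₀T⟩, x, y, hxy, hcon⟩
  have hat : ∀ x y, x ≠ y → |θ x t₀ - θ y t₀| ≤ lam t₀ * ω (dist x y) t₀ := by
    intro x y hxy
    rcases ht₀0.eq_or_lt with h0 | h0
    · rw [← h0]; exact (hinit x y hxy).le
    · have hev : ∀ᶠ t in 𝓝[<] t₀, 0 ≤ t :=
        ((eventually_gt_nhds h0).filter_mono nhdsWithin_le_nhds).mono fun _ => le_of_lt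
      have hid : Tendsto (fun t : ℝ => t) (𝓝[<] t₀) (𝓝 t₀) := nhdsWithin_le_nhds
      refine le_of_tendsto_of_tendsto
        (((h.tendsto_scalar ht₀0 hev tendsto_const_nhds hid (a := x)).sub
          (h.tendsto_scalar ht₀0 hev tendsto_const_nhds hid (a := y))).abs)
        ((hlamc.tendsto t₀).comp hid |>.mul (h.tendsto_modulus dist_nonneg ht₀0
          (Eventually.of_forall fun _ => dist_nonneg) hev tendsto_const_nhds hid)) ?_
      filter_upwards [hev, self_mem_nhdsWithin] with t ht htt
      exact (hbefore t ht htt x y hxy).le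
  obtain ⟨s, -, hs, hsV⟩ := exists_seq_tendsto_sInf hVne hVbdd
  choose x y hne hge using fun n => (hsV n).2
  obtain ⟨a, b, -, hab, -, hcontact, -⟩ := h.exists_limit_contact (fun n => (hsV n).1.1) hs
    ((hlamc.tendsto t₀).comp hs) (fun n => hlam0 _ (hsV n).1) (hlam0 _ ⟨ht₀0, ht₀T⟩) hne hge hat
  have hpos : 0 < t₀ := by
    refine ht₀0.lt_of_ne fun h0 => ?_
    change lam t₀ * ω (dist a b) t₀ ≤ |θ a t₀ - θ b t₀| at hcontact
    rw [← h0] at hcontact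
    exact absurd (hinit a b hab) (not_lt.2 hcontact)
  refine ⟨t₀, ⟨hpos, ht₀T⟩, fun t ht x y hxy => ?_, ?_⟩
  · rcases ht.2.eq_or_lt with rfl | htt
    · exact hat x y hxy
    · exact (hbefore t ht.1 htt x y hxy).le
  · have heq := le_antisymm (hat a b hab) hcontact
    rcases abs_cases (θ a t₀ - θ b t₀) with ⟨h1, -⟩ | ⟨h1, -⟩
    · exact ⟨a, b, hab, by rw [← h1, heq]⟩
    · exact ⟨b, a, hab.symm, by rw [dist_comm, ← heq, h1]; ring⟩

/-- If the modulus `ω` is violated at a positive time, a slightly contracted and slowly growing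
modulus `(lam + lam' * (t - t₀)) * ω · t` has a first contact at some time `t₀ > 0`, at a distance
where `ω` is below the oscillation bound `2 * sup |θ|`. -/
lemma exists_contact (h : IsAdmissiblePair d L θ ω)
    (hinit : ∀ x y, x ≠ y → |θ x 0 - θ y 0| < ω (dist x y) 0) {T : ℝ} (hT : 0 < T)
    (hviol : ∃ x y, x ≠ y ∧ ω (dist x y) T ≤ |θ x T - θ y T|) :
    ∃ t₀ > 0, ∃ lam > 0, ∃ lam' > 0,
      (∀ t ∈ Icc 0 t₀, 0 < lam + lam' * (t - t₀) ∧ lam + lam' * (t - t₀) ≤ 1) ∧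
      (∀ t ∈ Icc 0 t₀, ∀ x y, x ≠ y →
        |θ x t - θ y t| ≤ (lam + lam' * (t - t₀)) * ω (dist x y) t) ∧
      ∃ x₀ y₀, x₀ ≠ y₀ ∧ θ x₀ t₀ - θ y₀ t₀ = lam * ω (dist x₀ y₀) t₀ ∧
        ∃ z, ω (dist x₀ y₀) t₀ < 2 * |θ z t₀| := by
  obtain ⟨lam₀, hlam₀, hlt⟩ := h.eventually_lt_mul le_rfl hinit
  let ε : ℕ → ℝ := fun n => (1 - max lam₀ 0) / ((n : ℝ) + 2)
  have hm : 0 < 1 - max lam₀ 0 := sub_pos.2 (max_lt hlam₀ one_pos)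
  have hε : ∀ n, 0 < ε n := fun n => by positivity
  have hε1 : ∀ n, ε n < 1 - max lam₀ 0 := fun n => by
    refine div_lt_self hm ?_
    linarith [(Nat.cast_nonneg n : (0 : ℝ) ≤ n)]
  have hεlim : Tendsto ε atTop (𝓝 0) := tendsto_const_nhds.div_atTop
    (tendsto_atTop_add_const_right _ _ tendsto_natCast_atTop_atTop)
  let lam : ℕ → ℝ → ℝ := fun n t => 1 - ε n + ε n / (2 * T) * t
  have hlamc : ∀ n, Continuous (lam n) := fun n => by fun_prop
  have hlamlow : ∀ n, ∀ t ∈ Icc 0 T, 1 - ε n ≤ lam n t := fun n t ht => by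
    have : 0 ≤ ε n / (2 * T) * t := mul_nonneg (by have := hε n; positivity) ht.1
    simp only [lam]; linarith
  have hlampos : ∀ n, ∀ t ∈ Icc 0 T, 0 < lam n t := fun n t ht => by
    linarith [hlamlow n t ht, hε1 n, le_max_right lam₀ 0]
  have hlamup : ∀ n, ∀ t ∈ Icc 0 T, lam n t ≤ 1 := fun n t ht => by
    have h1 : ε n / (2 * T) * t ≤ ε n / (2 * T) * T :=
      mul_le_mul_of_nonneg_left ht.2 (by have := hε n; positivity)
    have h2 : ε n / (2 * T) * T = ε n / 2 := by field_simp
    simp only [lam]; linarith [hε n]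
  have hfc := fun n => h.exists_first_contact hT (hlamc n) (hlampos n)
    (fun x y hxy => hlt (lam n 0) ⟨by
        linarith [hlamlow n 0 ⟨le_rfl, hT.le⟩, hε1 n, le_max_left lam₀ 0],
      hlamup n 0 ⟨le_rfl, hT.le⟩⟩ x y hxy)
    (by
      obtain ⟨x, y, hxy, hv⟩ := hviol
      refine ⟨x, y, hxy, (mul_le_of_le_one_left (h.modulus_pos (dist_pos.2 hxy) hT.le).le
        (hlamup n T ⟨hT.le, le_rfl⟩)).trans hv⟩)
  choose t ht hle x y hne hcontact using hfc
  have htI : ∀ n, t n ∈ Icc 0 T := fun n => ⟨(ht n).1.le, (ht n).2⟩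
  by_cases hgood : ∃ n z, ω (dist (x n) (y n)) (t n) < 2 * |θ z (t n)|
  · obtain ⟨n, hz⟩ := hgood
    have hlin : ∀ s, lam n (t n) + ε n / (2 * T) * (s - t n) = lam n s := fun s => by
      simp only [lam]; ring
    have hsub : ∀ s ∈ Icc 0 (t n), s ∈ Icc 0 T := fun s hs => ⟨hs.1, hs.2.trans (ht n).2⟩
    refine ⟨t n, (ht n).1, lam n (t n), hlampos n _ (htI n), ε n / (2 * T),
      by have := hε n; positivity, fun s hs => ?_, fun s hs a b hab => ?_,
      x n, y n, hne n, hcontact n, hz⟩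
    · rw [hlin]
      exact ⟨hlampos n s (hsub s hs), hlamup n s (hsub s hs)⟩
    · rw [hlin]
      exact hle n s hs a b hab
  · exfalso
    push Not at hgood
    obtain ⟨ts, hts, φ, hφ, hlim⟩ := isCompact_Icc.tendsto_subseq htI
    have hlam1 : Tendsto (fun n => lam (φ n) (t (φ n))) atTop (𝓝 1) := by
      refine tendsto_of_tendsto_of_tendsto_of_le_of_le (g := fun n => 1 - ε (φ n)) ?_
        tendsto_const_nhds (fun n => hlamlow _ _ (htI _)) fun n => hlamup _ _ (htI _)
      simpa using (tendsto_const_nhds (x := (1 : ℝ))).sub (hεlim.comp hφ.tendsto_atTop)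
    have ht0 : ∀ᶠ n in atTop, 0 ≤ (t ∘ φ) n := Eventually.of_forall fun n => (htI _).1
    have hats : ∀ a b, a ≠ b → |θ a ts - θ b ts| ≤ 1 * ω (dist a b) ts := by
      intro a b hab
      refine le_of_tendsto_of_tendsto'
        ((h.tendsto_scalar hts.1 ht0 tendsto_const_nhds hlim).sub
          (h.tendsto_scalar hts.1 ht0 tendsto_const_nhds hlim)).abs
        (hlam1.mul (h.tendsto_modulus dist_nonneg hts.1
          (Eventually.of_forall fun _ => dist_nonneg) ht0 tendsto_const_nhds hlim)) ?_
      exact fun n => hle (φ n) _ ⟨(htI _).1, le_rfl⟩ a b hab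
    obtain ⟨a, b, ψ, hab, hψ, hc, hflim⟩ := h.exists_limit_contact
      (x := x ∘ φ) (y := y ∘ φ) (fun n => (htI (φ n)).1) hlim hlam1
      (fun n => hlampos _ _ (htI _)) one_pos (fun n => hne _)
      (fun n => (hcontact (φ n)).symm.le.trans (le_abs_self _)) hats
    have hz : ∀ z, 2 * |θ z ts| ≤ θ a ts - θ b ts := by
      intro z
      have h1 := h.tendsto_scalar hts.1 ht0 (tendsto_const_nhds (x := z)) hlim
      have h2 := (hlam1.mul (h1.abs.const_mul 2)).comp hψ.tendsto_atTop
      rw [one_mul] at h2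
      refine le_of_tendsto_of_tendsto' h2 hflim fun n => ?_
      simp only [Function.comp_apply]
      rw [hcontact]
      exact mul_le_mul_of_nonneg_left (hgood _ z) (hlampos _ _ (htI _)).le
    have hfpos : 0 ≤ θ a ts - θ b ts := le_trans (by positivity) (hz a)
    rw [one_mul, abs_of_nonneg hfpos] at hc
    obtain ⟨z, hgt⟩ := exists_gt_of_contact (g := fun x => θ x ts)
      (contDiff_infty.1 (h.contDiffOn.contDiff_slice hts.1) 2).contDiffAt
      (h.modulus ts hts.1).2.2.1 (h.modulus ts hts.1).2.2.2.1
      (fun x y hxy => by simpa using hats x y hxy) hab hc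
    have h1 := hz z
    have h2 := hz b
    have h3 := le_abs_self (θ z ts)
    have h4 := neg_abs_le (θ b ts)
    linarith

end IsAdmissiblePair

/-- A `C¹` bump function supported in `[-1, 1]`. -/
noncomputable def bump (z : ℝ) : ℝ := max (1 - z ^ 2) 0 ^ 2

lemma continuous_bump : Continuous bump := by unfold bump; fun_prop

lemma bump_nonneg (z : ℝ) : 0 ≤ bump z := by unfold bump; positivity

lemma bump_neg (z : ℝ) : bump (-z) = bump z := by simp [bump]

lemma bump_of_abs_le {z : ℝ} (hz : |z| ≤ 1) : bump z = (1 - z ^ 2) ^ 2 := by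
  rw [bump, max_eq_left]
  have := (sq_le_one_iff_abs_le_one z).2 hz
  linarith

lemma bump_of_one_le_abs {z : ℝ} (hz : 1 ≤ |z|) : bump z = 0 := by
  rw [bump, max_eq_right, zero_pow two_ne_zero]
  have := (one_le_sq_iff_one_le_abs z).2 hz
  linarith

lemma bump_pos_of_abs_lt {z : ℝ} (hz : |z| < 1) : 0 < bump z := by
  rw [bump_of_abs_le hz.le]
  have := (sq_lt_one_iff_abs_lt_one z).2 hz
  exact pow_pos (by linarith) 2

lemma bump_second_difference_le (z s : ℝ) :
    2 * bump z - bump (z + s) - bump (z - s) ≤ 32 * s ^ 2 * bump z := by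
  wlog hs : 0 ≤ s generalizing s
  · have := this (-s) (by linarith)
    rw [← sub_eq_add_neg, sub_neg_eq_add, neg_sq] at this
    linarith
  wlog hz : 0 ≤ z generalizing z
  · have := this (-z) (by linarith)
    rw [← bump_neg (-z + s), ← bump_neg (-z - s), bump_neg z] at this
    ring_nf at this ⊢
    linarith
  have h0 := bump_nonneg z
  have h1 := bump_nonneg (z + s)
  have h2 := bump_nonneg (z - s)
  rcases le_total 1 z with hz1 | hz1
  · rw [bump_of_one_le_abs (hz1.trans (le_abs_self z))]
    linarith
  rcases le_total (1 / 4) s with hs4 | hs4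
  · nlinarith [mul_nonneg h0 (by nlinarith : 0 ≤ 16 * s ^ 2 - 1)]
  have hzz : |z| ≤ 1 := by rwa [abs_of_nonneg hz]
  rw [bump_of_abs_le hzz] at *
  have hm : |z - s| ≤ 1 := abs_le.2 ⟨by linarith, by linarith⟩
  rcases le_total (z + s) 1 with hzs | hzs
  · rw [bump_of_abs_le hm, bump_of_abs_le (abs_le.2 ⟨by linarith, hzs⟩)]
    have h3 : 0 ≤ 4 - 6 * (1 - z ^ 2) + s ^ 2 + 16 * (1 - z ^ 2) ^ 2 := by
      nlinarith [sq_nonneg (4 * (1 - z ^ 2) - 3 / 4), sq_nonneg s]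
    nlinarith [mul_nonneg (sq_nonneg s) h3]
  · rw [bump_of_abs_le hm]
    have h3 : 3 / 2 * (1 - z ^ 2) ≤ 1 - (z - s) ^ 2 := by nlinarith
    have h4 : 0 ≤ 1 - z ^ 2 := by nlinarith
    have h5 : (3 / 2 * (1 - z ^ 2)) ^ 2 ≤ (1 - (z - s) ^ 2) ^ 2 := by gcongr
    nlinarith [mul_nonneg (sq_nonneg s) (sq_nonneg (1 - z ^ 2)), sq_nonneg (1 - z ^ 2)]

lemma integrable_bump_mul {r : ℝ} (hr : 0 < r) {H : ℝ → ℝ} (hH : Continuous H) (a : ℝ) :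
    Integrable fun z => bump ((z + a) / r) * H z := by
  refine Continuous.integrable_of_hasCompactSupport
    ((continuous_bump.comp (by fun_prop)).mul hH) ?_
  refine HasCompactSupport.intro (K := Icc (-a - r) (-a + r)) isCompact_Icc fun z hz => ?_
  rw [bump_of_one_le_abs, zero_mul]
  rw [abs_div, abs_of_pos hr, le_div_iff₀ hr, one_mul]
  by_contra! hcon
  have := abs_lt.1 hcon
  exact hz ⟨by linarith, by linarith⟩

lemma integral_bump_pos {r : ℝ} (hr : 0 < r) : 0 < ∫ z, bump (z / r) := by
  have hc : Continuous fun z : ℝ => bump (z / r) := continuous_bump.comp (by fun_prop)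
  refine hc.integral_pos_of_hasCompactSupport_nonneg_nonzero (x := 0) ?_
    (fun z => bump_nonneg _) (by simp [bump])
  refine HasCompactSupport.intro (K := Icc (-r) r) isCompact_Icc fun z hz => ?_
  refine bump_of_one_le_abs ?_
  rw [abs_div, abs_of_pos hr, le_div_iff₀ hr, one_mul]
  by_contra! hcon
  have := abs_lt.1 hcon
  exact hz ⟨by linarith, by linarith⟩

/-- Discrete integration by parts of a second difference against the bump function. -/
lemma integral_bump_mul_second_difference_le {r K s : ℝ} (hr : 0 < r) {H : ℝ → ℝ}
    (hH : Continuous H) (hH0 : ∀ z, |z| ≤ r + K → 0 ≤ H z) (hs : 0 ≤ s) (hsK : s ≤ K) :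
    ∫ z, bump (z / r) * (2 * H z - H (z + s) - H (z - s)) ≤
      32 * (s / r) ^ 2 * ∫ z, bump (z / r) * H z := by
  have i0 : Integrable fun z => bump (z / r) * H z := by
    simpa using integrable_bump_mul hr hH 0
  have ip : Integrable fun z => bump (z / r) * H (z + s) := by
    simpa using integrable_bump_mul hr (H := fun z => H (z + s)) (by fun_prop) 0
  have im : Integrable fun z => bump (z / r) * H (z - s) := by
    simpa using integrable_bump_mul hr (H := fun z => H (z - s)) (by fun_prop) 0
  have jp := integrable_bump_mul hr hH s
  have jm := integrable_bump_mul hr hH (-s)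
  have ep : ∫ z, bump (z / r) * H (z + s) = ∫ z, bump ((z + -s) / r) * H z := by
    rw [← integral_add_right_eq_self (fun z => bump ((z + -s) / r) * H z) s]
    simp
  have em : ∫ z, bump (z / r) * H (z - s) = ∫ z, bump ((z + s) / r) * H z := by
    rw [← integral_sub_right_eq_self (fun z => bump ((z + s) / r) * H z) s]
    simp
  have e1 : ∫ z, bump (z / r) * (2 * H z - H (z + s) - H (z - s)) =
      ∫ z, (2 * bump (z / r) - bump ((z + s) / r) - bump ((z + -s) / r)) * H z := by
    have i2 : Integrable fun z => 2 * (bump (z / r) * H z) - bump (z / r) * H (z + s) :=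
      (i0.const_mul 2).sub ip
    have j2 : Integrable fun z => 2 * (bump (z / r) * H z) - bump ((z + s) / r) * H z :=
      (i0.const_mul 2).sub jp
    calc _ = ∫ z, (2 * (bump (z / r) * H z) - bump (z / r) * H (z + s) -
          bump (z / r) * H (z - s)) := by congr 1; ext z; ring
      _ = ∫ z, (2 * (bump (z / r) * H z) - bump ((z + s) / r) * H z -
          bump ((z + -s) / r) * H z) := by
        rw [integral_sub i2 im, integral_sub (i0.const_mul 2) ip, integral_sub j2 jm,
          integral_sub (i0.const_mul 2) jp, ep, em]
        ring
      _ = _ := by congr 1; ext z; ring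
  rw [e1, ← integral_const_mul]
  refine integral_mono ?_ (i0.const_mul _) fun z => ?_
  · refine (((i0.const_mul 2).sub jp).sub jm).congr (Eventually.of_forall fun z => ?_)
    simp only [Pi.sub_apply]; ring
  · have hb := bump_second_difference_le (z / r) (s / r)
    rw [← add_div, ← sub_div, sub_eq_add_neg z s] at hb
    rcases le_or_gt |z| (r + K) with hz | hz
    · have := mul_le_mul_of_nonneg_right hb (hH0 z hz)
      simpa only [mul_assoc] using this
    · have hzero : ∀ a, |a| ≤ K → bump ((z + a) / r) = 0 := by
        intro a ha
        refine bump_of_one_le_abs ?_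
        rw [abs_div, abs_of_pos hr, le_div_iff₀ hr, one_mul]
        have := abs_sub_abs_le_abs_add z a
        linarith
      have h1 := hzero s (by rwa [abs_of_nonneg hs])
      have h2 := hzero (-s) (by rwa [abs_neg, abs_of_nonneg hs])
      have h3 := hzero 0 (by simpa using hs.trans hsK)
      rw [add_zero] at h3
      simp [h1, h2, h3]

lemma lintegral_ofReal_mul_rpow {K q κ : ℝ} (hK : 0 ≤ K) (hq : -1 < q) (hκ : 0 < κ) :
    ∫⁻ η in Ioo 0 κ, ENNReal.ofReal (K * η ^ q) =
      ENNReal.ofReal (K * (κ ^ (q + 1) / (q + 1))) := by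
  have hi : IntegrableOn (fun η : ℝ => K * η ^ q) (Ioo 0 κ) := by
    have := (intervalIntegral.intervalIntegrable_rpow' (a := 0) (b := κ) hq).const_mul K
    rw [intervalIntegrable_iff_integrableOn_Ioo_of_le hκ.le] at this
    exact this
  rw [← ofReal_integral_eq_lintegral_ofReal hi]
  · congr 1
    rw [integral_const_mul, ← integral_Ioc_eq_integral_Ioo,
      ← intervalIntegral.integral_of_le hκ.le, integral_rpow (Or.inl hq),
      Real.zero_rpow (by linarith), sub_zero]
  · filter_upwards [ae_restrict_mem measurableSet_Ioo] with η hη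
    have := hη.1
    simp only [Pi.zero_apply]
    positivity

/-- The bump-averaged near part of the dissipation of `w` is controlled by the averaged gap between
`w` and a function `p` below it whose second differences are quadratically bounded. -/
lemma lintegral_bump_mul_near_le {α r κ C : ℝ} (hα1 : α < 1) (hr : 0 < r) (hκ : 0 < κ)
    (hC : 0 ≤ C) {w p : ℝ → ℝ} (hw : Continuous w) (hp : Continuous p)
    (hwp : ∀ z, |z| ≤ r + 2 * κ → p z ≤ w z)
    (hp2 : ∀ z s, |z| ≤ r → 0 ≤ s → s ≤ 2 * κ → 2 * p z - p (z + s) - p (z - s) ≤ C * s ^ 2)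
    (hd : ∀ z η, |z| ≤ r → 0 < η → η < κ → 0 ≤ 2 * w z - w (z + 2 * η) - w (z - 2 * η)) :
    ∫⁻ z, ENNReal.ofReal (bump (z / r)) * ∫⁻ η in Ioo 0 κ,
        ENNReal.ofReal ((2 * w z - w (z + 2 * η) - w (z - 2 * η)) / η ^ (1 + 2 * α)) ≤
      ENNReal.ofReal ((128 / r ^ 2 * (∫ z, bump (z / r) * (w z - p z)) +
        4 * C * ∫ z, bump (z / r)) * (κ ^ (2 - 2 * α) / (2 - 2 * α))) := by
  have hbc : Continuous fun z : ℝ => bump (z / r) := continuous_bump.comp (by fun_prop)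
  set A := ∫ z, bump (z / r) * (w z - p z) with hA
  set P := ∫ z, bump (z / r) with hP
  have hzout : ∀ z, r < |z| → bump (z / r) = 0 := fun z hz => by
    refine bump_of_one_le_abs ?_
    rw [abs_div, abs_of_pos hr, le_div_iff₀ hr, one_mul]
    exact hz.le
  have hA0 : 0 ≤ A := by
    refine integral_nonneg fun z => ?_
    rcases le_or_gt |z| r with hz | hz
    · exact mul_nonneg (bump_nonneg _) (sub_nonneg.2 (hwp z (by linarith)))
    · simp [hzout z hz]
  have hP0 : 0 ≤ P := integral_nonneg fun z => bump_nonneg _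
  let D : ℝ → ℝ → ℝ := fun z η => 2 * w z - w (z + 2 * η) - w (z - 2 * η)
  have hDm : Measurable fun q : ℝ × ℝ => D q.1 q.2 / q.2 ^ (1 + 2 * α) := by
    refine Measurable.div (Continuous.measurable (by fun_prop)) ?_
    exact measurable_snd.pow_const _
  calc _ = ∫⁻ z, ∫⁻ η in Ioo 0 κ, ENNReal.ofReal (bump (z / r)) *
        ENNReal.ofReal (D z η / η ^ (1 + 2 * α)) := by
        congr 1; ext z
        rw [lintegral_const_mul]
        exact (hDm.comp (measurable_const.prodMk measurable_id)).ennreal_ofReal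
    _ = ∫⁻ η in Ioo 0 κ, ∫⁻ z, ENNReal.ofReal (bump (z / r)) *
        ENNReal.ofReal (D z η / η ^ (1 + 2 * α)) := by
        rw [lintegral_lintegral_swap]
        refine Measurable.aemeasurable ?_
        exact ((hbc.measurable.comp measurable_fst).ennreal_ofReal).mul hDm.ennreal_ofReal
    _ ≤ ∫⁻ η in Ioo 0 κ, ENNReal.ofReal ((128 / r ^ 2 * A + 4 * C * P) * η ^ (1 - 2 * α)) := by
        refine setLIntegral_mono' measurableSet_Ioo fun η hη => ?_
        have hη0 : 0 < η := hη.1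
        have hi : ∀ {f : ℝ → ℝ}, Continuous f → Integrable fun z => bump (z / r) * f z :=
          fun hf => by simpa using integrable_bump_mul hr hf 0
        have hDc : Continuous fun z => D z η := by fun_prop
        have hint : Integrable fun z => bump (z / r) * D z η := hi hDc
        have hmain : ∫ z, bump (z / r) * D z η ≤ (128 / r ^ 2 * A + 4 * C * P) * η ^ 2 := by
          have hsplit : ∀ z, bump (z / r) * D z η ≤
              bump (z / r) * (2 * (w z - p z) - (w (z + 2 * η) - p (z + 2 * η)) -
                (w (z - 2 * η) - p (z - 2 * η))) + bump (z / r) * (4 * C * η ^ 2) := by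
            intro z
            rcases le_or_gt |z| r with hz | hz
            · have h1 := hp2 z (2 * η) hz (by linarith) (by linarith [hη.2])
              rw [← mul_add]
              refine mul_le_mul_of_nonneg_left ?_ (bump_nonneg _)
              simp only [D]; linarith
            · simp [hzout z hz]
          have i1 := hi (f := fun z => 2 * (w z - p z) - (w (z + 2 * η) - p (z + 2 * η)) -
                (w (z - 2 * η) - p (z - 2 * η))) (by fun_prop)
          have i2 := hi (f := fun _ => 4 * C * η ^ 2) continuous_const
          have h2 := integral_mono hint (i1.add i2) hsplit
          have h3 := integral_bump_mul_second_difference_le (K := 2 * κ) hr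
            (H := fun z => w z - p z) (by fun_prop) (fun z hz => sub_nonneg.2 (hwp z hz))
            (s := 2 * η) (by linarith) (by linarith [hη.2])
          have h4 : ∫ z, bump (z / r) * (4 * C * η ^ 2) = P * (4 * C * η ^ 2) :=
            integral_mul_const _ _
          have h5 : 32 * (2 * η / r) ^ 2 * A = 128 / r ^ 2 * A * η ^ 2 := by
            field_simp; ring
          have h6 := integral_add i1 i2
          simp only [Pi.add_apply] at h2
          rw [h6, h4] at h2
          simp only [← hA, h5] at h3
          linarith
        have hD0 : ∀ z, 0 ≤ bump (z / r) * D z η := fun z => by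
          rcases le_or_gt |z| r with hz | hz
          · exact mul_nonneg (bump_nonneg _) (hd z η hz hη.1 hη.2)
          · simp [hzout z hz]
        calc _ = ∫⁻ z, ENNReal.ofReal (bump (z / r) * D z η / η ^ (1 + 2 * α)) := by
              congr 1; ext z
              rw [← ENNReal.ofReal_mul (bump_nonneg _), mul_div_assoc]
          _ = ENNReal.ofReal ((∫ z, bump (z / r) * D z η) / η ^ (1 + 2 * α)) := by
              rw [← integral_div, ofReal_integral_eq_lintegral_ofReal (hint.div_const _)]
              exact Eventually.of_forall fun z => div_nonneg (hD0 z) (by positivity)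
          _ ≤ _ := by
              refine ENNReal.ofReal_le_ofReal ?_
              rw [div_le_iff₀ (by positivity), mul_assoc, ← Real.rpow_add hη0]
              rw [show 1 - 2 * α + (1 + 2 * α) = 2 by ring, Real.rpow_two]
              exact hmain
    _ = _ := by
        rw [lintegral_ofReal_mul_rpow (by positivity) (by linarith) hκ]
        rw [show 1 - 2 * α + 1 = 2 - 2 * α by ring]

/-- Fundamental theorem of calculus, as a lower bound, with finitely many exceptional points. -/
lemma integral_le_sub_of_hasDerivAt_off_finset (S : Finset ℝ) {g φ : ℝ → ℝ} :
    ∀ {a b : ℝ}, a ≤ b → ContinuousOn g (Icc a b) → IntegrableOn φ (Icc a b) →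
      (∀ t ∈ Ioo a b, t ∉ S → ∃ g', φ t ≤ g' ∧ HasDerivAt g g' t) →
      ∫ t in a..b, φ t ≤ g b - g a := by
  induction S using Finset.induction_on with
  | empty =>
    intro a b hab hg hφ hd
    refine intervalIntegral.integral_le_sub_of_hasDeriv_right_of_le (g' := deriv g) hab hg ?_ hφ ?_
    · intro t ht
      obtain ⟨g', -, h⟩ := hd t ht (by simp)
      rw [h.deriv]
      exact h.hasDerivWithinAt
    · intro t ht
      obtain ⟨g', hle, h⟩ := hd t ht (by simp)
      rwa [h.deriv]
  | insert c S _ ih =>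
    intro a b hab hg hφ hd
    by_cases hc : c ∈ Ioo a b
    · have hac : Icc a c ⊆ Icc a b := Icc_subset_Icc le_rfl hc.2.le
      have hcb : Icc c b ⊆ Icc a b := Icc_subset_Icc hc.1.le le_rfl
      have h1 := ih hc.1.le (hg.mono hac) (hφ.mono_set hac) fun t ht htS =>
        hd t ⟨ht.1, ht.2.trans hc.2⟩ (by simp [ht.2.ne, htS])
      have h2 := ih hc.2.le (hg.mono hcb) (hφ.mono_set hcb) fun t ht htS =>
        hd t ⟨hc.1.trans ht.1, ht.2⟩ (by simp [ht.1.ne', htS])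
      rw [← intervalIntegral.integral_add_adjacent_intervals (b := c)
        ((intervalIntegrable_iff_integrableOn_Icc_of_le hc.1.le).2 (hφ.mono_set hac))
        ((intervalIntegrable_iff_integrableOn_Icc_of_le hc.2.le).2 (hφ.mono_set hcb))]
      linarith
    · refine ih hab hg hφ fun t ht htS => hd t ht ?_
      rw [Finset.mem_insert, not_or]
      exact ⟨fun h => hc (h ▸ ht), htS⟩

/-- Growth of a bump average from a pointwise lower bound on the time derivative that holds, for
each point, off a finite set of times. -/
lemma bump_average_growth {r δ M t₁ t₂ : ℝ} (hr : 0 < r) (ht : t₁ ≤ t₂) (hM : 0 ≤ M)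
    {h : ℝ → ℝ → ℝ} (hh : Continuous fun q : ℝ × ℝ => h q.1 q.2) {N : ℝ → ℝ → ENNReal}
    (hN : Measurable fun q : ℝ × ℝ => N q.1 q.2)
    (hd : ∀ z, |z| < r → ∃ S : Finset ℝ, ∀ t ∈ Ioo t₁ t₂, t ∉ S →
      ∃ a, δ - (N z t).toReal ≤ a ∧ HasDerivAt (h z) a t)
    (hNM : ∀ t ∈ Ioo t₁ t₂,
      ∫⁻ z, ENNReal.ofReal (bump (z / r)) * N z t ≤ ENNReal.ofReal M) :
    (δ * (∫ z, bump (z / r)) - M) * (t₂ - t₁) ≤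
      (∫ z, bump (z / r) * h z t₂) - ∫ z, bump (z / r) * h z t₁ := by
  have hbc : Continuous fun z : ℝ => bump (z / r) := continuous_bump.comp (by fun_prop)
  let J : ℝ → ENNReal := fun z => ∫⁻ t in Ioo t₁ t₂, N z t
  have hJm : Measurable J := hN.lintegral_prod_right'
  have hJ : ∫⁻ z, ENNReal.ofReal (bump (z / r)) * J z ≤ ENNReal.ofReal (M * (t₂ - t₁)) := by
    calc _ = ∫⁻ z, ∫⁻ t in Ioo t₁ t₂, ENNReal.ofReal (bump (z / r)) * N z t := by
          congr 1; ext z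
          rw [lintegral_const_mul]
          exact hN.comp (measurable_const.prodMk measurable_id)
      _ = ∫⁻ t in Ioo t₁ t₂, ∫⁻ z, ENNReal.ofReal (bump (z / r)) * N z t := by
          rw [lintegral_lintegral_swap]
          exact (((hbc.measurable.comp measurable_fst).ennreal_ofReal).mul hN).aemeasurable
      _ ≤ ∫⁻ _ in Ioo t₁ t₂, ENNReal.ofReal M := setLIntegral_mono' measurableSet_Ioo hNM
      _ = _ := by
          rw [setLIntegral_const, Real.volume_Ioo, ← ENNReal.ofReal_mul hM]
  have hbJm : Measurable fun z => ENNReal.ofReal (bump (z / r)) * J z :=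
    hbc.measurable.ennreal_ofReal.mul hJm
  have hfin : ∀ᵐ z, ENNReal.ofReal (bump (z / r)) * J z < ⊤ :=
    ae_lt_top hbJm (hJ.trans_lt ENNReal.ofReal_lt_top).ne
  have hJint : Integrable fun z => (ENNReal.ofReal (bump (z / r)) * J z).toReal :=
    integrable_toReal_of_lintegral_ne_top hbJm.aemeasurable (hJ.trans_lt ENNReal.ofReal_lt_top).ne
  have hJle : ∫ z, (ENNReal.ofReal (bump (z / r)) * J z).toReal ≤ M * (t₂ - t₁) := by
    rw [integral_toReal hbJm.aemeasurable hfin]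
    exact ENNReal.toReal_le_of_le_ofReal (mul_nonneg hM (by linarith)) hJ
  have hi : ∀ {f : ℝ → ℝ}, Continuous f → Integrable fun z => bump (z / r) * f z :=
    fun hf => by simpa using integrable_bump_mul hr hf 0
  have hc : ∀ t, Continuous fun z => h z t := fun t =>
    hh.comp (continuous_id.prodMk continuous_const)
  have hpt : ∀ᵐ z, bump (z / r) * (δ * (t₂ - t₁)) - (ENNReal.ofReal (bump (z / r)) * J z).toReal ≤
      bump (z / r) * h z t₂ - bump (z / r) * h z t₁ := by
    filter_upwards [hfin] with z hz
    rcases lt_or_ge |z| r with hzr | hzr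
    · have hb : 0 < bump (z / r) := bump_pos_of_abs_lt (by
        rw [abs_div, abs_of_pos hr, div_lt_one hr]; exact hzr)
      have hJz : J z ≠ ⊤ := by
        intro h
        rw [h, ENNReal.mul_top (by simpa using hb)] at hz
        exact lt_irrefl _ hz
      have hNz : Measurable (N z) := hN.comp (measurable_const.prodMk measurable_id)
      have hNint : IntegrableOn (fun t => (N z t).toReal) (Icc t₁ t₂) := by
        rw [integrableOn_Icc_iff_integrableOn_Ioo]
        exact integrable_toReal_of_lintegral_ne_top hNz.aemeasurable hJz
      obtain ⟨S, hS⟩ := hd z hzr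
      have hftc := integral_le_sub_of_hasDerivAt_off_finset S (g := h z)
        (φ := fun t => δ - (N z t).toReal) ht
        (hh.comp (continuous_const.prodMk continuous_id)).continuousOn
        (Integrable.sub (integrable_const _) hNint) hS
      rw [intervalIntegral.integral_sub intervalIntegrable_const
        ((intervalIntegrable_iff_integrableOn_Icc_of_le ht).2 hNint),
        intervalIntegral.integral_const, intervalIntegral.integral_of_le ht,
        integral_Ioc_eq_integral_Ioo, integral_toReal hNz.aemeasurable
          (ae_lt_top hNz hJz), smul_eq_mul] at hftc
      rw [ENNReal.toReal_mul, ENNReal.toReal_ofReal hb.le, ← mul_sub, ← mul_sub]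
      refine mul_le_mul_of_nonneg_left ?_ hb.le
      simp only [J]
      linarith
    · have : bump (z / r) = 0 := bump_of_one_le_abs (by
        rw [abs_div, abs_of_pos hr, le_div_iff₀ hr, one_mul]; exact hzr)
      simp [this]
  have hfinal := integral_mono_ae ((hi continuous_const).sub hJint)
    ((hi (hc t₂)).sub (hi (hc t₁))) hpt
  simp only [Pi.sub_apply] at hfinal
  rw [integral_sub (hi continuous_const) hJint, integral_sub (hi (hc t₂)) (hi (hc t₁)),
    integral_mul_const] at hfinal
  linarith

/-- A nonnegative quantity that grows at a definite rate as long as it is small cannot be small at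
the end of a long time interval. -/
lemma false_of_growth {A : ℝ → ℝ} {t₀ s k m : ℝ} (hs : 0 < s) (hm : 0 < m)
    (hA : Continuous A) (hA0 : 0 ≤ A (t₀ - s)) (hAm : A t₀ ≤ m) (hk : 2 * m < k * s)
    (hgrow : ∀ t₁ t₂, t₀ - s ≤ t₁ → t₁ ≤ t₂ → t₂ ≤ t₀ → (∀ t ∈ Ioo t₁ t₂, A t ≤ 2 * m) →
      k * (t₂ - t₁) ≤ A t₂ - A t₁) : False := by
  obtain ⟨t₁, ht₁, hmin⟩ := isCompact_Icc.exists_isMinOn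
    (nonempty_Icc.2 (by linarith : t₀ - s ≤ t₀))
    (f := fun t => A t - k / 2 * (t - (t₀ - s))) (by fun_prop)
  have hkpos : 0 < k := by
    by_contra! hcon
    nlinarith
  have h1 : A t₁ - k / 2 * (t₁ - (t₀ - s)) ≤ A t₀ - k / 2 * (t₀ - (t₀ - s)) :=
    hmin ⟨by linarith, le_rfl⟩
  have hlt : t₀ - s < t₁ := by
    refine ht₁.1.lt_of_ne fun h => ?_
    rw [← h] at h1
    nlinarith
  have hA1 : A t₁ < 2 * m := by nlinarith [ht₁.2]
  have hev : ∀ᶠ t in 𝓝 t₁, A t < 2 * m := hA.continuousAt.eventually_lt_const hA1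
  obtain ⟨ε, hε, hball⟩ := Metric.eventually_nhds_iff.1 hev
  let t' := max (t₁ - ε / 2) (t₀ - s)
  have ht' : t' < t₁ := max_lt (by linarith) hlt
  have hl : t₁ - ε / 2 ≤ t' := le_max_left _ _
  have hl' : t₀ - s ≤ t' := le_max_right _ _
  have hg := hgrow t' t₁ hl' ht'.le ht₁.2 fun t ht =>
    (hball (by rw [Real.dist_eq, abs_lt]; constructor <;> linarith [ht.1, ht.2])).le
  have h2 : A t₁ - k / 2 * (t₁ - (t₀ - s)) ≤ A t' - k / 2 * (t' - (t₀ - s)) :=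
    hmin ⟨hl', ht'.le.trans ht₁.2⟩
  nlinarith

/-- A concave function on `[0, ∞)` has a right derivative at each positive point, which is a
supergradient. -/
lemma ConcaveOn.exists_right_deriv_supergradient {w : ℝ → ℝ} (hc : ConcaveOn ℝ (Ici 0) w) {ξ : ℝ}
    (hξ : 0 < ξ) :
    ∃ b, HasDerivWithinAt w b (Ici ξ) ξ ∧ ∀ x, 0 ≤ x → w x ≤ w ξ + b * (x - ξ) := by
  have hcv : ConvexOn ℝ (Ici 0) (-w) := hc.neg
  have hint : ξ ∈ interior (Ici (0 : ℝ)) := by rwa [interior_Ici]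
  set g := derivWithin (-w) (Ioi ξ) ξ
  refine ⟨-g, ?_, fun x hx => ?_⟩
  · rw [← hasDerivWithinAt_Ioi_iff_Ici]
    simpa using (hcv.hasDerivWithinAt_rightDeriv_of_mem_interior hint).neg
  · rcases lt_trichotomy x ξ with h | rfl | h
    · have h1 := (hcv.slope_le_leftDeriv_of_mem_interior hx hint h).trans
        (hcv.leftDeriv_le_rightDeriv_of_mem_interior hint)
      rw [slope_def_field, div_le_iff₀ (sub_pos.2 h)] at h1
      simp only [Pi.neg_apply] at h1
      linarith
    · simp
    · have h1 := hcv.rightDeriv_le_slope_of_mem_interior hint hx h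
      rw [slope_def_field, le_div_iff₀ (sub_pos.2 h)] at h1
      simp only [Pi.neg_apply] at h1
      linarith

/-- The part at scales below `κ` of the dissipation of `w` at `ξ`. -/
noncomputable def nearDefect (α κ : ℝ) (w : ℝ → ℝ) (ξ : ℝ) : ENNReal :=
  ∫⁻ η in Ioo 0 κ, ENNReal.ofReal (concavityDefect w ξ η / η ^ (1 + 2 * α))

/-- The part at scales above `κ` of the dissipation of `w` at `ξ`. -/
noncomputable def farDefect (α κ : ℝ) (w : ℝ → ℝ) (ξ : ℝ) : ℝ :=
  ∫ η in Ioi κ, concavityDefect w ξ η / η ^ (1 + 2 * α)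

lemma integrableOn_Ioi_const_div_rpow {α κ : ℝ} (hα : 0 < α) (hκ : 0 < κ) (K : ℝ) :
    IntegrableOn (fun η : ℝ => K / η ^ (1 + 2 * α)) (Ioi κ) := by
  have h : IntegrableOn (fun η : ℝ => K * η ^ (-(1 + 2 * α))) (Ioi κ) :=
    (integrableOn_Ioi_rpow_of_lt (by linarith) hκ).const_mul K
  refine h.congr_fun (fun η hη => ?_) measurableSet_Ioi
  have : 0 < η := hκ.trans hη
  simp only [Real.rpow_neg this.le, div_eq_mul_inv]

lemma integrableOn_Ioi_concavityDefect {w : ℝ → ℝ} {α κ ξ : ℝ} (hα : 0 < α) (hκ : 0 < κ)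
    (h0 : w 0 = 0) (hm : MonotoneOn w (Ici 0)) (hc : ConcaveOn ℝ (Ici 0) w) (hξ : 0 < ξ) :
    IntegrableOn (fun η : ℝ => concavityDefect w ξ η / η ^ (1 + 2 * α)) (Ioi κ) := by
  refine (integrableOn_Ioi_const_div_rpow hα hκ (2 * w ξ)).mono' ?_ ?_
  · have := measurable_concavityDefect hm ξ
    exact Measurable.aestronglyMeasurable (by fun_prop)
  · filter_upwards [ae_restrict_mem measurableSet_Ioi] with η hη
    have hη : 0 < η := hκ.trans hη
    have h1 := concavityDefect_nonneg h0 hc hξ hη.le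
    have h2 := concavityDefect_le h0 hm (η := η) hξ
    rw [Real.norm_eq_abs, abs_of_nonneg (by positivity)]
    gcongr

/-- The dissipation integral splits at scale `κ` into a near part, bounded below by a possibly
infinite Lebesgue integral, and a far part. -/
lemma neg_nearDefect_sub_farDefect_le {w : ℝ → ℝ} {α κ ξ : ℝ} (hα : 0 < α) (hκ : 0 < κ)
    (hκξ : 2 * κ < ξ) (h0 : w 0 = 0) (hm : MonotoneOn w (Ici 0)) (hc : ConcaveOn ℝ (Ici 0) w) :
    -(nearDefect α κ w ξ).toReal - farDefect α κ w ξ ≤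
      (∫ η in Ioo 0 (ξ / 2), (w (ξ + 2 * η) + w (ξ - 2 * η) - 2 * w ξ) / η ^ (1 + 2 * α)) +
        ∫ η in Ioi (ξ / 2), (w (ξ + 2 * η) - w (2 * η - ξ) - 2 * w ξ) / η ^ (1 + 2 * α) := by
  unfold nearDefect farDefect
  have hξ : 0 < ξ := by linarith
  set D := fun η : ℝ => concavityDefect w ξ η / η ^ (1 + 2 * α) with hD
  have hfar : IntegrableOn D (Ioi κ) := integrableOn_Ioi_concavityDefect hα hκ h0 hm hc hξ
  have e1 : ∫ η in Ioo 0 (ξ / 2), (w (ξ + 2 * η) + w (ξ - 2 * η) - 2 * w ξ) / η ^ (1 + 2 * α) =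
      - ∫ η in Ioo 0 (ξ / 2), D η := by
    rw [← integral_neg]
    refine setIntegral_congr_fun measurableSet_Ioo fun η hη => ?_
    simp only [hD]
    rw [concavityDefect_eq_of_le h0 hξ hη.1.le (by linarith [hη.2])]
    ring
  have e2 : ∫ η in Ioi (ξ / 2), (w (ξ + 2 * η) - w (2 * η - ξ) - 2 * w ξ) / η ^ (1 + 2 * α) =
      - ∫ η in Ioi (ξ / 2), D η := by
    rw [← integral_neg]
    refine setIntegral_congr_fun measurableSet_Ioi fun η hη => ?_
    simp only [hD]
    rw [concavityDefect_eq_of_ge h0 hξ (by linarith [mem_Ioi.1 hη])]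
    ring
  have hnn : ∀ η, 0 < η → 0 ≤ D η := fun η hη => by
    have := concavityDefect_nonneg h0 hc hξ hη.le
    positivity
  have hmeas : Measurable D := by
    have := measurable_concavityDefect hm ξ
    fun_prop
  have e3 : ∫ η in Ioi κ, D η = (∫ η in Ico κ (ξ / 2), D η) + ∫ η in Ioi (ξ / 2), D η := by
    rw [← integral_Ici_eq_integral_Ioi, ← integral_Ici_eq_integral_Ioi (x := ξ / 2),
      ← setIntegral_union _ measurableSet_Ici, Ico_union_Ici_eq_Ici (by linarith)]
    · exact ((integrableOn_Ici_iff_integrableOn_Ioi).2 hfar).mono_set Ico_subset_Ici_self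
    · exact (integrableOn_Ici_iff_integrableOn_Ioi).2 (hfar.mono_set (Ioi_subset_Ioi (by linarith)))
    · rw [Set.disjoint_left]
      intro x hx hx'
      exact absurd hx.2 (not_lt.2 hx')
  rw [e1, e2, e3]
  suffices ∫ η in Ioo 0 (ξ / 2), D η ≤
      (∫⁻ η in Ioo 0 κ, ENNReal.ofReal (D η)).toReal + ∫ η in Ico κ (ξ / 2), D η by linarith
  have hIco : 0 ≤ ∫ η in Ico κ (ξ / 2), D η :=
    setIntegral_nonneg measurableSet_Ico fun η hη => hnn η (hκ.trans_le hη.1)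
  by_cases hi : IntegrableOn D (Ioo 0 (ξ / 2))
  · have hi' : IntegrableOn D (Ioo 0 κ) := hi.mono_set (Ioo_subset_Ioo_right (by linarith))
    rw [← Ioo_union_Ico_eq_Ioo hκ (by linarith : κ ≤ ξ / 2), setIntegral_union _ measurableSet_Ico
      hi' (hi.mono_set (fun x hx => ⟨hκ.trans_le hx.1, hx.2⟩)),
      integral_eq_lintegral_of_nonneg_ae _ hmeas.aestronglyMeasurable]
    · filter_upwards [ae_restrict_mem measurableSet_Ioo] with η hη using hnn η hη.1
    · rw [Set.disjoint_left]
      intro x hx hx'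
      exact absurd hx.2 (not_lt.2 hx'.1)
  · rw [integral_undef hi]
    positivity

lemma continuousAt_farDefect {W : ℝ → ℝ → ℝ} {α κ ξ₀ t₀ : ℝ} (hα : 0 < α) (hκ : 0 < κ)
    (hξ : 0 < ξ₀) (hW : Continuous fun q : ℝ × ℝ => W q.1 q.2) (h0 : ∀ t, W 0 t = 0)
    (hm : ∀ t, MonotoneOn (fun ξ => W ξ t) (Ici 0))
    (hc : ∀ t, ConcaveOn ℝ (Ici 0) fun ξ => W ξ t) :
    ContinuousAt (fun q : ℝ × ℝ => farDefect α κ (fun ξ => W ξ q.2) (ξ₀ + q.1)) (0, t₀) := by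
  unfold farDefect
  have hev : ∀ᶠ q : ℝ × ℝ in 𝓝 (0, t₀), 0 < ξ₀ + q.1 ∧ 2 * W (ξ₀ + q.1) q.2 < 2 * W ξ₀ t₀ + 1 := by
    refine Filter.Eventually.and ?_ ?_
    · exact ContinuousAt.eventually_lt continuousAt_const (by fun_prop) (by simpa using hξ)
    · have : Continuous fun q : ℝ × ℝ => 2 * W (ξ₀ + q.1) q.2 :=
        continuous_const.mul (hW.comp (by fun_prop : Continuous fun q : ℝ × ℝ => (ξ₀ + q.1, q.2)))
      exact ContinuousAt.eventually_lt this.continuousAt continuousAt_const (by simp)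
  refine continuousAt_of_dominated (bound := fun η => (2 * W ξ₀ t₀ + 1) / η ^ (1 + 2 * α)) ?_ ?_
    (integrableOn_Ioi_const_div_rpow hα hκ _) ?_
  · refine Filter.Eventually.of_forall fun q => Measurable.aestronglyMeasurable ?_
    have := measurable_concavityDefect (hm q.2) (ξ₀ + q.1)
    fun_prop
  · filter_upwards [hev] with q hq
    filter_upwards [ae_restrict_mem measurableSet_Ioi] with η hη
    have hη : 0 < η := hκ.trans hη
    have h1 := concavityDefect_nonneg (h0 q.2) (hc q.2) hq.1 hη.le
    have h2 := concavityDefect_le (h0 q.2) (hm q.2) (η := η) hq.1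
    rw [Real.norm_eq_abs, abs_of_nonneg (by positivity)]
    gcongr
    linarith
  · refine Filter.Eventually.of_forall fun η => Continuous.continuousAt ?_
    have key : ∀ f : ℝ × ℝ → ℝ, Continuous f → Continuous fun q : ℝ × ℝ => W (f q) q.2 :=
      fun f hf => hW.comp (hf.prodMk continuous_snd)
    simp only [concavityDefect, oddExt]
    have h1 := key (fun q => max (ξ₀ + q.1) 0) (by fun_prop)
    have h2 := key (fun q => max (-(ξ₀ + q.1)) 0) (by fun_prop)
    have h3 := key (fun q => max (ξ₀ + q.1 + 2 * η) 0) (by fun_prop)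
    have h4 := key (fun q => max (-(ξ₀ + q.1 + 2 * η)) 0) (by fun_prop)
    have h5 := key (fun q => max (ξ₀ + q.1 - 2 * η) 0) (by fun_prop)
    have h6 := key (fun q => max (-(ξ₀ + q.1 - 2 * η)) 0) (by fun_prop)
    fun_prop

/-- A jointly continuous family of moduli of continuity, each extended to the whole line. -/
structure IsModulusFamily (W : ℝ → ℝ → ℝ) : Prop where
  continuous : Continuous fun q : ℝ × ℝ => W q.1 q.2
  zero : ∀ t, W 0 t = 0
  mono : ∀ t, MonotoneOn (fun ξ => W ξ t) (Ici 0)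
  concave : ∀ t, ConcaveOn ℝ (Ici 0) fun ξ => W ξ t

lemma ContDiffAt.exists_second_difference_le {p : ℝ → ℝ → ℝ} {t₀ : ℝ}
    (hp : ContDiffAt ℝ 2 (fun q : ℝ × ℝ => p q.1 q.2) (0, t₀)) :
    ∃ C > 0, ∃ r > 0, ∀ z s t, |z| + |s| < r → |t - t₀| < r →
      2 * p z t - p (z + s) t - p (z - s) t ≤ 2 * C * s ^ 2 := by
  obtain ⟨C, hC, r, hr, h⟩ := hp.exists_taylor_remainder_le
  refine ⟨C, hC, r, hr, fun z s t hz ht => ?_⟩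
  have hmem : ∀ z', |z'| < r → ((z', t) : ℝ × ℝ) ∈ Metric.ball ((0 : ℝ), t₀) r := fun z' hz' => by
    rw [Metric.mem_ball, Prod.dist_eq]
    simp only [Real.dist_eq, sub_zero]
    exact max_lt hz' ht
  have hs := abs_nonneg s
  have hn : ∀ s : ℝ, ‖((s, 0) : ℝ × ℝ)‖ = |s| := fun s => by simp [Prod.norm_def]
  have h1 := h (z, t) (s, 0) (hmem z (by linarith)) (by
    simpa using hmem (z + s) ((abs_add_le z s).trans_lt hz))
  have h2 := h (z, t) (-s, 0) (hmem z (by linarith)) (by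
    simpa using hmem (z + -s) ((abs_add_le z (-s)).trans_lt (by rwa [abs_neg])))
  have hneg : (((-s, 0) : ℝ × ℝ)) = -(s, 0) := by simp
  rw [hn, sq_abs] at h1
  rw [hn, sq_abs, neg_sq] at h2
  rw [hneg, map_neg, ← hneg] at h2
  simp only [Prod.mk_add_mk, add_zero] at h1 h2
  rw [← sub_eq_add_neg] at h2
  have h1 := (abs_le.1 h1).1
  have h2 := (abs_le.1 h2).1
  linarith

/-- Near a contact point, the time derivative of the gap exceeds a fixed positive constant up
to the near part of the dissipation. -/
lemma exists_drift_lower_bound {α c κ ξ₀ t₀ lam lam' b₀ : ℝ} {W p U : ℝ → ℝ → ℝ}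
    (hα0 : 0 < α) (hκ : 0 < κ) (hξ : 0 < ξ₀) (hlam : 0 < lam) (hlam' : 0 < lam')
    (hW : IsModulusFamily W) (hWpos : 0 < W ξ₀ t₀)
    (hp2 : ContDiffAt ℝ 2 (fun q : ℝ × ℝ => p q.1 q.2) (0, t₀))
    (hU : ContinuousAt (fun q : ℝ × ℝ => U q.1 q.2) (0, t₀)) (hU0 : ∀ z t, 0 ≤ U z t)
    (hb₀ : HasDerivWithinAt (fun ξ => W ξ t₀) b₀ (Ici ξ₀) ξ₀)
    (hfirst : fderiv ℝ (fun q : ℝ × ℝ => p q.1 q.2) (0, t₀) (0, 1) ≤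
      lam * b₀ * U 0 t₀ - c * lam * farDefect α κ (fun ξ => W ξ t₀) ξ₀) :
    ∃ r > 0, ∀ z t, |z| < r → |t - t₀| < r →
      DifferentiableAt ℝ (fun q : ℝ × ℝ => p q.1 q.2) (z, t) ∧
      ∀ b, HasDerivWithinAt (fun ξ => W ξ t) b (Ici (ξ₀ + z)) (ξ₀ + z) →
        lam' * W ξ₀ t₀ / 2 < lam' * W (ξ₀ + z) t + (lam + lam' * (t - t₀)) *
          (U z t * b - c * farDefect α κ (fun ξ => W ξ t) (ξ₀ + z)) -
          fderiv ℝ (fun q : ℝ × ℝ => p q.1 q.2) (z, t) (0, 1) := by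
  obtain ⟨σ, hσ, hslope⟩ : ∃ σ > 0, lam * U 0 t₀ * (b₀ - (W (ξ₀ + σ) t₀ - W ξ₀ t₀) / σ) <
      lam' * W ξ₀ t₀ / 2 := by
    have h1 : Tendsto (slope (fun ξ => W ξ t₀) ξ₀) (𝓝[>] ξ₀) (𝓝 b₀) := by
      have := hasDerivWithinAt_iff_tendsto_slope.1 hb₀
      rwa [Ici_sdiff_left] at this
    have h2 : Tendsto (fun y => lam * U 0 t₀ * (b₀ - slope (fun ξ => W ξ t₀) ξ₀ y)) (𝓝[>] ξ₀)
        (𝓝 (lam * U 0 t₀ * (b₀ - b₀))) := (tendsto_const_nhds.sub h1).const_mul _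
    rw [sub_self, mul_zero] at h2
    obtain ⟨y, hy, hy'⟩ := ((h2.eventually_lt_const
      (show 0 < lam' * W ξ₀ t₀ / 2 by positivity)).and self_mem_nhdsWithin).exists
    refine ⟨y - ξ₀, sub_pos.2 hy', ?_⟩
    rw [slope_def_field] at hy
    simpa using hy
  set F := fun q : ℝ × ℝ => p q.1 q.2 with hF
  have key : ∀ f : ℝ × ℝ → ℝ, Continuous f → ContinuousAt (fun q : ℝ × ℝ => W (f q) q.2) (0, t₀) :=
    fun f hf => (hW.continuous.comp (hf.prodMk continuous_snd)).continuousAt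
  have hWz := key (fun q => ξ₀ + q.1) (by fun_prop)
  have hWσ := key (fun q => ξ₀ + q.1 + σ) (by fun_prop)
  have hfar := continuousAt_farDefect (t₀ := t₀) hα0 hκ hξ hW.continuous hW.zero hW.mono hW.concave
  have hdF : ContinuousAt (fun q => fderiv ℝ F q (0, 1)) (0, t₀) := by
    have : ContinuousAt (fderiv ℝ F) (0, t₀) :=
      (hp2.fderiv_right (m := 1) (by norm_num)).continuousAt
    exact this.clm_apply continuousAt_const
  have hlamc : ContinuousAt (fun q : ℝ × ℝ => lam + lam' * (q.2 - t₀)) (0, t₀) := by fun_prop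
  have hG : ContinuousAt (fun q : ℝ × ℝ => lam' * W (ξ₀ + q.1) q.2 + (lam + lam' * (q.2 - t₀)) *
      (U q.1 q.2 * ((W (ξ₀ + q.1 + σ) q.2 - W (ξ₀ + q.1) q.2) / σ) -
        c * farDefect α κ (fun ξ => W ξ q.2) (ξ₀ + q.1)) - fderiv ℝ F q (0, 1)) (0, t₀) :=
    ((continuousAt_const.mul hWz).add (hlamc.mul ((hU.mul ((hWσ.sub hWz).div_const σ)).sub
      (continuousAt_const.mul hfar)))).sub hdF
  have hev : ∀ᶠ q : ℝ × ℝ in 𝓝 (0, t₀), DifferentiableAt ℝ F q ∧ 0 < ξ₀ + q.1 ∧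
      0 < lam + lam' * (q.2 - t₀) ∧ lam' * W ξ₀ t₀ / 2 <
      lam' * W (ξ₀ + q.1) q.2 + (lam + lam' * (q.2 - t₀)) *
      (U q.1 q.2 * ((W (ξ₀ + q.1 + σ) q.2 - W (ξ₀ + q.1) q.2) / σ) -
        c * farDefect α κ (fun ξ => W ξ q.2) (ξ₀ + q.1)) - fderiv ℝ F q (0, 1) := by
    refine Filter.Eventually.and ?_ (Filter.Eventually.and ?_ (Filter.Eventually.and ?_ ?_))
    · exact (hp2.eventually (by simp)).mono fun q hq => hq.differentiableAt (by simp)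
    · exact ContinuousAt.eventually_lt continuousAt_const (by fun_prop) (by simpa using hξ)
    · exact ContinuousAt.eventually_lt continuousAt_const hlamc (by simpa using hlam)
    · refine ContinuousAt.eventually_lt continuousAt_const hG ?_
      simp only [add_zero, sub_self, mul_zero]
      linarith
  obtain ⟨r, hr, hball⟩ := Metric.eventually_nhds_iff_ball.1 hev
  refine ⟨r, hr, fun z t hz ht => ?_⟩
  obtain ⟨h1, h2, h3, h4⟩ := hball (z, t) (by
    rw [Metric.mem_ball, Prod.dist_eq]
    simp only [Real.dist_eq, sub_zero]
    exact max_lt hz ht)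
  refine ⟨h1, fun b hb => h4.trans_le ?_⟩
  obtain ⟨b', hb', hsup⟩ := (hW.concave t).exists_right_deriv_supergradient h2
  obtain rfl : b = b' := (uniqueDiffWithinAt_Ici _).eq_deriv _ hb hb'
  have hle : (W (ξ₀ + z + σ) t - W (ξ₀ + z) t) / σ ≤ b := by
    rw [div_le_iff₀ hσ]
    have := hsup (ξ₀ + z + σ) (by linarith)
    rw [add_sub_cancel_left] at this
    linarith
  have := hU0 z t
  simp only
  gcongr

lemma nearDefect_eq_of_lt {W : ℝ → ℝ} {α κ ξ : ℝ} (h0 : W 0 = 0) (hξ : 0 < ξ)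
    (hκ : 2 * κ < ξ) : nearDefect α κ W ξ = ∫⁻ η in Ioo 0 κ,
      ENNReal.ofReal ((2 * W ξ - W (ξ + 2 * η) - W (ξ - 2 * η)) / η ^ (1 + 2 * α)) := by
  refine setLIntegral_congr_fun measurableSet_Ioo fun η hη => ?_
  rw [concavityDefect_eq_of_le h0 hξ hη.1.le (by linarith [hη.2])]

lemma exists_pos_rpow_le {q K ε R : ℝ} (hq : 0 < q) (hε : 0 < ε) (hR : 0 < R) :
    ∃ κ > 0, κ < R ∧ K * κ ^ q ≤ ε := by
  have h : Tendsto (fun κ : ℝ => K * κ ^ q) (𝓝[>] 0) (𝓝 0) := by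
    have := (Real.continuousAt_rpow_const 0 q (Or.inr hq.le)).tendsto.const_mul K
    rw [Real.zero_rpow hq.ne', mul_zero] at this
    exact this.mono_left nhdsWithin_le_nhds
  obtain ⟨κ, ⟨h1, h2⟩, h3⟩ := (((h.eventually_lt_const hε).and
    (nhdsWithin_le_nhds (Iio_mem_nhds hR))).and self_mem_nhdsWithin).exists
  exact ⟨κ, h3, h2, h1.le⟩

lemma measurable_nearDifference {g : ℝ → ℝ → ℝ} (hg : Continuous fun q : ℝ × ℝ => g q.1 q.2)
    (α κ : ℝ) : Measurable fun q : ℝ × ℝ => ∫⁻ η in Ioo 0 κ, ENNReal.ofReal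
      ((2 * g q.1 q.2 - g (q.1 + 2 * η) q.2 - g (q.1 - 2 * η) q.2) / η ^ (1 + 2 * α)) := by
  have key : ∀ f : (ℝ × ℝ) × ℝ → ℝ, Continuous f → Measurable fun y => g (f y) y.1.2 :=
    fun f hf => (hg.comp
      (hf.prodMk (by fun_prop : Continuous fun y : (ℝ × ℝ) × ℝ => y.1.2))).measurable
  have h1 := key (fun y => y.1.1) (by fun_prop)
  have h2 := key (fun y => y.1.1 + 2 * y.2) (by fun_prop)
  have h3 := key (fun y => y.1.1 - 2 * y.2) (by fun_prop)
  refine Measurable.lintegral_prod_right' (f := fun y : (ℝ × ℝ) × ℝ => ENNReal.ofReal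
      ((2 * g y.1.1 y.1.2 - g (y.1.1 + 2 * y.2) y.1.2 - g (y.1.1 - 2 * y.2) y.1.2) /
        y.2 ^ (1 + 2 * α))) ?_
  fun_prop

lemma continuous_bump_average {h : ℝ → ℝ → ℝ} {r : ℝ} (hr : 0 < r)
    (hh : Continuous fun q : ℝ × ℝ => h q.1 q.2) :
    Continuous fun t => ∫ z, bump (z / r) * h z t := by
  have heq : ∀ t, ∫ z, bump (z / r) * h z t = ∫ z in Icc (-r) r, bump (z / r) * h z t := fun t => by
    rw [setIntegral_eq_integral_of_forall_compl_eq_zero]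
    intro z hz
    rw [bump_of_one_le_abs, zero_mul]
    rw [abs_div, abs_of_pos hr, one_le_div hr]
    by_contra! hlt
    exact hz (abs_le.1 hlt.le)
  simp_rw [heq]
  refine continuous_parametric_integral_of_continuous ?_ isCompact_Icc
  have := continuous_bump
  have h2 : Continuous fun y : ℝ × ℝ => h y.2 y.1 := hh.comp continuous_swap
  exact (this.comp (by fun_prop : Continuous fun y : ℝ × ℝ => y.2 / r)).mul h2

/-- No smooth function touches the scaled modulus from below at a first contact point where the
differential inequality for the modulus is available. -/
theorem false_of_contact {α c ξ₀ t₀ ρ lam lam' b₀ : ℝ} {W p U : ℝ → ℝ → ℝ}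
    (hα0 : 0 < α) (hα1 : α < 1) (hc : 0 < c) (hξ : 0 < ξ₀) (hρ : 0 < ρ) (hlam : 0 < lam)
    (hlam' : 0 < lam') (hlamt : ∀ t ∈ Icc (t₀ - ρ) t₀, 0 < lam + lam' * (t - t₀))
    (hW : IsModulusFamily W) (hWpos : 0 < W ξ₀ t₀)
    (hp : Continuous fun q : ℝ × ℝ => p q.1 q.2)
    (hp2 : ContDiffAt ℝ 2 (fun q : ℝ × ℝ => p q.1 q.2) (0, t₀))
    (hU : ContinuousAt (fun q : ℝ × ℝ => U q.1 q.2) (0, t₀)) (hU0 : ∀ z t, 0 ≤ U z t)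
    (hgap : ∀ z t, |z| < ρ → t ∈ Icc (t₀ - ρ) t₀ →
      p z t ≤ (lam + lam' * (t - t₀)) * W (ξ₀ + z) t)
    (hcontact : p 0 t₀ = lam * W ξ₀ t₀)
    (hb₀ : HasDerivWithinAt (fun ξ => W ξ t₀) b₀ (Ici ξ₀) ξ₀)
    (hfirst : ∀ κ > 0, fderiv ℝ (fun q : ℝ × ℝ => p q.1 q.2) (0, t₀) (0, 1) ≤
      lam * b₀ * U 0 t₀ - c * lam * farDefect α κ (fun ξ => W ξ t₀) ξ₀)
    (hkey : ∀ κ z t a b, 0 < κ → |z| < ρ → t ∈ Ioo (t₀ - ρ) t₀ → 2 * κ < ξ₀ + z →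
      HasDerivAt (W (ξ₀ + z)) a t →
      HasDerivWithinAt (fun ξ => W ξ t) b (Ici (ξ₀ + z)) (ξ₀ + z) →
      U z t * b - c * ((nearDefect α κ (fun ξ => W ξ t) (ξ₀ + z)).toReal +
        farDefect α κ (fun ξ => W ξ t) (ξ₀ + z)) ≤ a)
    (hS : ∀ z, |z| < ρ → ∃ S : Finset ℝ, ∀ t ∈ Ioo (t₀ - ρ) t₀, t ∉ S →
      ∃ a, HasDerivAt (W (ξ₀ + z)) a t) : False := by
  set δ := lam' * W ξ₀ t₀ / 2 with hδ
  have hδpos : 0 < δ := by positivity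
  obtain ⟨C, hC, r₀, hr₀, hsecond⟩ := hp2.exists_second_difference_le
  set R := min r₀ (min ρ ξ₀) with hR
  have hRpos : 0 < R := lt_min hr₀ (lt_min hρ hξ)
  have hRr : R ≤ r₀ := min_le_left _ _
  have hRρ : R ≤ ρ := (min_le_right _ _).trans (min_le_left _ _)
  have hRξ : R ≤ ξ₀ := (min_le_right _ _).trans (min_le_right _ _)
  have hq : 0 < 2 - 2 * α := by linarith
  obtain ⟨κ, hκ, hκR, hκsmall⟩ := exists_pos_rpow_le (K := c * 520 * C / (2 - 2 * α)) hq
    (half_pos hδpos) (show 0 < R / 8 by positivity)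
  obtain ⟨r₁, hr₁, hdrift⟩ := exists_drift_lower_bound hα0 hκ hξ hlam hlam' hW hWpos hp2 hU hU0
    hb₀ (hfirst κ hκ)
  set s := min r₁ R / 2 with hs
  have hspos : 0 < s := half_pos (lt_min hr₁ hRpos)
  have hsr : s < r₁ := (half_lt_self (lt_min hr₁ hRpos)).trans_le (min_le_left _ _)
  have hsR : s < R := (half_lt_self (lt_min hr₁ hRpos)).trans_le (min_le_right _ _)
  obtain ⟨r, hr, hrlt, hrsmall⟩ := exists_pos_rpow_le (K := 4 * C) (q := 2) (by norm_num)
    (show 0 < δ * s / 4 by positivity) (show 0 < min r₁ (R / 8) by positivity)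
  rw [Real.rpow_two] at hrsmall
  have hrr : r < r₁ := hrlt.trans_le (min_le_left _ _)
  have hrR : r < R / 8 := hrlt.trans_le (min_le_right _ _)
  set lt := fun t => lam + lam' * (t - t₀) with hlt
  set g := fun z t => lt t * W (ξ₀ + z) t with hg
  have hgc : Continuous fun q : ℝ × ℝ => g q.1 q.2 := by
    have h1 : Continuous fun q : ℝ × ℝ => W (ξ₀ + q.1) q.2 :=
      hW.continuous.comp (by fun_prop : Continuous fun q : ℝ × ℝ => (ξ₀ + q.1, q.2))
    exact (by fun_prop : Continuous fun q : ℝ × ℝ => lt q.2).mul h1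
  set h := fun z t => g z t - p z t with hh
  have hhc : Continuous fun q : ℝ × ℝ => h q.1 q.2 := hgc.sub hp
  set P := ∫ z, bump (z / r) with hP
  have hPpos : 0 < P := integral_bump_pos hr
  set A := fun t => ∫ z, bump (z / r) * h z t with hA
  have hslice : ∀ {f : ℝ → ℝ → ℝ}, (Continuous fun q : ℝ × ℝ => f q.1 q.2) → ∀ t,
      Continuous fun z => f z t := fun hf t => hf.comp (continuous_id.prodMk continuous_const)
  have hbout : ∀ z, r ≤ |z| → bump (z / r) = 0 := fun z hz => bump_of_one_le_abs (by
    rwa [abs_div, abs_of_pos hr, one_le_div hr])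
  have hint : ∀ {f : ℝ → ℝ}, Continuous f → Integrable fun z => bump (z / r) * f z := fun hf => by
    simpa using integrable_bump_mul hr hf 0
  set m := 2 * C * r ^ 2 * P with hm
  set K := κ ^ (2 - 2 * α) / (2 - 2 * α) with hK
  have hKpos : 0 < K := by positivity
  have hcK : c * 520 * C * K ≤ δ / 2 := by
    refine le_of_eq_of_le ?_ hκsmall
    rw [hK]; ring
  have htime : ∀ t, t₀ - s ≤ t → t ≤ t₀ → t ∈ Icc (t₀ - ρ) t₀ := fun t h1 h2 =>
    ⟨by linarith, h2⟩
  refine false_of_growth (A := A) (t₀ := t₀) (k := δ * P / 2) (m := m) hspos (by positivity)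
    (continuous_bump_average hr hhc) ?_ ?_ ?_ ?_
  · refine integral_nonneg fun z => ?_
    rcases lt_or_ge |z| r with hz | hz
    · exact mul_nonneg (bump_nonneg _) (sub_nonneg.2 (hgap z _ (by linarith)
        (htime _ le_rfl (by linarith))))
    · simp [hbout z hz]
  · have : A t₀ ≤ ∫ z, bump (z / r) * (2 * C * r ^ 2) := by
      refine integral_mono (hint (hslice hhc t₀)) (hint continuous_const) fun z => ?_
      rcases lt_or_ge |z| r with hz | hz
      · refine mul_le_mul_of_nonneg_left ?_ (bump_nonneg _)
        have ht₀ : t₀ ∈ Icc (t₀ - ρ) t₀ := ⟨by linarith, le_rfl⟩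
        have hg0 : 0 ≤ h (-z) t₀ := sub_nonneg.2 (hgap (-z) _ (by rw [abs_neg]; linarith) ht₀)
        have h2 := hsecond 0 z t₀ (by rw [abs_zero]; linarith) (by simpa using hr₀)
        rw [zero_add, zero_sub, hcontact] at h2
        have hz' := abs_lt.1 hz
        have hmid := (hW.concave t₀).midpoint_le (a := ξ₀) (b := z)
          (by rw [mem_Ici]; linarith) (by rw [mem_Ici]; linarith)
        have hz2 : z ^ 2 ≤ r ^ 2 := sq_le_sq.2 (by rw [abs_of_pos hr]; exact hz.le)
        have e1 : h z t₀ = lam * W (ξ₀ + z) t₀ - p z t₀ := by simp [hh, hg, hlt]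
        have e2 : h (-z) t₀ = lam * W (ξ₀ - z) t₀ - p (-z) t₀ := by
          simp [hh, hg, hlt, sub_eq_add_neg]
        rw [e2] at hg0
        rw [e1]
        have := mul_le_mul_of_nonneg_left hmid hlam.le
        have := mul_le_mul_of_nonneg_left hz2 (by positivity : 0 ≤ 2 * C)
        linarith
      · simp [hbout z hz]
    rw [integral_mul_const] at this
    linarith
  · have := mul_lt_mul_of_pos_right (show 4 * C * r ^ 2 < δ * s / 2 by
      have : 0 < δ * s := by positivity
      linarith) hPpos
    rw [hm]
    linarith
  intro t₁ t₂ ht₁ ht₁₂ ht₂ hAle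
  let N : ℝ → ℝ → ENNReal := fun z t => ENNReal.ofReal c * ∫⁻ η in Ioo 0 κ, ENNReal.ofReal
      ((2 * g z t - g (z + 2 * η) t - g (z - 2 * η) t) / η ^ (1 + 2 * α))
  have hgrow := bump_average_growth (δ := δ) (M := c * (520 * C * P * K)) (N := N) hr ht₁₂
    (by positivity) hhc ((measurable_nearDifference hgc α κ).const_mul _) ?_ ?_
  · refine le_trans ?_ hgrow
    refine mul_le_mul_of_nonneg_right ?_ (sub_nonneg.2 ht₁₂)
    have := mul_le_mul_of_nonneg_right hcK hPpos.le
    linarith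
  · intro z hz
    obtain ⟨S, hS⟩ := hS z (by linarith)
    refine ⟨S, fun t ht htS => ?_⟩
    have ht' : t ∈ Ioo (t₀ - ρ) t₀ := ⟨by linarith [ht.1], by linarith [ht.2]⟩
    obtain ⟨a, ha⟩ := hS t ht' htS
    have hz' := abs_lt.1 hz
    have hξz : 0 < ξ₀ + z := by linarith
    have hκξ : 2 * κ < ξ₀ + z := by linarith
    obtain ⟨b, hb, -⟩ := (hW.concave t).exists_right_deriv_supergradient hξz
    obtain ⟨hpd, hdr⟩ := hdrift z t (by linarith)
      (by rw [abs_lt]; constructor <;> linarith [ht.1, ht.2])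
    have hdr := hdr b hb
    have hk := hkey κ z t a b hκ (by linarith) ht' hκξ ha hb
    have hltp : 0 < lt t := hlamt t ⟨ht'.1.le, ht'.2.le⟩
    have hN : (N z t).toReal =
        c * (lt t * (nearDefect α κ (fun ξ => W ξ t) (ξ₀ + z)).toReal) := by
      have e : ∫⁻ η in Ioo 0 κ, ENNReal.ofReal
          ((2 * g z t - g (z + 2 * η) t - g (z - 2 * η) t) / η ^ (1 + 2 * α)) =
          ENNReal.ofReal (lt t) * nearDefect α κ (fun ξ => W ξ t) (ξ₀ + z) := by
        rw [nearDefect_eq_of_lt (hW.zero t) hξz hκξ,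
          ← lintegral_const_mul' _ _ ENNReal.ofReal_ne_top]
        refine lintegral_congr fun η => ?_
        rw [← ENNReal.ofReal_mul hltp.le]
        simp only [hg, ← add_assoc, ← add_sub_assoc]
        congr 1
        ring
      simp only [N, e, ENNReal.toReal_mul, ENNReal.toReal_ofReal hc.le,
        ENNReal.toReal_ofReal hltp.le]
    have hpt : HasDerivAt (p z) (fderiv ℝ (fun q : ℝ × ℝ => p q.1 q.2) (z, t) (0, 1)) t := by
      have := hpd.hasFDerivAt.comp_hasDerivAt t
        ((hasDerivAt_const t z).prodMk (hasDerivAt_id t))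
      simpa [Function.comp_def] using this
    have hltd : HasDerivAt lt lam' t := by
      simpa [hlt] using (((hasDerivAt_id t).sub_const t₀).const_mul lam').const_add lam
    refine ⟨_, ?_, (hltd.mul ha).sub hpt⟩
    rw [hN]
    have := mul_le_mul_of_nonneg_left hk hltp.le
    linarith
  · intro t ht
    have ht' : t ∈ Icc (t₀ - ρ) t₀ := htime t (by linarith [ht.1]) (by linarith [ht.2])
    have hltp : 0 < lt t := hlamt t ht'
    have hnear := lintegral_bump_mul_near_le (α := α) (C := 2 * C) hα1 hr hκ (by positivity)
      (hslice hgc t) (hslice hp t) (fun z hz => hgap z t (by linarith) ht')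
      (fun z s' hz hs' hs'' => hsecond z s' t (by rw [abs_of_nonneg hs']; linarith)
        (by rw [abs_lt]; constructor <;> linarith [ht.1, ht.2]))
      (fun z η hz hη hηκ => by
        have hz' := abs_le.1 hz
        have := (hW.concave t).midpoint_le (a := ξ₀ + z) (b := 2 * η)
          (by rw [mem_Ici]; linarith) (by rw [mem_Ici]; linarith)
        have := mul_le_mul_of_nonneg_left this hltp.le
        simp only [hg, ← add_assoc, ← add_sub_assoc]
        linarith)
    have hA' := hAle t ht
    have hconst : ∀ z, ENNReal.ofReal (bump (z / r)) * N z t = ENNReal.ofReal c *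
        (ENNReal.ofReal (bump (z / r)) * ∫⁻ η in Ioo 0 κ, ENNReal.ofReal
          ((2 * g z t - g (z + 2 * η) t - g (z - 2 * η) t) / η ^ (1 + 2 * α))) := fun z => by
      simp only [N]; ring
    simp_rw [hconst]
    rw [lintegral_const_mul' _ _ ENNReal.ofReal_ne_top, ENNReal.ofReal_mul hc.le]
    gcongr
    refine hnear.trans (ENNReal.ofReal_le_ofReal ?_)
    refine mul_le_mul_of_nonneg_right ?_ hKpos.le
    have h1 : 128 / r ^ 2 * A t ≤ 128 / r ^ 2 * (2 * m) :=
      mul_le_mul_of_nonneg_left hA' (by positivity)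
    have h2 : 128 / r ^ 2 * (2 * m) = 512 * C * P := by
      rw [hm]; field_simp; ring
    rw [h2] at h1
    change 128 / r ^ 2 * A t + 4 * (2 * C) * P ≤ _
    linarith

lemma fderiv_eq_of_contact {E : Type*} [NormedAddCommGroup E] [InnerProductSpace ℝ E]
    {g : E → ℝ} {w : ℝ → ℝ} {x₀ y₀ : E} {B : ℝ} (hg : DifferentiableAt ℝ g x₀)
    (hne : x₀ ≠ y₀) (hB : 0 ≤ B)
    (hw : ∀ s, 0 ≤ s → w s ≤ w (dist x₀ y₀) + B * (s - dist x₀ y₀))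
    (hgw : ∀ x, g x - g y₀ ≤ w (dist x y₀)) (heq : g x₀ - g y₀ = w (dist x₀ y₀)) (v : E) :
    fderiv ℝ g x₀ v = B / dist x₀ y₀ * inner ℝ (x₀ - y₀) v := by
  set ξ := dist x₀ y₀ with hξdef
  have hξ : 0 < ξ := dist_pos.2 hne
  have hle : ∀ x, g x - g x₀ ≤ B * (inner ℝ (x₀ - y₀) (x - x₀) / ξ + ‖x - x₀‖ ^ 2 / (2 * ξ)) := by
    intro x
    have h1 := hw (dist x y₀) dist_nonneg
    have h2 := hgw x
    have h3 : dist x y₀ - ξ ≤ inner ℝ (x₀ - y₀) (x - x₀) / ξ + ‖x - x₀‖ ^ 2 / (2 * ξ) := by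
      have e : dist x y₀ ^ 2 = ξ ^ 2 + 2 * inner ℝ (x₀ - y₀) (x - x₀) + ‖x - x₀‖ ^ 2 := by
        rw [hξdef, dist_eq_norm, dist_eq_norm, ← norm_add_sq_real]
        congr 2
        abel
      have e' : inner ℝ (x₀ - y₀) (x - x₀) / ξ + ‖x - x₀‖ ^ 2 / (2 * ξ) =
          (dist x y₀ ^ 2 - ξ ^ 2) / (2 * ξ) := by
        rw [e]; field_simp; ring
      rw [e', le_div_iff₀ (by positivity)]
      nlinarith [sq_nonneg (dist x y₀ - ξ)]
    have := mul_le_mul_of_nonneg_left h3 hB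
    linarith
  have hq : HasFDerivAt (fun x => ‖x - x₀‖ ^ 2) (0 : E →L[ℝ] ℝ) x₀ := by
    have := ((hasFDerivAt_id x₀).sub_const x₀).norm_sq
    simpa using this
  have hl : HasFDerivAt (fun x => inner ℝ (x₀ - y₀) (x - x₀)) (innerSL ℝ (x₀ - y₀)) x₀ :=
    ((innerSL ℝ (x₀ - y₀)).hasFDerivAt).comp x₀ ((hasFDerivAt_id x₀).sub_const x₀)
  have hφ := hg.hasFDerivAt.sub (((hl.const_mul ξ⁻¹).add (hq.const_mul (2 * ξ)⁻¹)).const_mul B)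
  have hmax : IsLocalMax (g - fun x => B * (ξ⁻¹ * inner ℝ (x₀ - y₀) (x - x₀) +
      (2 * ξ)⁻¹ * ‖x - x₀‖ ^ 2)) x₀ := by
    refine Filter.Eventually.of_forall fun x => ?_
    have := hle x
    simp only [Pi.sub_apply, sub_self, inner_zero_right, norm_zero]
    rw [div_eq_inv_mul, div_eq_inv_mul] at this
    simp only [ne_eq, OfNat.ofNat_ne_zero, not_false_eq_true, zero_pow, mul_zero, add_zero,
      sub_zero]
    linarith
  have h0 := congrArg (fun T : E →L[ℝ] ℝ => T v) (hmax.hasFDerivAt_eq_zero hφ)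
  simp only [sub_apply, smul_apply, smul_zero, add_zero, zero_apply,
    innerSL_apply_apply, smul_eq_mul, sub_eq_zero] at h0
  rw [h0]
  ring

lemma oddExt_comp_max (w : ℝ → ℝ) : oddExt (fun ξ => w (max ξ 0)) = oddExt w := by
  ext x
  simp [oddExt]

lemma concavityDefect_comp_max (w : ℝ → ℝ) :
    concavityDefect (fun ξ => w (max ξ 0)) = concavityDefect w := by
  ext ξ η
  simp only [concavityDefect, oddExt_comp_max]

lemma nearDefect_comp_max (α κ : ℝ) (w : ℝ → ℝ) :
    nearDefect α κ (fun ξ => w (max ξ 0)) = nearDefect α κ w := by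
  ext ξ
  simp only [nearDefect, concavityDefect_comp_max]

lemma farDefect_comp_max (α κ : ℝ) (w : ℝ → ℝ) :
    farDefect α κ (fun ξ => w (max ξ 0)) = farDefect α κ w := by
  ext ξ
  simp only [farDefect, concavityDefect_comp_max]

lemma farDefect_const_mul (α κ a : ℝ) (w : ℝ → ℝ) (ξ : ℝ) :
    farDefect α κ (fun s => a * w s) ξ = a * farDefect α κ w ξ := by
  simp only [farDefect, ← integral_const_mul]
  congr 1
  ext η
  simp only [concavityDefect, oddExt]
  ring

lemma HasDerivWithinAt.nonneg_of_monotoneOn_Ici {w : ℝ → ℝ} {b ξ : ℝ} (hξ : 0 ≤ ξ)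
    (hm : MonotoneOn w (Ici 0)) (hb : HasDerivWithinAt w b (Ici ξ) ξ) : 0 ≤ b := by
  have h := hasDerivWithinAt_iff_tendsto_slope.1 hb
  rw [Ici_sdiff_left] at h
  refine ge_of_tendsto h ?_
  filter_upwards [self_mem_nhdsWithin] with y hy
  rw [slope_def_field]
  have hy : ξ < y := hy
  exact div_nonneg (sub_nonneg.2 (hm hξ (hξ.trans hy.le) hy.le)) (by linarith)

lemma ContinuousOn.continuous_comp_max {E F : Type*} [TopologicalSpace E] [TopologicalSpace F]
    {f : E → ℝ → F} (hf : ContinuousOn (fun q : E × ℝ => f q.1 q.2) (univ ×ˢ Ici 0)) :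
    Continuous fun q : E × ℝ => f q.1 (max q.2 0) :=
  hf.comp_continuous (f := fun q : E × ℝ => (q.1, max q.2 0)) (by fun_prop)
    fun _ => ⟨mem_univ _, mem_Ici.2 (le_max_right _ _)⟩

lemma ContDiffOn.contDiffAt_comp_max {E F : Type*} [NormedAddCommGroup E] [NormedSpace ℝ E]
    [NormedAddCommGroup F] [NormedSpace ℝ F] {n : WithTop ℕ∞} {f : E → ℝ → F}
    (hf : ContDiffOn ℝ n (fun q : E × ℝ => f q.1 q.2) (univ ×ˢ Ici 0)) {x : E} {t : ℝ}
    (ht : 0 < t) : ContDiffAt ℝ n (fun q : E × ℝ => f q.1 (max q.2 0)) (x, t) := by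
  have h1 : ContDiffAt ℝ n (fun q : E × ℝ => f q.1 q.2) (x, t) :=
    hf.contDiffAt (prod_mem_nhds univ_mem (Ici_mem_nhds ht))
  refine h1.congr_of_eventuallyEq ?_
  have : ∀ᶠ q : E × ℝ in 𝓝 (x, t), 0 < q.2 := 
    continuous_snd.continuousAt.eventually (lt_mem_nhds ht)
  filter_upwards [this] with q hq
  rw [max_eq_left hq.le]

namespace IsAdmissiblePair

variable {d : ℕ} {L : ℝ} {θ : EuclideanSpace ℝ (Fin d) → ℝ → ℝ} {ω : ℝ → ℝ → ℝ}

lemma isModulusFamily (h : IsAdmissiblePair d L θ ω) :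
    IsModulusFamily fun ξ t => ω (max ξ 0) (max t 0) where
  continuous := h.continuousOn.comp_continuous (f := fun q : ℝ × ℝ => (max q.1 0, max q.2 0))
    (by fun_prop) fun _ => ⟨mem_Ici.2 (le_max_right _ _), mem_Ici.2 (le_max_right _ _)⟩
  zero t := by simpa using (h.modulus _ (le_max_right t 0)).1
  mono t := ((h.modulus _ (le_max_right t 0)).2.2.1.monotoneOn).congr fun ξ hξ => by
    simp only [max_eq_left (mem_Ici.1 hξ)]
  concave t := ((h.modulus _ (le_max_right t 0)).2.2.2.1).congr fun ξ hξ => by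
    simp only [max_eq_left (mem_Ici.1 hξ)]

lemma exists_bound (h : IsAdmissiblePair d L θ ω) {t : ℝ} (ht : 0 ≤ t) :
    ∃ M, ∀ x, |θ x t| ≤ M := by
  obtain ⟨R, -, hR⟩ := exists_lattice_translate_norm_le d h.pos
  have hc : Continuous fun x => θ x t := (h.contDiffOn.contDiff_slice ht).continuous
  obtain ⟨M, hM⟩ := (isCompact_closedBall (0 : EuclideanSpace ℝ (Fin d))
    R).exists_bound_of_continuousOn hc.continuousOn
  refine ⟨M, fun x => ?_⟩
  obtain ⟨v, hv⟩ := hR x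
  rw [← h.periodic v x t]
  exact hM _ (by simpa using hv)

lemma abs_le_iSup (h : IsAdmissiblePair d L θ ω) {t : ℝ} (ht : 0 ≤ t)
    (x : EuclideanSpace ℝ (Fin d)) : |θ x t| ≤ ⨆ x, |θ x t| := by
  obtain ⟨M, hM⟩ := h.exists_bound ht
  exact le_ciSup (f := fun x => |θ x t|) ⟨M, by rintro _ ⟨y, rfl⟩; exact hM y⟩ x

end IsAdmissiblePair

lemma dist_symmetric_spread {E : Type*} [NormedAddCommGroup E] [NormedSpace ℝ E] {x y : E}
    (hne : x ≠ y) {z : ℝ} (hz : 0 ≤ dist x y + z) :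
    dist (x + (z / (2 * dist x y)) • (x - y)) (y - (z / (2 * dist x y)) • (x - y)) =
      dist x y + z := by
  have hξ : 0 < dist x y := dist_pos.2 hne
  have e : x + (z / (2 * dist x y)) • (x - y) - (y - (z / (2 * dist x y)) • (x - y)) =
      ((dist x y + z) / dist x y) • (x - y) := by
    rw [show (dist x y + z) / dist x y = 1 + (z / (2 * dist x y) + z / (2 * dist x y)) by
      field_simp; ring, add_smul, add_smul, one_smul]
    abel
  rw [dist_eq_norm, e, norm_smul, ← dist_eq_norm, Real.norm_of_nonneg (by positivity),
    div_mul_cancel₀ _ (ne_of_gt hξ)]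

/-- **Nonlocal maximum principle for dissipative active scalars (Theorem 2.2).**
There is a constant `c = c(d,α) > 0` such that: if `θ` is a smooth space-periodic solution
of `∂_t θ = (u·∇)θ − L_α θ` (with `L_α` the unnormalized fractional dissipation, realized
as a principal value), `ω(ξ,t)` is a time-dependent modulus of continuity (continuous in
`(ξ,t)`, piecewise `C¹` in `t`, with `∂²_{ξξ}ω(0,t) = −∞`), `Ω(·,t)` is a modulus of
continuity transferring `ω`-continuity of `θ(·,t)` to `Ω`-continuity of `u(·,t)`, `θ(·,0)`
obeys `ω(·,0)`, and the key inequality `∂_t ω > Ω ∂_ξ ω + D_{α,ω}` holds whenever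
`ω(ξ,t) ≤ 2‖θ(·,t)‖_∞` (with the larger one-sided `ξ`-derivative and the smaller one-sided
`t`-derivative, here quantified over all one-sided derivative values `a`, `b`), then
`θ(·,t)` obeys `ω(·,t)` for all `t > 0`. -/
theorem nonlocal_maximum_principle (d : ℕ) (hd : 0 < d) (α : ℝ) (hα0 : 0 < α) (hα1 : α < 1) :
    ∃ c > (0:ℝ),
      ∀ (θ : EuclideanSpace ℝ (Fin d) → ℝ → ℝ)
        (u : EuclideanSpace ℝ (Fin d) → ℝ → EuclideanSpace ℝ (Fin d))
        (Lθ : EuclideanSpace ℝ (Fin d) → ℝ → ℝ) (L : ℝ) (ω Ω : ℝ → ℝ → ℝ),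
      0 < L →
      -- θ and u are smooth and periodic in space
      ContDiffOn ℝ (⊤ : ℕ∞)
        (fun p : EuclideanSpace ℝ (Fin d) × ℝ => θ p.1 p.2) (univ ×ˢ Ici 0) →
      ContDiffOn ℝ (⊤ : ℕ∞)
        (fun p : EuclideanSpace ℝ (Fin d) × ℝ => u p.1 p.2) (univ ×ˢ Ici 0) →
      (∀ v : Fin d → ℤ, ∀ x t,
        θ (x + (WithLp.equiv 2 (∀ _ : Fin d, ℝ)).symm (fun i => L * (v i : ℝ))) t = θ x t) →
      (∀ v : Fin d → ℤ, ∀ x t,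
        u (x + (WithLp.equiv 2 (∀ _ : Fin d, ℝ)).symm (fun i => L * (v i : ℝ))) t = u x t) →
      -- Lθ is the principal-value fractional dissipation of θ
      (∀ t ∈ Ici (0:ℝ), ∀ x,
        Tendsto (fun ε => ∫ y in {y : EuclideanSpace ℝ (Fin d) | ε < ‖y‖},
            (θ x t - θ (x + y) t) / ‖y‖ ^ ((d : ℝ) + 2*α))
          (nhdsWithin 0 (Ioi 0)) (nhds (Lθ x t))) →
      -- the active scalar equation
      (∀ x, ∀ t ∈ Ici (0:ℝ),
        HasDerivWithinAt (fun s => θ x s)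
          (fderiv ℝ (fun x' => θ x' t) x (u x t) - Lθ x t) (Ici 0) t) →
      -- ω is continuous in (ξ,t), piecewise C¹ in t, a modulus of continuity in ξ
      ContinuousOn (fun p : ℝ × ℝ => ω p.1 p.2) (Ici 0 ×ˢ Ici 0) →
      (∀ ξ ∈ Ici (0:ℝ), ∃ S : Finset ℝ,
        (∀ t ∈ Ioi (0:ℝ) \ ↑S, DifferentiableAt ℝ (fun s => ω ξ s) t) ∧
        ContinuousOn (deriv fun s => ω ξ s) (Ioi (0:ℝ) \ ↑S)) →
      (∀ t ∈ Ici (0:ℝ), IsModulusOfContinuity (fun ξ => ω ξ t)) →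
      -- ∂²_{ξξ} ω(0,t) = −∞
      (∀ t ∈ Ici (0:ℝ),
        (∃ b, HasDerivWithinAt (fun r => ω r t) b (Ici 0) 0) →
        Tendsto (fun ξ => deriv (deriv (fun r => ω r t)) ξ) (nhdsWithin 0 (Ioi 0)) atBot) →
      -- Ω(·,t) is a modulus of continuity transferring ω-continuity of θ to u
      (∀ t ∈ Ici (0:ℝ), IsModulusOfContinuity (fun ξ => Ω ξ t)) →
      (∀ t ∈ Ici (0:ℝ),
        (∀ x y, x ≠ y → |θ x t - θ y t| ≤ ω (dist x y) t) →
        ∀ x y, dist (u x t) (u y t) ≤ Ω (dist x y) t) →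
      -- the initial data obeys ω(·,0)
      (∀ x y, x ≠ y → |θ x 0 - θ y 0| < ω (dist x y) 0) →
      -- the key inequality ∂_t ω > Ω ∂_ξ ω + D_{α,ω}
      (∀ ξ t : ℝ, 0 < ξ → 0 < t → ω ξ t ≤ 2 * (⨆ x, |θ x t|) →
        ∀ a b : ℝ,
        (HasDerivWithinAt (fun s => ω ξ s) a (Ici t) t ∨
          HasDerivWithinAt (fun s => ω ξ s) a (Iic t) t) →
        (HasDerivWithinAt (fun r => ω r t) b (Ici ξ) ξ ∨
          HasDerivWithinAt (fun r => ω r t) b (Iic ξ) ξ) →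
        Ω ξ t * b +
          c * ((∫ η in Ioo 0 (ξ/2),
                  (ω (ξ + 2*η) t + ω (ξ - 2*η) t - 2 * ω ξ t) / η ^ (1 + 2*α)) +
               (∫ η in Ioi (ξ/2),
                  (ω (ξ + 2*η) t - ω (2*η - ξ) t - 2 * ω ξ t) / η ^ (1 + 2*α))) < a) →
      -- conclusion: θ(·,t) obeys ω(·,t) for all t > 0
      ∀ t > (0:ℝ), ∀ x y, x ≠ y → |θ x t - θ y t| < ω (dist x y) t := by
  refine ⟨(√(d : ℝ) ^ ((d : ℝ) + 2 * α))⁻¹ / 2, by positivity, ?_⟩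
  set c := (√(d : ℝ) ^ ((d : ℝ) + 2 * α))⁻¹ / 2 with hc
  have hcpos : 0 < c := by positivity
  intro θ u Lθ L ω Ω hL hθ hu hθper _ hLθ heqn hω hωt hmod hsecond hΩ htransfer hinit hkey
  have h : IsAdmissiblePair d L θ ω := ⟨hL, hθ, hθper, hω, hmod, hsecond⟩
  intro T hT
  by_contra! hviol
  obtain ⟨t₀, ht₀, lam, hlam, lam', hlam', hlamt, hle, x₀, y₀, hne, hcontact, z₀, hz₀⟩ :=
    h.exists_contact hinit hT hviol
  set ξ₀ := dist x₀ y₀ with hξ₀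
  have hξ : 0 < ξ₀ := dist_pos.2 hne
  have hW := h.isModulusFamily
  set W : ℝ → ℝ → ℝ := fun ξ t => ω (max ξ 0) (max t 0) with hWdef
  have hWeq : ∀ {ξ t : ℝ}, 0 ≤ ξ → 0 ≤ t → W ξ t = ω ξ t := fun h1 h2 => by
    simp only [hWdef, max_eq_left h1, max_eq_left h2]
  set X : ℝ → EuclideanSpace ℝ (Fin d) := fun z => x₀ + (z / (2 * ξ₀)) • (x₀ - y₀) with hX
  set Y : ℝ → EuclideanSpace ℝ (Fin d) := fun z => y₀ - (z / (2 * ξ₀)) • (x₀ - y₀) with hY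
  have hX0 : X 0 = x₀ := by simp [hX]
  have hY0 : Y 0 = y₀ := by simp [hY]
  have hXY : ∀ z, 0 ≤ ξ₀ + z → dist (X z) (Y z) = ξ₀ + z := fun z hz =>
    dist_symmetric_spread hne hz
  have hXc : ContDiff ℝ 2 X := by fun_prop
  have hYc : ContDiff ℝ 2 Y := by fun_prop
  set p : ℝ → ℝ → ℝ := fun z t => θ (X z) (max t 0) - θ (Y z) (max t 0) with hp
  set U : ℝ → ℝ → ℝ := fun z t => dist (u (X z) (max t 0)) (u (Y z) (max t 0)) with hU
  have hmapX : Continuous fun q : ℝ × ℝ => (X q.1, q.2) :=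
    (hXc.continuous.comp continuous_fst).prodMk continuous_snd
  have hmapY : Continuous fun q : ℝ × ℝ => (Y q.1, q.2) :=
    (hYc.continuous.comp continuous_fst).prodMk continuous_snd
  have hθc := hθ.continuousOn.continuous_comp_max
  have huc := hu.continuousOn.continuous_comp_max
  have hpc : Continuous fun q : ℝ × ℝ => p q.1 q.2 := (hθc.comp hmapX).sub (hθc.comp hmapY)
  have hUc : Continuous fun q : ℝ × ℝ => U q.1 q.2 := (huc.comp hmapX).dist (huc.comp hmapY)
  have hθ2 : ContDiffOn ℝ 2 (fun p : EuclideanSpace ℝ (Fin d) × ℝ => θ p.1 p.2)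
      (univ ×ˢ Ici 0) := hθ.of_le (WithTop.coe_le_coe.2 (le_top : (2 : ℕ∞) ≤ ⊤))
  have hp2 : ContDiffAt ℝ 2 (fun q : ℝ × ℝ => p q.1 q.2) (0, t₀) := by
    have h1 : ContDiffAt ℝ 2 (fun q : ℝ × ℝ => (X q.1, q.2)) (0, t₀) :=
      ((hXc.comp contDiff_fst).prodMk contDiff_snd).contDiffAt
    have h2 : ContDiffAt ℝ 2 (fun q : ℝ × ℝ => (Y q.1, q.2)) (0, t₀) :=
      ((hYc.comp contDiff_fst).prodMk contDiff_snd).contDiffAt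
    exact (ContDiffAt.comp (0, t₀) (hθ2.contDiffAt_comp_max ht₀) h1).sub
      (ContDiffAt.comp (0, t₀) (hθ2.contDiffAt_comp_max ht₀) h2)
  obtain ⟨b₀, hb₀, hsup⟩ := (hmod t₀ ht₀.le).2.2.2.1.exists_right_deriv_supergradient hξ
  have hb₀nn : 0 ≤ b₀ := hb₀.nonneg_of_monotoneOn_Ici hξ.le (hmod t₀ ht₀.le).2.2.1.monotoneOn
  have hev : ∀ᶠ q : ℝ × ℝ in 𝓝 (0, t₀), W (ξ₀ + q.1) q.2 < 2 * |θ z₀ (max q.2 0)| := by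
    have h1 : Continuous fun q : ℝ × ℝ => W (ξ₀ + q.1) q.2 :=
      hW.continuous.comp (by fun_prop : Continuous fun q : ℝ × ℝ => (ξ₀ + q.1, q.2))
    have h2 : Continuous fun q : ℝ × ℝ => 2 * |θ z₀ (max q.2 0)| :=
      continuous_const.mul (hθc.comp (continuous_const.prodMk continuous_snd)).abs
    refine h1.continuousAt.eventually_lt h2.continuousAt ?_
    simpa only [add_zero, hWeq hξ.le ht₀.le, max_eq_left ht₀.le] using hz₀
  obtain ⟨ρ', hρ', hball⟩ := Metric.eventually_nhds_iff_ball.1 hev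
  set ρ := min ρ' (min t₀ ξ₀) with hρ
  have hρpos : 0 < ρ := lt_min hρ' (lt_min ht₀ hξ)
  have hρρ : ρ ≤ ρ' := min_le_left _ _
  have hρt : ρ ≤ t₀ := (min_le_right _ _).trans (min_le_left _ _)
  have hρξ : ρ ≤ ξ₀ := (min_le_right _ _).trans (min_le_right _ _)
  refine false_of_contact (W := W) (p := p) (U := U) (c := c) (b₀ := b₀) hα0 hα1 hcpos hξ hρpos
    hlam hlam' (fun t ht => (hlamt t ⟨by linarith [ht.1], ht.2⟩).1) hW ?_ hpc hp2
    hUc.continuousAt (fun _ _ => dist_nonneg) ?_ ?_ ?_ ?_ ?_ ?_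
  · rw [hWeq hξ.le ht₀.le]
    exact h.modulus_pos hξ ht₀.le
  · intro z t hz ht
    have hz' := (abs_lt.1 hz).1
    have ht0 : 0 ≤ t := by linarith [ht.1]
    have hd := hXY z (by linarith)
    have hne' : X z ≠ Y z := dist_pos.1 (by rw [hd]; linarith)
    have := hle t ⟨ht0, ht.2⟩ _ _ hne'
    rw [hd] at this
    rw [hWeq (by linarith) ht0]
    simp only [hp, max_eq_left ht0]
    exact (le_abs_self _).trans this
  · simp only [hp, hX0, hY0, max_eq_left ht₀.le, hWeq hξ.le ht₀.le]
    exact hcontact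
  · refine hb₀.congr (fun ξ hξ' => hWeq (hξ.le.trans hξ') ht₀.le) (hWeq hξ.le ht₀.le)
  · intro κ hκ
    have hle₀ : ∀ x y, |θ x t₀ - θ y t₀| ≤ lam * ω (dist x y) t₀ := fun x y => by
      rcases eq_or_ne x y with rfl | hxy
      · simp [(hmod t₀ ht₀.le).1]
      · simpa using hle t₀ ⟨ht₀.le, le_rfl⟩ x y hxy
    obtain ⟨M, hM⟩ := h.exists_bound ht₀.le
    have hslice := hθ.contDiff_slice ht₀.le
    have hdiff : Differentiable ℝ fun x => θ x t₀ := hslice.differentiable (by simp)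
    have hdiss := dissipation_ge hd hα0 hslice.continuous hM
      (w := fun ξ => lam * ω ξ t₀) (by simp [(hmod t₀ ht₀.le).1])
      (fun x hx y hy hxy => mul_le_mul_of_nonneg_left
        ((hmod t₀ ht₀.le).2.2.1.monotoneOn hx hy hxy) hlam.le)
      ((hmod t₀ ht₀.le).2.2.2.1.smul hlam.le) hle₀ hne hcontact
      (hLθ t₀ ht₀.le x₀) (hLθ t₀ ht₀.le y₀) hκ
    have hfar := farDefect_const_mul α κ lam (fun ξ => ω ξ t₀) ξ₀
    rw [farDefect] at hfar
    rw [hfar, ← hc, ← mul_assoc] at hdiss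
    have hWt : farDefect α κ (fun ξ => W ξ t₀) ξ₀ = farDefect α κ (fun ξ => ω ξ t₀) ξ₀ := by
      simp only [hWdef, max_eq_left ht₀.le, farDefect_comp_max α κ (fun ξ => ω ξ t₀)]
    have hB : 0 ≤ lam * b₀ := by positivity
    have hsup' : ∀ s, 0 ≤ s → lam * ω s t₀ ≤ lam * ω ξ₀ t₀ + lam * b₀ * (s - ξ₀) := fun s hs => by
      have := mul_le_mul_of_nonneg_left (hsup s hs) hlam.le
      linarith
    have hgx := fderiv_eq_of_contact (w := fun ξ => lam * ω ξ t₀) (hdiff x₀) hne hB hsup'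
      (fun x => (le_abs_self _).trans (hle₀ x y₀)) hcontact (u x₀ t₀)
    rw [← hξ₀] at hgx
    have hgy := fderiv_eq_of_contact (g := fun x => -θ x t₀) (w := fun ξ => lam * ω ξ t₀)
      (hdiff y₀).neg hne.symm hB (by rw [dist_comm]; exact hsup')
      (fun x => by
        have := (le_abs_self _).trans (hle₀ x₀ x)
        rw [dist_comm x x₀]
        linarith) (by rw [dist_comm y₀ x₀, ← hξ₀]; linarith) (u y₀ t₀)
    rw [fderiv_fun_neg, neg_apply, dist_comm y₀ x₀, ← hξ₀, ← neg_sub x₀ y₀, inner_neg_left,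
      mul_neg, neg_inj] at hgy
    have hderiv : ∀ x, HasDerivAt (fun s => θ x (max s 0))
        (fderiv ℝ (fun x' => θ x' t₀) x (u x t₀) - Lθ x t₀) t₀ := fun x => by
      refine ((heqn x t₀ ht₀.le).hasDerivAt (Ici_mem_nhds ht₀)).congr_of_eventuallyEq ?_
      filter_upwards [lt_mem_nhds ht₀] with s hs
      rw [max_eq_left hs.le]
    have hpt : fderiv ℝ (fun q : ℝ × ℝ => p q.1 q.2) (0, t₀) (0, 1) =
        (fderiv ℝ (fun x' => θ x' t₀) x₀ (u x₀ t₀) - Lθ x₀ t₀) -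
        (fderiv ℝ (fun x' => θ x' t₀) y₀ (u y₀ t₀) - Lθ y₀ t₀) := by
      have h1 := (hp2.differentiableAt (by simp)).hasFDerivAt.comp_hasDerivAt t₀
        ((hasDerivAt_const t₀ (0 : ℝ)).prodMk (hasDerivAt_id t₀))
      refine h1.unique ?_
      have := (hderiv x₀).sub (hderiv y₀)
      refine this.congr_of_eventuallyEq (Filter.Eventually.of_forall fun s => ?_)
      simp [hp, hX0, hY0]
    have hinner : lam * b₀ / ξ₀ * inner ℝ (x₀ - y₀) (u x₀ t₀ - u y₀ t₀) ≤
        lam * b₀ * U 0 t₀ := by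
      have h1 := real_inner_le_norm (x₀ - y₀) (u x₀ t₀ - u y₀ t₀)
      rw [← dist_eq_norm, ← dist_eq_norm, ← hξ₀] at h1
      have h2 : U 0 t₀ = dist (u x₀ t₀) (u y₀ t₀) := by
        simp only [hU, hX0, hY0, max_eq_left ht₀.le]
      rw [h2]
      calc _ ≤ lam * b₀ / ξ₀ * (ξ₀ * dist (u x₀ t₀) (u y₀ t₀)) := by gcongr
        _ = _ := by field_simp
    rw [inner_sub_right, mul_sub] at hinner
    rw [hpt, hWt, hgx, hgy]
    linarith
  · intro κ z t a b hκ hz ht hκξ ha hb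
    have hz' := (abs_lt.1 hz).1
    have ht0 : 0 < t := by linarith [ht.1]
    have hξz : 0 < ξ₀ + z := by linarith
    have htI : t ∈ Icc 0 t₀ := ⟨ht0.le, ht.2.le⟩
    have hsmall : ω (ξ₀ + z) t ≤ 2 * ⨆ x, |θ x t| := by
      have h1 := hball (z, t) (by
        rw [Metric.mem_ball, Prod.dist_eq]
        simp only [Real.dist_eq, sub_zero]
        refine max_lt (hz.trans_le hρρ) ?_
        rw [abs_lt]
        constructor <;> linarith [ht.1, ht.2])
      simp only [hWeq hξz.le ht0.le, max_eq_left ht0.le] at h1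
      have h2 := h.abs_le_iSup ht0.le z₀
      linarith
    have ha' : HasDerivAt (fun s => ω (ξ₀ + z) s) a t := by
      refine ha.congr_of_eventuallyEq ?_
      filter_upwards [lt_mem_nhds ht0] with s hs
      rw [hWeq hξz.le hs.le]
    have hb' : HasDerivWithinAt (fun r => ω r t) b (Ici (ξ₀ + z)) (ξ₀ + z) :=
      hb.congr (fun ξ hξ' => (hWeq (hξz.le.trans hξ') ht0.le).symm) (hWeq hξz.le ht0.le).symm
    have hmt := hmod t ht0.le
    have hk := hkey (ξ₀ + z) t hξz ht0 hsmall a b (Or.inl ha'.hasDerivWithinAt) (Or.inl hb')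
    have hsplit := neg_nearDefect_sub_farDefect_le hα0 hκ hκξ hmt.1 hmt.2.2.1.monotoneOn
      hmt.2.2.2.1
    have hWt : (fun ξ => W ξ t) = fun ξ => ω (max ξ 0) t := by
      simp only [hWdef, max_eq_left ht0.le]
    rw [hWt, nearDefect_comp_max α κ (fun ξ => ω ξ t), farDefect_comp_max α κ (fun ξ => ω ξ t)]
    have hbnn : 0 ≤ b := hb'.nonneg_of_monotoneOn_Ici hξz.le hmt.2.2.1.monotoneOn
    have hUΩ : U z t ≤ Ω (ξ₀ + z) t := by
      have h1 := htransfer t ht0.le (fun x y hxy => (hle t htI x y hxy).trans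
        (mul_le_of_le_one_left (h.modulus_pos (dist_pos.2 hxy) ht0.le).le (hlamt t htI).2))
        (X z) (Y z)
      rw [hXY z hξz.le] at h1
      simpa only [hU, max_eq_left ht0.le] using h1
    have h1 := mul_le_mul_of_nonneg_right hUΩ hbnn
    have h2 := mul_le_mul_of_nonneg_left hsplit hcpos.le
    linarith
  · intro z hz
    have hz' := (abs_lt.1 hz).1
    have hξz : 0 < ξ₀ + z := by linarith
    obtain ⟨S, hS, -⟩ := hωt (ξ₀ + z) hξz.le
    refine ⟨S, fun t ht htS => ?_⟩
    have ht0 : 0 < t := by linarith [ht.1]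
    refine ⟨_, (hS t ⟨ht0, htS⟩).hasDerivAt.congr_of_eventuallyEq ?_⟩
    filter_upwards [lt_mem_nhds ht0] with s hs
    exact hWeq hξz.le hs.le
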